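/- arXiv:1605.06051 — 2 statements merged into one kernel-verified Lean document; each statement's English description precedes it below -/
import Mathlib

section
/- The following are equivalent: (1) for every nonmeager Borel set B ⊆ ℝ and every equivalence relation E on B which is a 𝚫¹₂ subset of ℝ × ℝ and all of whose equivalence classes are meager, there is a perfect set P ⊆ B of pairwise E-inequivalent elements; (2) every 𝚫¹₂ subset of ℝ × ℝ has the Baire property. -/
/-!
From the Baire property to perfect sets. If `E` has the Baire property and meager classes, it is
meager by the theorem of Kuratowski and Ulam (`isMeagre_of_sections`). The set `B` is comeager in
some nonempty open set `U`, so Mycielski's theorem (`exists_generic_map`) gives an injective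
continuous image of the Cantor space inside `B` with pairwise inequivalent points.

From perfect sets to the Baire property. Let `A` be a `𝚫¹₂` set without the Baire property. The
witnesses for membership in `A` and in `Aᶜ` form a coanalytic set with full projection; it carries
a norm into `ω₁` (`exists_isNorm`), given by ranks of well-founded trees. Let `φ x` be the least
norm of a witness for `x`. Each set `{φ ≤ α}` splits into an analytic part inside `A` and one inside
`Aᶜ`. Analytic sets have the Baire property (`analytic_baire`), so if `A` is nowhere Baire
measurable in the open set `V`, these sets are meager in `V` (`exists_meager_norm`). A Borel map
`f : ℝ → ℝ × ℝ` under which preimages of meager sets are meager (`exists_plane_map`) transfers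
this to the line: the fibres of `φ ∘ f` are meager in the nonmeager Borel set `f ⁻¹' V`. A first
use of the perfect set property, for the relation `φ (f x) = φ (f y)`, yields a perfect set on
which `φ ∘ f` is injective. Identifying that set with `ℝ` gives a good `𝚫¹₂` well-ordering of `ℝ`
of length `ω₁` (`exists_injective_goodNorm`): injective in rank, and such that enumerating initial
segments is a `𝚺¹₂` condition.

Such a well-ordering contradicts the perfect set property (`not_perfectProp`). Code the perfect sets
by reals. Call `r` closed if every perfect set coded before `r` has two points lying before `r` and
no earlier than the code. Closed points are cofinal, so the relation of not being separated by a
closed point has countable classes. It is `𝚫¹₂` since the order is good. Yet any perfect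
set, with code `c`, contains two points between `c` and the next closed point, and these are
equivalent.
-/

open MeasureTheory Set

/-- A set is 𝚺¹₂ if it is the projection of a coanalytic subset of `X × ℕ^ℕ`. -/
def Sigma12 {X : Type*} [TopologicalSpace X] (A : Set X) : Prop :=
  ∃ C : Set (X × (ℕ → ℕ)), AnalyticSet Cᶜ ∧ A = Prod.fst '' C

/-- A set is 𝚫¹₂ if both it and its complement are 𝚺¹₂. -/
def Delta12 {X : Type*} [TopologicalSpace X] (A : Set X) : Prop :=
  Sigma12 A ∧ Sigma12 Aᶜ

/-- A set has the Baire property if it differs from an open set by a meager set. -/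
def HasBaireProp {Y : Type*} [TopologicalSpace Y] (s : Set Y) : Prop :=
  ∃ U : Set Y, IsOpen U ∧ IsMeagre (symmDiff s U)

/-- `E` is an equivalence relation on the set `B`, viewed as a set of pairs. -/
def IsEquivOn {X : Type*} (B : Set X) (E : Set (X × X)) : Prop :=
  E ⊆ B ×ˢ B ∧ (∀ x ∈ B, (x, x) ∈ E) ∧ (∀ x y, (x, y) ∈ E → (y, x) ∈ E) ∧
    ∀ x y z, (x, y) ∈ E → (y, z) ∈ E → (x, z) ∈ E

/-! ### Analytic sets -/

section AnalyticAux

variable {X Y Z : Type} [TopologicalSpace X] [TopologicalSpace Y] [TopologicalSpace Z]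

lemma analytic_inter [T2Space X] {s t : Set X} (hs : AnalyticSet s) (ht : AnalyticSet t) :
    AnalyticSet (s ∩ t) := by
  rw [inter_eq_iInter]
  exact AnalyticSet.iInter (by rintro (_ | _) <;> assumption)

lemma analytic_union {s t : Set X} (hs : AnalyticSet s) (ht : AnalyticSet t) :
    AnalyticSet (s ∪ t) := by
  rw [union_eq_iUnion]
  exact AnalyticSet.iUnion (by rintro (_ | _) <;> assumption)

lemma analytic_exists {p : X → Y → Prop} (h : AnalyticSet {q : X × Y | p q.1 q.2}) :
    AnalyticSet {x | ∃ y, p x y} := by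
  have := h.image_of_continuous continuous_fst
  convert this using 1
  ext x; simp

/-- Unlike `AnalyticSet.preimage`, this allows Borel functions: the preimage is the projection
of the part of the graph lying over the set. -/
lemma analytic_preimage [PolishSpace X] [PolishSpace Y] [MeasurableSpace X] [BorelSpace X]
    [MeasurableSpace Y] [BorelSpace Y] {s : Set Y} (hs : AnalyticSet s) {f : X → Y}
    (hf : Measurable f) : AnalyticSet (f ⁻¹' s) := by
  have h1 : MeasurableSet {q : X × Y | f q.1 = q.2} :=
    measurableSet_eq_fun (hf.comp measurable_fst) measurable_snd
  have h2 : AnalyticSet ((Prod.snd : X × Y → Y) ⁻¹' s) := hs.preimage continuous_snd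
  have h3 : AnalyticSet {q : X × Y | f q.1 = q.2 ∧ q.2 ∈ s} := analytic_inter h1.analyticSet h2
  have := analytic_exists (p := fun x y => f x = y ∧ y ∈ s) h3
  convert this using 1
  ext x; simp

open PiNat in
/-- Every analytic set is the result of the Suslin operation applied to a decreasing scheme
whose branches, even after taking closures, only meet inside the set. Lists are read backwards,
as in `PiNat.res`. -/
lemma analytic_scheme [T2Space Z] {A : Set Z} (hA : AnalyticSet A) :
    ∃ G : List ℕ → Set Z, G [] = A ∧ (∀ s, G s ⊆ ⋃ a, G (a :: s)) ∧
      (∀ z ∈ A, ∃ y : ℕ → ℕ, ∀ n, z ∈ G (res y n)) ∧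
      ∀ (y : ℕ → ℕ) z, (∀ n, z ∈ closure (G (res y (n + 1)))) → z ∈ A := by
  rw [AnalyticSet] at hA
  rcases hA with rfl | ⟨g, hg, rfl⟩
  · exact ⟨fun _ => ∅, rfl, by simp, by simp, by simp⟩
  refine ⟨fun s => g '' {y | res y s.length = s}, ?_, ?_, ?_, ?_⟩
  · simp
  · rintro s _ ⟨y, hy, rfl⟩
    refine mem_iUnion.2 ⟨y s.length, y, ?_, rfl⟩
    have hy' : res y s.length = s := hy
    simp [res_succ, hy']
  · rintro _ ⟨y, rfl⟩
    exact ⟨y, fun n => ⟨y, by simp [res_length], rfl⟩⟩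
  · intro y z hz
    by_contra hne
    have hne' : z ≠ g y := fun h => hne ⟨y, h.symm⟩
    obtain ⟨U, V, hU, hV, hzU, hyV, hUV⟩ := t2_separation hne'
    obtain ⟨s, ⟨x, n, rfl⟩, hys, hsV⟩ := (isTopologicalBasis_cylinders
      (E := fun _ => ℕ)).exists_subset_of_mem_open (a := y) hyV (hV.preimage hg)
    have hyx : cylinder y n = cylinder x n := mem_cylinder_iff_eq.1 hys
    have h1 := hz n
    rw [mem_closure_iff] at h1
    obtain ⟨w, hwU, y', hy', rfl⟩ := h1 U hU hzU
    have : y' ∈ cylinder y n := by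
      apply cylinder_anti y (Nat.le_succ n)
      rw [cylinder_eq_res]
      simpa [res_length] using hy'
    rw [hyx] at this
    exact hUV.le_bot ⟨hwU, hsV this⟩

end AnalyticAux

/-! ### Norms on coanalytic sets -/

section Norm

variable {X Y Z : Type} [TopologicalSpace X] [TopologicalSpace Y] [TopologicalSpace Z]

/-- A map `ρ` into the countable ordinals is a `𝚷¹₁`-norm on `D` if comparing a point with a
given point of `D` is an analytic condition. The values of `ρ` off `D` are irrelevant. -/
structure IsNorm (D : Set Z) (ρ : Z → Ordinal.{0}) : Prop where
  lt_omega : ∀ z, ρ z < Ordinal.omega 1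
  le : ∃ L : Set (Z × Z), AnalyticSet L ∧
    ∀ w ∈ D, ∀ z, (z, w) ∈ L ↔ z ∈ D ∧ ρ z ≤ ρ w
  lt : ∃ L : Set (Z × Z), AnalyticSet L ∧
    ∀ w ∈ D, ∀ z, (z, w) ∈ L ↔ z ∈ D ∧ ρ z < ρ w

lemma IsNorm.comp [PolishSpace X] [PolishSpace Y] [MeasurableSpace X] [BorelSpace X]
    [MeasurableSpace Y] [BorelSpace Y] {D : Set Y} {ρ : Y → Ordinal.{0}} (h : IsNorm D ρ)
    {f : X → Y} (hf : Measurable f) : IsNorm (f ⁻¹' D) (ρ ∘ f) := by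
  obtain ⟨h0, ⟨L, hL, hL'⟩, ⟨M, hM, hM'⟩⟩ := h
  have hff : Measurable (Prod.map f f) := hf.prodMap hf
  refine ⟨fun z => h0 _, ⟨Prod.map f f ⁻¹' L, analytic_preimage hL hff, ?_⟩,
    ⟨Prod.map f f ⁻¹' M, analytic_preimage hM hff, ?_⟩⟩
  · intro w hw z; exact hL' _ hw _
  · intro w hw z; exact hM' _ hw _

/-- The one-step extension relation on lists restricted to the tree cut out by `P`. -/
def stepRel (P : List ℕ → Prop) (t s : List ℕ) : Prop := ∃ a, t = a :: s ∧ P t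

open Classical in
/-- The rank of a node of the tree cut out by `P`, with junk value `0` at ill-founded nodes. -/
noncomputable def treeRank (P : List ℕ → Prop) (s : List ℕ) : Ordinal.{0} :=
  if h : Acc (stepRel P) s then h.rank else 0

/-- `S` is a simulation of the tree cut out by `P` in the tree cut out by `Q`. Rank comparison of
well-founded trees amounts to the existence of a simulation. -/
def IsSim (P Q : List ℕ → Prop) (S : List ℕ × List ℕ → Bool) : Prop :=
  ∀ s t, S (s, t) = true → ∀ a, P (a :: s) → ∃ b, Q (b :: t) ∧ S (a :: s, b :: t) = true

lemma treeRank_lt_omega (P : List ℕ → Prop) (s : List ℕ) : treeRank P s < Ordinal.omega 1 := by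
  unfold treeRank
  split_ifs with h
  · induction h with
    | intro s hs ih =>
      rw [Acc.rank_eq]
      apply Ordinal.iSup_lt_omega_one
      rintro ⟨b, hb⟩
      exact (Cardinal.isSuccLimit_omega 1).succ_lt (ih b hb)
  · exact Ordinal.omega_pos 1

lemma treeRank_lt {P : List ℕ → Prop} {s : List ℕ} (h : Acc (stepRel P) s) {a : ℕ}
    (ha : P (a :: s)) : treeRank P (a :: s) < treeRank P s := by
  have hr : stepRel P (a :: s) s := ⟨a, rfl, ha⟩
  rw [treeRank, treeRank, dif_pos h, dif_pos (h.inv hr)]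
  exact h.rank_lt_of_rel hr

lemma exists_le_treeRank {P : List ℕ → Prop} {s : List ℕ} {o : Ordinal.{0}}
    (h : o < treeRank P s) : ∃ b, P (b :: s) ∧ o ≤ treeRank P (b :: s) := by
  by_cases hs : Acc (stepRel P) s
  · rw [treeRank, dif_pos hs, Acc.rank_eq, Ordinal.lt_iSup_iff] at h
    obtain ⟨⟨_, b, rfl, hb⟩, ho⟩ := h
    refine ⟨b, hb, ?_⟩
    rw [treeRank, dif_pos (hs.inv ⟨b, rfl, hb⟩)]
    exact Order.lt_succ_iff.1 ho
  · rw [treeRank, dif_neg hs] at h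
    exact absurd h (not_lt.2 zero_le)

lemma treeRank_le {Q : List ℕ → Prop} {s : List ℕ} {o : Ordinal.{0}}
    (h : ∀ a, Q (a :: s) → treeRank Q (a :: s) < o) :
    treeRank Q s ≤ o := by
  by_contra hlt
  obtain ⟨b, hb, hob⟩ := exists_le_treeRank (not_le.1 hlt)
  exact absurd (h b hb) (not_lt.2 hob)

/-- A simulation in a well-founded tree bounds the rank and forces well-foundedness. -/
lemma IsSim.rank_le {P Q : List ℕ → Prop} {S : List ℕ × List ℕ → Bool} (hS : IsSim P Q S)
    {t : List ℕ} (ht : Acc (stepRel Q) t) :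
    ∀ s, S (s, t) = true → Acc (stepRel P) s ∧ treeRank P s ≤ treeRank Q t := by
  induction ht with
  | intro t ht ih =>
    intro s hs
    have key : ∀ a, P (a :: s) → Acc (stepRel P) (a :: s) ∧
        treeRank P (a :: s) < treeRank Q t := by
      intro a ha
      obtain ⟨b, hb, hab⟩ := hS s t hs a ha
      have h1 := ih (b :: t) ⟨b, rfl, hb⟩ (a :: s) hab
      exact ⟨h1.1, h1.2.trans_lt (treeRank_lt (Acc.intro t ht) hb)⟩
    have hacc : Acc (stepRel P) s := by
      constructor
      rintro _ ⟨a, rfl, ha⟩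
      exact (key a ha).1
    exact ⟨hacc, treeRank_le fun a ha => (key a ha).2⟩

open Classical in
lemma exists_isSim {P Q : List ℕ → Prop} {s t : List ℕ} (hs : Acc (stepRel P) s)
    (ht : Acc (stepRel Q) t) (h : treeRank P s ≤ treeRank Q t) :
    ∃ S, IsSim P Q S ∧ S (s, t) = true := by
  refine ⟨fun q => decide (Acc (stepRel P) q.1 ∧ Acc (stepRel Q) q.2 ∧
    treeRank P q.1 ≤ treeRank Q q.2), ?_, by simp [hs, ht, h]⟩
  intro s t hst a ha
  simp only [decide_eq_true_eq] at hst ⊢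
  obtain ⟨hs, ht, hle⟩ := hst
  obtain ⟨b, hb, hab⟩ := exists_le_treeRank ((treeRank_lt hs ha).trans_le hle)
  exact ⟨b, hb, hs.inv ⟨a, rfl, ha⟩, ht.inv ⟨b, rfl, hb⟩, hab⟩

/-- The tree cut out by `P` is ill-founded exactly when it has an infinite branch. -/
lemma not_acc_stepRel_iff {P : List ℕ → Prop} :
    ¬ Acc (stepRel P) [] ↔ ∃ y : ℕ → ℕ, ∀ n, P (PiNat.res y (n + 1)) := by
  rw [not_acc_iff_exists_descending_chain]
  constructor
  · rintro ⟨f, hf0, hf⟩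
    choose y hy hP using hf
    have : ∀ n, f n = PiNat.res y n := by
      intro n
      induction n with
      | zero => exact hf0
      | succ n ih => rw [hy, ih, PiNat.res_succ]
    exact ⟨y, fun n => this (n + 1) ▸ hP n⟩
  · rintro ⟨y, hy⟩
    exact ⟨PiNat.res y, rfl, fun n => ⟨y n, rfl, hy n⟩⟩

/-- Every coanalytic subset of a Polish space carries a `𝚷¹₁`-norm. Given a scheme
for the complement, the indices of the closed members containing `z` form a tree, which is
well-founded exactly when `z` lies in the set, and the norm of `z` is the rank of this tree. Comparison
below a well-founded tree is the existence of a simulation, hence an analytic condition. -/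
lemma exists_isNorm [PolishSpace Z] {D : Set Z} (hD : AnalyticSet Dᶜ) :
    ∃ ρ : Z → Ordinal.{0}, IsNorm D ρ := by
  borelize Z
  obtain ⟨G, -, -, hG, hG'⟩ := analytic_scheme hD
  let T : Z → List ℕ → Prop := fun z s => z ∈ closure (G s)
  have hT : ∀ s, Measurable fun z => T z s := fun s =>
    measurableSet_setOfPred.1 (isClosed_closure (s := G s)).measurableSet
  have hDT : ∀ z, z ∈ D ↔ Acc (stepRel (T z)) [] := by
    intro z
    rw [← not_iff_not, not_acc_stepRel_iff]
    constructor
    · intro hz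
      obtain ⟨y, hy⟩ := hG z hz
      exact ⟨y, fun n => subset_closure (hy (n + 1))⟩
    · rintro ⟨y, hy⟩
      exact hG' y z hy
  have : PolishSpace (List ℕ × List ℕ → Bool) := {}
  have hsim : MeasurableSet {q : (Z × Z) × (List ℕ × List ℕ → Bool) |
      IsSim (T q.1.1) (T q.1.2) q.2} := by
    rw [measurableSet_setOfPred]
    have h1 : ∀ i, Measurable fun q : (Z × Z) × (List ℕ × List ℕ → Bool) => q.2 i = true := by
      intro i
      rw [← measurableSet_setOfPred]
      exact measurableSet_eq_fun ((measurable_pi_apply i).comp measurable_snd) measurable_const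
    refine Measurable.forall fun s => Measurable.forall fun t => (h1 _).imp <|
      Measurable.forall fun a => Measurable.imp ?_ <| Measurable.exists fun b =>
      Measurable.and ?_ (h1 _)
    · exact (hT _).comp (measurable_fst.comp measurable_fst)
    · exact (hT _).comp (measurable_snd.comp measurable_fst)
  have heval : ∀ i, MeasurableSet {q : (Z × Z) × (List ℕ × List ℕ → Bool) | q.2 i = true} :=
    fun i => measurableSet_eq_fun ((measurable_pi_apply i).comp measurable_snd) measurable_const
  refine ⟨fun z => treeRank (T z) [], fun z => treeRank_lt_omega _ _, ?_, ?_⟩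
  · refine ⟨{q | ∃ S, IsSim (T q.1) (T q.2) S ∧ S ([], []) = true},
      analytic_exists (p := fun (q : Z × Z) (S : List ℕ × List ℕ → Bool) =>
        IsSim (T q.1) (T q.2) S ∧ S ([], []) = true)
        (hsim.inter (heval _)).analyticSet, ?_⟩
    intro w hw z
    constructor
    · rintro ⟨S, hS, h0⟩
      have := hS.rank_le ((hDT w).1 hw) _ h0
      exact ⟨(hDT z).2 this.1, this.2⟩
    · rintro ⟨hz, hle⟩
      exact exists_isSim ((hDT z).1 hz) ((hDT w).1 hw) hle
  · have h2 : MeasurableSet {q : (Z × Z) × (List ℕ × List ℕ → Bool) |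
        ∃ b, T q.1.2 [b] ∧ q.2 ([], [b]) = true} := by
      rw [measurableSet_setOfPred]
      refine Measurable.exists fun b => Measurable.and ?_ (measurableSet_setOfPred.1 (heval _))
      exact (hT _).comp (measurable_snd.comp measurable_fst)
    refine ⟨{q | ∃ S, IsSim (T q.1) (T q.2) S ∧ ∃ b, T q.2 [b] ∧ S ([], [b]) = true},
      analytic_exists (p := fun (q : Z × Z) (S : List ℕ × List ℕ → Bool) =>
        IsSim (T q.1) (T q.2) S ∧
        ∃ b, T q.2 [b] ∧ S ([], [b]) = true) (hsim.inter h2).analyticSet, ?_⟩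
    intro w hw z
    have hw' := (hDT w).1 hw
    constructor
    · rintro ⟨S, hS, b, hb, h0⟩
      have := hS.rank_le (hw'.inv ⟨b, rfl, hb⟩) _ h0
      exact ⟨(hDT z).2 this.1, this.2.trans_lt (treeRank_lt hw' hb)⟩
    · rintro ⟨hz, hlt⟩
      obtain ⟨b, hb, hab⟩ := exists_le_treeRank hlt
      obtain ⟨S, hS, h0⟩ := exists_isSim ((hDT z).1 hz) (hw'.inv ⟨b, rfl, hb⟩) hab
      exact ⟨S, hS, b, hb, h0⟩

end Norm

/-! ### Closure properties of `𝚺¹₂` and `𝚫¹₂` -/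

set_option linter.unusedSectionVars false

section Sigma

variable {X Y : Type} [TopologicalSpace X] [PolishSpace X] [MeasurableSpace X] [BorelSpace X]
  [TopologicalSpace Y] [PolishSpace Y] [MeasurableSpace Y] [BorelSpace Y]

/-- `𝚺¹₂` predicates. -/
def Sig {X : Type} [TopologicalSpace X] (p : X → Prop) : Prop := Sigma12 {x | p x}

/-- `𝚫¹₂` predicates. -/
def Del {X : Type} [TopologicalSpace X] (p : X → Prop) : Prop := Delta12 {x | p x}

lemma Sig.congr {p q : X → Prop} (h : Sig p) (hpq : ∀ x, p x ↔ q x) : Sig q := by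
  have : p = q := funext fun x => propext (hpq x)
  exact this ▸ h

lemma Sig.coded {p : X → Prop} (h : Sig p) :
    ∃ C : Set (X × (ℕ → ℕ)), AnalyticSet Cᶜ ∧ ∀ x, p x ↔ ∃ y, (x, y) ∈ C := by
  obtain ⟨C, hC, hp⟩ := h
  refine ⟨C, hC, fun x => ?_⟩
  have : x ∈ {x | p x} ↔ x ∈ Prod.fst '' C := by rw [hp]
  simpa using this

/-- The witnesses may be taken in an arbitrary Polish space instead of `ℕ → ℕ`. -/
lemma Sig.of_coanalytic {p : X → Y → Prop} (h : AnalyticSet {q : X × Y | ¬ p q.1 q.2}) :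
    Sig fun x => ∃ y, p x y := by
  cases isEmpty_or_nonempty Y
  · refine ⟨∅, ?_, ?_⟩
    · rw [compl_empty]; exact isClosed_univ.analyticSet
    · simp
  · obtain ⟨g, hg, hgs⟩ := PolishSpace.exists_nat_nat_continuous_surjective Y
    refine ⟨{q | p q.1 (g q.2)}, ?_, ?_⟩
    · have hc : Continuous fun q : X × (ℕ → ℕ) => (q.1, g q.2) := by fun_prop
      exact h.preimage hc
    · ext x
      simp [hgs.exists]

lemma Sig.of_measurable {p : X → Prop} (h : MeasurableSet {x | p x}) : Sig p := by
  have h1 : MeasurableSet {q : X × (ℕ → ℕ) | ¬ p q.1} := (h.preimage measurable_fst).compl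
  exact (Sig.of_coanalytic (p := fun x (_ : ℕ → ℕ) => p x) h1.analyticSet).congr (by simp)

lemma Sig.comp {p : Y → Prop} (h : Sig p) {f : X → Y} (hf : Measurable f) :
    Sig fun x => p (f x) := by
  obtain ⟨C, hC, hp⟩ := h.coded
  have hm : Measurable fun q : X × (ℕ → ℕ) => (f q.1, q.2) := by fun_prop
  exact (Sig.of_coanalytic (p := fun x y => (f x, y) ∈ C) (analytic_preimage hC hm)).congr
    fun x => (hp _).symm

lemma Sig.exists {p : X → Y → Prop} (h : Sig fun q : X × Y => p q.1 q.2) :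
    Sig fun x => ∃ y, p x y := by
  obtain ⟨C, hC, hp⟩ := h.coded
  have hm : Continuous fun q : X × (Y × (ℕ → ℕ)) => ((q.1, q.2.1), q.2.2) := by fun_prop
  refine (Sig.of_coanalytic (p := fun x (u : Y × (ℕ → ℕ)) => ((x, u.1), u.2) ∈ C)
    (hC.preimage hm)).congr fun x => ?_
  simp only [Prod.exists]
  exact exists_congr fun y => (hp (x, y)).symm

lemma Sig.exists_snd {p : X × Y → Prop} (h : Sig p) : Sig fun x => ∃ y, p (x, y) :=
  Sig.exists (p := fun x y => p (x, y)) h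

lemma Sig.forall_countable {ι : Type} [Countable ι] {p : ι → X → Prop} (h : ∀ i, Sig (p i)) :
    Sig fun x => ∀ i, p i x := by
  choose C hC hp using fun i => (h i).coded
  have h1 : AnalyticSet {q : X × (ι → ℕ → ℕ) | ¬ ∀ i, (q.1, q.2 i) ∈ C i} := by
    have : {q : X × (ι → ℕ → ℕ) | ¬ ∀ i, (q.1, q.2 i) ∈ C i} =
        ⋃ i, (fun q : X × (ι → ℕ → ℕ) => (q.1, q.2 i)) ⁻¹' (C i)ᶜ := by
      ext; simp
    rw [this]
    refine AnalyticSet.iUnion fun i => (hC i).preimage ?_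
    fun_prop
  refine (Sig.of_coanalytic (p := fun x (y : ι → ℕ → ℕ) => ∀ i, (x, y i) ∈ C i) h1).congr
    fun x => ?_
  rw [← Classical.skolem (p := fun i y => (x, y) ∈ C i)]
  exact forall_congr' fun i => (hp i x).symm

lemma Sig.exists_nat {p : ℕ → X → Prop} (h : ∀ i, Sig (p i)) : Sig fun x => ∃ i, p i x := by
  choose C hC hp using fun i => (h i).coded
  have h1 : AnalyticSet {q : X × (ℕ × (ℕ → ℕ)) | ¬ (q.1, q.2.2) ∈ C q.2.1} := by
    have : {q : X × (ℕ × (ℕ → ℕ)) | ¬ (q.1, q.2.2) ∈ C q.2.1} =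
        ⋃ i, ({q : X × (ℕ × (ℕ → ℕ)) | q.2.1 = i} ∩
          (fun q : X × (ℕ × (ℕ → ℕ)) => (q.1, q.2.2)) ⁻¹' (C i)ᶜ) := by
      ext; simp
    rw [this]
    refine AnalyticSet.iUnion fun i => analytic_inter ?_ ((hC i).preimage (by fun_prop))
    exact (isClosed_eq (by fun_prop) continuous_const).analyticSet
  refine (Sig.of_coanalytic (p := fun x (y : ℕ × (ℕ → ℕ)) => (x, y.2) ∈ C y.1) h1).congr
    fun x => ?_
  simp only [Prod.exists]
  exact exists_congr fun i => (hp i x).symm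

lemma Sig.exists_countable {ι : Type} [Countable ι] {p : ι → X → Prop} (h : ∀ i, Sig (p i)) :
    Sig fun x => ∃ i, p i x := by
  cases isEmpty_or_nonempty ι
  · exact Sig.of_measurable (by simp)
  · obtain ⟨e, he⟩ := exists_surjective_nat ι
    exact (Sig.exists_nat fun n => h (e n)).congr fun x => (he.exists (p := fun i => p i x)).symm

lemma Sig.and {p q : X → Prop} (hp : Sig p) (hq : Sig q) : Sig fun x => p x ∧ q x :=
  (Sig.forall_countable (p := fun b : Bool => if b then p else q)
    (by rintro (_ | _) <;> simpa)).congr (by simp [and_comm])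

lemma Sig.or {p q : X → Prop} (hp : Sig p) (hq : Sig q) : Sig fun x => p x ∨ q x :=
  (Sig.exists_countable (p := fun b : Bool => if b then p else q)
    (by rintro (_ | _) <;> simpa)).congr (by simp [or_comm])

lemma Del.sig {p : X → Prop} (h : Del p) : Sig p := h.1

lemma Del.not {p : X → Prop} (h : Del p) : Del fun x => ¬ p x :=
  ⟨h.2, Sig.congr (p := p) h.1 (by simp)⟩

lemma Del.mk {p : X → Prop} (h : Sig p) (h' : Sig fun x => ¬ p x) : Del p := ⟨h, h'⟩

lemma Del.congr {p q : X → Prop} (h : Del p) (hpq : ∀ x, p x ↔ q x) : Del q := by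
  have : p = q := funext fun x => propext (hpq x)
  exact this ▸ h

lemma Del.of_measurable {p : X → Prop} (h : MeasurableSet {x | p x}) : Del p :=
  ⟨Sig.of_measurable h, Sig.of_measurable h.compl⟩

lemma Del.comp {p : Y → Prop} (h : Del p) {f : X → Y} (hf : Measurable f) :
    Del fun x => p (f x) :=
  ⟨Sig.comp h.sig hf, Sig.comp h.not.sig hf⟩

lemma Del.and {p q : X → Prop} (hp : Del p) (hq : Del q) : Del fun x => p x ∧ q x :=
  .mk (hp.sig.and hq.sig) ((hp.not.sig.or hq.not.sig).congr fun x => by tauto)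

lemma Del.or {p q : X → Prop} (hp : Del p) (hq : Del q) : Del fun x => p x ∨ q x :=
  .mk (hp.sig.or hq.sig) ((hp.not.sig.and hq.not.sig).congr fun x => by tauto)

lemma Del.imp {p q : X → Prop} (hp : Del p) (hq : Del q) : Del fun x => p x → q x :=
  (hp.not.or hq).congr fun x => by tauto

lemma Del.iff {p q : X → Prop} (hp : Del p) (hq : Del q) : Del fun x => p x ↔ q x :=
  ((hp.imp hq).and (hq.imp hp)).congr fun x => by tauto

lemma Del.forall_countable {ι : Type} [Countable ι] {p : ι → X → Prop} (h : ∀ i, Del (p i)) :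
    Del fun x => ∀ i, p i x :=
  .mk (.forall_countable fun i => (h i).sig)
    ((Sig.exists_countable fun i => (h i).not.sig).congr fun x => by simp)

lemma Del.exists_countable {ι : Type} [Countable ι] {p : ι → X → Prop} (h : ∀ i, Del (p i)) :
    Del fun x => ∃ i, p i x :=
  .mk (.exists_countable fun i => (h i).sig)
    ((Sig.forall_countable fun i => (h i).not.sig).congr fun x => by simp)

/-- A `𝚫¹₂` prewellordering of length at most `ω₁`, presented by its rank function, which is good:
being a sequence that enumerates (a superset of) the initial segment below a point is `𝚺¹₂`. -/
structure GoodNorm (ψ : X → Ordinal.{0}) : Prop where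
  lt_omega : ∀ x, ψ x < Ordinal.omega 1
  le : Sig fun q : X × X => ψ q.1 ≤ ψ q.2
  lt : Sig fun q : X × X => ψ q.1 < ψ q.2
  good : Sig fun q : X × (ℕ → X) => ∀ z, ψ z ≤ ψ q.1 → ∃ n, q.2 n = z

lemma GoodNorm.del_le {ψ : X → Ordinal.{0}} (h : GoodNorm ψ) :
    Del fun q : X × X => ψ q.1 ≤ ψ q.2 :=
  .mk h.le ((h.lt.comp measurable_swap).congr fun q => by simp)

lemma GoodNorm.del_lt {ψ : X → Ordinal.{0}} (h : GoodNorm ψ) :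
    Del fun q : X × X => ψ q.1 < ψ q.2 :=
  .mk h.lt ((h.le.comp measurable_swap).congr fun q => by simp)

/-- The least value of `ρ` on the section of `D` at `x`; it is `0` if the section is empty. -/
noncomputable def minNorm {X Y : Type} (D : Set (X × Y)) (ρ : X × Y → Ordinal.{0}) (x : X) :
    Ordinal.{0} :=
  sInf {o | ∃ y, (x, y) ∈ D ∧ ρ (x, y) = o}

lemma minNorm_le {X Y : Type} {D : Set (X × Y)} {ρ : X × Y → Ordinal.{0}} {x : X} {y : Y}
    (h : (x, y) ∈ D) : minNorm D ρ x ≤ ρ (x, y) := csInf_le' ⟨y, h, rfl⟩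

lemma exists_minNorm {X Y : Type} {D : Set (X × Y)} (ρ : X × Y → Ordinal.{0}) {x : X}
    (h : ∃ y, (x, y) ∈ D) : ∃ y, (x, y) ∈ D ∧ ρ (x, y) = minNorm D ρ x := by
  obtain ⟨y, hy⟩ := h
  exact csInf_mem (s := {o | ∃ y, (x, y) ∈ D ∧ ρ (x, y) = o}) ⟨_, y, hy, rfl⟩

/-- Quantifying existentially over a coanalytic set turns its norm into a good `𝚫¹₂` norm: once a
witness for `x` is fixed, the points of smaller or equal norm form an analytic set, so that
statements about all of them remain coanalytic. -/
lemma goodNorm_minNorm {D : Set (X × Y)} {ρ : X × Y → Ordinal.{0}} (hD : AnalyticSet Dᶜ)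
    (hρ : IsNorm D ρ) (htot : ∀ x, ∃ y, (x, y) ∈ D) : GoodNorm (minNorm D ρ) := by
  obtain ⟨h0, ⟨L, hL, hL'⟩, ⟨M, hM, hM'⟩⟩ := hρ
  have hmin := fun x => exists_minNorm ρ (htot x)
  refine ⟨fun x => ?_, ?_, ?_, ?_⟩
  · obtain ⟨y, hy, hyx⟩ := hmin x
    exact hyx ▸ h0 _
  · have h1 : AnalyticSet {q : (X × X) × Y | ¬ ((q.1.1, q.2) ∈ D ∧
        ∀ y', ((q.1.2, y'), (q.1.1, q.2)) ∉ M)} := by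
      have e1 := hD.preimage (f := fun q : (X × X) × Y => (q.1.1, q.2)) (by fun_prop)
      have e2 := analytic_exists (p := fun (q : (X × X) × Y) (y' : Y) =>
        ((q.1.2, y'), (q.1.1, q.2)) ∈ M) (hM.preimage (f := fun q : ((X × X) × Y) × Y =>
          ((q.1.1.2, q.2), (q.1.1.1, q.1.2))) (by fun_prop))
      convert analytic_union e1 e2 using 1
      ext q; simp; tauto
    refine (Sig.of_coanalytic (p := fun (q : X × X) (y : Y) => (q.1, y) ∈ D ∧
      ∀ y', ((q.2, y'), (q.1, y)) ∉ M) h1).congr fun q => ?_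
    constructor
    · rintro ⟨y, hy, hall⟩
      obtain ⟨y', hy', hyx'⟩ := hmin q.2
      by_contra hlt
      exact hall y' ((hM' _ hy _).2 ⟨hy', by
        rw [hyx']; exact (not_le.1 hlt).trans_le (minNorm_le hy)⟩)
    · intro hle
      obtain ⟨y, hy, hyx⟩ := hmin q.1
      refine ⟨y, hy, fun y' hy' => ?_⟩
      obtain ⟨h1, h2⟩ := (hM' _ hy _).1 hy'
      rw [hyx] at h2
      exact absurd ((minNorm_le h1).trans_lt h2) (not_lt.2 hle)
  · have h1 : AnalyticSet {q : (X × X) × Y | ¬ ((q.1.1, q.2) ∈ D ∧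
        ∀ y', ((q.1.2, y'), (q.1.1, q.2)) ∉ L)} := by
      have e1 := hD.preimage (f := fun q : (X × X) × Y => (q.1.1, q.2)) (by fun_prop)
      have e2 := analytic_exists (p := fun (q : (X × X) × Y) (y' : Y) =>
        ((q.1.2, y'), (q.1.1, q.2)) ∈ L) (hL.preimage (f := fun q : ((X × X) × Y) × Y =>
          ((q.1.1.2, q.2), (q.1.1.1, q.1.2))) (by fun_prop))
      convert analytic_union e1 e2 using 1
      ext q; simp; tauto
    refine (Sig.of_coanalytic (p := fun (q : X × X) (y : Y) => (q.1, y) ∈ D ∧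
      ∀ y', ((q.2, y'), (q.1, y)) ∉ L) h1).congr fun q => ?_
    constructor
    · rintro ⟨y, hy, hall⟩
      obtain ⟨y', hy', hyx'⟩ := hmin q.2
      by_contra hlt
      exact hall y' ((hL' _ hy _).2 ⟨hy', by
        rw [hyx']; exact (not_lt.1 hlt).trans (minNorm_le hy)⟩)
    · intro hlt
      obtain ⟨y, hy, hyx⟩ := hmin q.1
      refine ⟨y, hy, fun y' hy' => ?_⟩
      obtain ⟨h1, h2⟩ := (hL' _ hy _).1 hy'
      rw [hyx] at h2
      exact absurd ((minNorm_le h1).trans h2) (not_le.2 hlt)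
  · have h1 : AnalyticSet {q : (X × (ℕ → X)) × Y | ¬ ((q.1.1, q.2) ∈ D ∧
        ∀ u : X × Y, (u, (q.1.1, q.2)) ∈ L → ∃ n, q.1.2 n = u.1)} := by
      have e1 := hD.preimage (f := fun q : (X × (ℕ → X)) × Y => (q.1.1, q.2)) (by fun_prop)
      have e3 : MeasurableSet {q : ((X × (ℕ → X)) × Y) × (X × Y) | ¬ ∃ n, q.1.1.2 n = q.2.1} := by
        refine MeasurableSet.compl
          (s := {q : ((X × (ℕ → X)) × Y) × (X × Y) | ∃ n, q.1.1.2 n = q.2.1}) ?_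
        rw [measurableSet_setOfPred]
        refine Measurable.exists fun n => ?_
        rw [← measurableSet_setOfPred]
        exact measurableSet_eq_fun (by fun_prop) (by fun_prop)
      have e2 := analytic_exists (p := fun (q : (X × (ℕ → X)) × Y) (u : X × Y) =>
        (u, (q.1.1, q.2)) ∈ L ∧ ¬ ∃ n, q.1.2 n = u.1)
        (analytic_inter (hL.preimage (f := fun q : ((X × (ℕ → X)) × Y) × (X × Y) =>
          (q.2, (q.1.1.1, q.1.2))) (by fun_prop)) e3.analyticSet)
      convert analytic_union e1 e2 using 1
      ext q
      simp only [mem_ofPred_eq, mem_union, mem_preimage, mem_compl_iff, not_and_or, not_forall,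
        exists_prop]
    refine (Sig.of_coanalytic (p := fun (q : X × (ℕ → X)) (y : Y) => (q.1, y) ∈ D ∧
      ∀ u : X × Y, (u, (q.1, y)) ∈ L → ∃ n, q.2 n = u.1) h1).congr fun q => ?_
    constructor
    · rintro ⟨y, hy, hall⟩ z hz
      obtain ⟨y', hy', hyx'⟩ := hmin z
      exact hall (z, y') ((hL' _ hy _).2 ⟨hy', by rw [hyx']; exact hz.trans (minNorm_le hy)⟩)
    · intro hall
      obtain ⟨y, hy, hyx⟩ := hmin q.1
      refine ⟨y, hy, fun u hu => ?_⟩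
      obtain ⟨h1, h2⟩ := (hL' _ hy _).1 hu
      rw [hyx] at h2
      exact hall u.1 ((minNorm_le (show (u.1, u.2) ∈ D from h1)).trans h2)

end Sigma

/-! ### The Baire property: analytic sets and localization -/

section Baire

open Topology Filter

variable {Z : Type} [TopologicalSpace Z]

lemma isMeagre_symmDiff_iff {s t : Set Z} : IsMeagre (symmDiff s t) ↔ s =ᵇ t := by
  rw [eventuallyEq_set, IsMeagre]
  refine iff_of_eq (congrArg (· ∈ residual Z) ?_)
  ext x
  simp only [mem_compl_iff, mem_symmDiff, mem_ofPred_eq]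
  tauto

lemma hasBaireProp_iff {s : Set Z} : HasBaireProp s ↔ BaireMeasurableSet s := by
  simp_rw [BaireMeasurableSet.iff_residualEq_isOpen, HasBaireProp, isMeagre_symmDiff_iff]

lemma BaireMeasurableSet.exists_isOpen {s : Set Z} (h : BaireMeasurableSet s)
    (hs : ¬ IsMeagre s) : ∃ U : Set Z, IsOpen U ∧ ¬ IsMeagre U ∧ IsMeagre (U \ s) := by
  obtain ⟨U, hU, hm⟩ := hasBaireProp_iff.2 h
  refine ⟨U, hU, fun hUm => hs ((hUm.union hm).mono fun x hx => ?_), hm.mono fun x hx => .inr hx⟩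
  by_cases hxU : x ∈ U
  · exact .inl hxU
  · exact .inr (.inl ⟨hx, hxU⟩)

lemma not_isMeagre_isOpen [BaireSpace Z] {U : Set Z} (hU : IsOpen U) (hne : U.Nonempty) :
    ¬ IsMeagre U := by
  intro h
  obtain ⟨x, hx, hx'⟩ := (dense_of_mem_residual h).inter_open_nonempty U hU hne
  exact hx' hx

/-- The points at which `S` is nonmeager. -/
def heavy (S : Set Z) : Set Z := {x | ∀ U, IsOpen U → x ∈ U → ¬ IsMeagre (U ∩ S)}

lemma isClosed_heavy (S : Set Z) : IsClosed (heavy S) := by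
  rw [← isOpen_compl_iff, isOpen_iff_forall_mem_open]
  intro x hx
  simp only [heavy, mem_compl_iff, mem_ofPred_eq, not_forall, not_not] at hx
  obtain ⟨U, hU, hxU, hm⟩ := hx
  exact ⟨U, fun y hy hy' => hy' U hU hy hm, hU, hxU⟩

lemma heavy_subset_closure (S : Set Z) : heavy S ⊆ closure S := by
  intro x hx
  by_contra hne
  refine hx _ isClosed_closure.isOpen_compl hne ?_
  have : (closure S)ᶜ ∩ S = ∅ := by
    ext y; simp only [mem_inter_iff, mem_compl_iff, mem_empty_iff_false, iff_false, not_and]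
    exact fun h h' => h (subset_closure h')
  rw [this]
  exact .empty

lemma isMeagre_diff_heavy [SecondCountableTopology Z] (S : Set Z) : IsMeagre (S \ heavy S) := by
  let 𝓑 := {b ∈ TopologicalSpace.countableBasis Z | IsMeagre (b ∩ S)}
  have h𝓑 : 𝓑.Countable := (TopologicalSpace.countable_countableBasis Z).mono fun b hb => hb.1
  refine (isMeagre_biUnion (f := fun b => b ∩ S) h𝓑 fun b hb => hb.2).mono ?_
  rintro x ⟨hxS, hx⟩
  simp only [heavy, mem_ofPred_eq, not_forall, not_not] at hx
  obtain ⟨U, hU, hxU, hm⟩ := hx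
  obtain ⟨b, hb, hxb, hbU⟩ :=
    (TopologicalSpace.isBasis_countableBasis Z).exists_subset_of_mem_open hxU hU
  exact mem_biUnion (x := b) ⟨hb, hm.mono (inter_subset_inter_left _ hbU)⟩ ⟨hxb, hxS⟩

/-- Analytic sets have the Baire property: replacing each member of a Suslin scheme by its set
of nonmeagerness points only changes things by a meager set. -/
lemma analytic_baire [T2Space Z] [SecondCountableTopology Z] {A : Set Z} (hA : AnalyticSet A) :
    BaireMeasurableSet A := by
  obtain ⟨G, hG0, hG, -, hG'⟩ := analytic_scheme hA
  have key : ∀ s, IsMeagre (heavy (G s) \ ⋃ a, heavy (G (a :: s))) := by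
    intro s
    by_contra hne
    have hb : BaireMeasurableSet (heavy (G s) \ ⋃ a, heavy (G (a :: s))) := by
      borelize Z
      exact ((isClosed_heavy _).measurableSet.diff (MeasurableSet.iUnion fun a =>
        (isClosed_heavy _).measurableSet)).baireMeasurableSet
    obtain ⟨U, hU, hUm, hm⟩ := hb.exists_isOpen hne
    have hx : (U ∩ (heavy (G s) \ ⋃ a, heavy (G (a :: s)))).Nonempty := by
      by_contra hemp
      exact hUm (hm.mono fun x hx => (⟨hx, fun h => hemp ⟨x, hx, h⟩⟩ : x ∈ U \ _))
    obtain ⟨x, hxU, hx, -⟩ := hx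
    refine hx U hU hxU ?_
    refine (hm.union (isMeagre_iUnion fun a => isMeagre_diff_heavy (G (a :: s)))).mono ?_
    rintro z ⟨hzU, hz⟩
    by_cases hz' : z ∈ ⋃ a, heavy (G (a :: s))
    · exact .inl ⟨hzU, fun h => h.2 hz'⟩
    · obtain ⟨a, ha⟩ := mem_iUnion.1 (hG s hz)
      exact .inr (mem_iUnion.2 ⟨a, ha, fun h => hz' (mem_iUnion.2 ⟨a, h⟩)⟩)
  have hcl : BaireMeasurableSet (heavy A) := by
    borelize Z
    exact (isClosed_heavy A).measurableSet.baireMeasurableSet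
  refine hcl.congr ?_
  rw [← isMeagre_symmDiff_iff]
  refine ((isMeagre_iUnion key).union (isMeagre_diff_heavy A)).mono ?_
  rintro x (⟨hx, hxA⟩ | ⟨hxA, hx⟩)
  · left
    by_contra hne
    simp only [mem_iUnion, Set.mem_sdiff, not_exists, not_and, not_not, not_forall] at hne
    have hne' : ∀ s : {s // x ∈ heavy (G s)}, ∃ a, x ∈ heavy (G (a :: s.1)) := fun s => by
      simpa using hne s.1 s.2
    choose a ha using hne'
    let t : ℕ → {s // x ∈ heavy (G s)} := fun n =>
      Nat.rec ⟨[], hG0 ▸ hx⟩ (fun _ s => ⟨a s :: s.1, ha s⟩) n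
    have ht : ∀ n, (t n).1 = PiNat.res (fun n => a (t n)) n := by
      intro n
      induction n with
      | zero => rfl
      | succ n ih => rw [PiNat.res_succ, ← ih]
    refine hxA (hG' (fun n => a (t n)) x fun n => ?_)
    rw [← ht]
    exact heavy_subset_closure _ (t (n + 1)).2
  · exact .inr ⟨hxA, hx⟩

/-- A set without the Baire property fails to have it everywhere in some nonempty open set, so
that, below that set, neither it nor its complement contains a nonmeager set with the property. -/
lemma exists_hereditary_nonbaire [SecondCountableTopology Z] {A : Set Z}
    (hA : ¬ BaireMeasurableSet A) :
    ∃ V : Set Z, IsOpen V ∧ V.Nonempty ∧ ∀ K, BaireMeasurableSet K → (K ⊆ A ∨ K ⊆ Aᶜ) →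
      IsMeagre (K ∩ V) := by
  let 𝓑 := {b ∈ TopologicalSpace.countableBasis Z | BaireMeasurableSet (b ∩ A)}
  have h𝓑 : 𝓑.Countable := (TopologicalSpace.countable_countableBasis Z).mono fun b hb => hb.1
  have h𝓑o : ∀ b ∈ 𝓑, IsOpen b := fun b hb => TopologicalSpace.isOpen_of_mem_countableBasis hb.1
  have hU : IsOpen (⋃₀ 𝓑) := isOpen_sUnion h𝓑o
  have hUA : BaireMeasurableSet (⋃₀ 𝓑 ∩ A) := by
    rw [sUnion_eq_biUnion, iUnion₂_inter]
    exact BaireMeasurableSet.biUnion h𝓑 fun b hb => hb.2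
  have hmem : ∀ O, IsOpen O → BaireMeasurableSet (O ∩ A) → O ⊆ ⋃₀ 𝓑 := by
    intro O hO hOA x hx
    obtain ⟨b, hb, hxb, hbO⟩ :=
      (TopologicalSpace.isBasis_countableBasis Z).exists_subset_of_mem_open hx hO
    refine mem_sUnion.2 ⟨b, ⟨hb, ?_⟩, hxb⟩
    have : b ∩ A = b ∩ (O ∩ A) := by
      rw [← inter_assoc, inter_eq_self_of_subset_left hbO]
    rw [this]
    exact (TopologicalSpace.isOpen_of_mem_countableBasis hb).baireMeasurableSet.inter hOA
  refine ⟨(closure (⋃₀ 𝓑))ᶜ, isClosed_closure.isOpen_compl, ?_, ?_⟩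
  · by_contra hemp
    rw [not_nonempty_iff_eq_empty, compl_empty_iff] at hemp
    refine hA (hUA.congr ?_)
    rw [eventuallyEq_set]
    filter_upwards [residual_of_dense_open hU (dense_iff_closure_eq.2 hemp)] with x hx
    simp [hx]
  · intro K hK hKA
    by_contra hne
    obtain ⟨O, hO, hOne, hm⟩ :=
      (hK.inter isClosed_closure.isOpen_compl.baireMeasurableSet).exists_isOpen hne
    have hOV : IsOpen (O ∩ (closure (⋃₀ 𝓑))ᶜ) := hO.inter isClosed_closure.isOpen_compl
    have hsub : O ∩ (closure (⋃₀ 𝓑))ᶜ ⊆ ⋃₀ 𝓑 := by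
      refine hmem _ hOV ?_
      rcases hKA with hKA | hKA
      · refine hOV.baireMeasurableSet.congr ?_
        rw [← isMeagre_symmDiff_iff]
        refine hm.mono ?_
        rintro x (⟨hx, hx'⟩ | ⟨hx, hx'⟩)
        · exact ⟨hx.1, fun h => hx' ⟨hx, hKA h.1⟩⟩
        · exact absurd hx.1 hx'
      · have : IsMeagre (O ∩ (closure (⋃₀ 𝓑))ᶜ ∩ A) :=
          hm.mono fun x hx => (⟨hx.1.1, fun h => hKA h.1 hx.2⟩ : x ∈ O \ _)
        exact this.baireMeasurableSet
    refine hOne (hm.mono fun x hx => (⟨hx, fun h => ?_⟩ : x ∈ O \ _))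
    exact h.2 (subset_closure (hsub ⟨hx, h.2⟩))

end Baire

/-! ### A category-preserving map from the line to the plane -/

section Plane

open Filter Topology

/-- Bijections `ℤ ≃ ℤ × ℤ` matching the intervals `[n, n + 1) / 4 ^ k` with the dyadic squares of
side `2 ^ (-k)`, compatibly with the passage from one generation to the next. -/
lemma exists_grid : ∃ H : ℕ → ℤ ≃ ℤ × ℤ, ∀ k m,
    (H (k + 1) m).1 / 2 = (H k (m / 4)).1 ∧ (H (k + 1) m).2 / 2 = (H k (m / 4)).2 := by
  obtain ⟨e⟩ : Nonempty (ℤ ≃ ℤ × ℤ) := ⟨Denumerable.equiv₂ ℤ (ℤ × ℤ)⟩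
  have step : ∀ h : ℤ ≃ ℤ × ℤ, ∃ h' : ℤ ≃ ℤ × ℤ, ∀ m,
      (h' m).1 / 2 = (h (m / 4)).1 ∧ (h' m).2 / 2 = (h (m / 4)).2 := by
    intro h
    let h' : ℤ ≃ ℤ × ℤ := (Int.divModEquiv 4).trans <|
      (h.prodCongr (finProdFinEquiv (m := 2) (n := 2)).symm).trans <|
      (Equiv.prodProdProdComm ℤ ℤ (Fin 2) (Fin 2)).trans <|
      (Int.divModEquiv 2).symm.prodCongr (Int.divModEquiv 2).symm
    refine ⟨h', fun m => ?_⟩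
    have h1 : ∀ p : ℤ × Fin 2, ((Int.divModEquiv 2).symm p) / 2 = p.1 := by
      intro p
      have := congrArg Prod.fst ((Int.divModEquiv 2).apply_symm_apply p)
      exact this
    exact ⟨h1 _, h1 _⟩
  choose s hs using step
  exact ⟨fun n => Nat.rec e (fun _ h => s h) n, fun k m => hs _ m⟩

lemma floor_div_pow (x : ℝ) (b : ℕ) (hb : 0 < b) (k j : ℕ) :
    ⌊(b : ℝ) ^ (k + j) * x⌋ / (b : ℤ) ^ j = ⌊(b : ℝ) ^ k * x⌋ := by
  have := Int.floor_div_natCast (k := ℝ) ((b : ℝ) ^ (k + j) * x) (b ^ j)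
  rw [Nat.cast_pow, Nat.cast_pow] at this
  rw [← this, pow_add]
  congr 1
  have : (b : ℝ) ≠ 0 := by positivity
  field_simp

/-- A coherent assignment of dyadic intervals to the intervals of the `4`-adic partitions of the
line determines a Borel function that maps each of the latter into the closed interval assigned
to it. -/
lemma exists_coordinate {g : ℕ → ℤ → ℤ} (hg : ∀ k m, g (k + 1) m / 2 = g k (m / 4)) :
    ∃ φ : ℝ → ℝ, Measurable φ ∧
      ∀ k x, (g k ⌊(4 : ℝ) ^ k * x⌋ : ℝ) ≤ 2 ^ k * φ x ∧
        2 ^ k * φ x ≤ g k ⌊(4 : ℝ) ^ k * x⌋ + 1 := by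
  let u : ℕ → ℝ → ℝ := fun k x => g k ⌊(4 : ℝ) ^ k * x⌋ / 2 ^ k
  have hu : ∀ k, Measurable (u k) := by
    intro k
    have h1 : Measurable fun m : ℤ => (g k m : ℝ) := .of_discrete
    exact (h1.comp (Int.measurable_floor.comp (measurable_const_mul _))).div_const _
  have key : ∀ k x, 2 * g k ⌊(4 : ℝ) ^ k * x⌋ ≤ g (k + 1) ⌊(4 : ℝ) ^ (k + 1) * x⌋ ∧
      g (k + 1) ⌊(4 : ℝ) ^ (k + 1) * x⌋ ≤ 2 * g k ⌊(4 : ℝ) ^ k * x⌋ + 1 := by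
    intro k x
    have h1 := floor_div_pow x 4 (by norm_num) k 1
    have h2 := hg k ⌊(4 : ℝ) ^ (k + 1) * x⌋
    norm_num at h1
    rw [h1] at h2
    omega
  have hmono : ∀ x, Monotone fun k => u k x := fun x => by
    refine monotone_nat_of_le_succ fun k => ?_
    have := (key k x).1
    have : (2 * g k ⌊(4 : ℝ) ^ k * x⌋ : ℝ) ≤ g (k + 1) ⌊(4 : ℝ) ^ (k + 1) * x⌋ := by
      exact_mod_cast this
    simp only [u]
    rw [div_le_div_iff₀ (by positivity) (by positivity), pow_succ (2 : ℝ)]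
    nlinarith [pow_pos (two_pos (α := ℝ)) k]
  have hanti : ∀ x, Antitone fun k => u k x + 1 / 2 ^ k := fun x => by
    refine antitone_nat_of_succ_le fun k => ?_
    have := (key k x).2
    have : (g (k + 1) ⌊(4 : ℝ) ^ (k + 1) * x⌋ : ℝ) ≤ 2 * g k ⌊(4 : ℝ) ^ k * x⌋ + 1 := by
      exact_mod_cast this
    simp only [u]
    rw [← add_div, ← add_div, div_le_div_iff₀ (by positivity) (by positivity), pow_succ (2 : ℝ)]
    nlinarith [pow_pos (two_pos (α := ℝ)) k]
  have hle : ∀ x k l, u k x ≤ u l x + 1 / 2 ^ l := fun x k l =>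
    (hmono x (le_max_left k l)).trans <| (le_add_of_nonneg_right (by positivity)).trans <|
      hanti x (le_max_right k l)
  refine ⟨fun x => ⨆ k, u k x, .iSup hu, fun k x => ⟨?_, ?_⟩⟩
  · have h1 : u k x ≤ ⨆ k, u k x :=
      le_ciSup (f := fun k => u k x) ⟨_, by rintro _ ⟨l, rfl⟩; exact hle x l 0⟩ k
    have h2 : (2 : ℝ) ^ k * u k x = g k ⌊(4 : ℝ) ^ k * x⌋ := by simp only [u]; field_simp
    rw [← h2]
    gcongr
  · have h1 : ⨆ k, u k x ≤ u k x + 1 / 2 ^ k := ciSup_le fun l => hle x l k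
    have h2 : (2 : ℝ) ^ k * (u k x + 1 / 2 ^ k) = g k ⌊(4 : ℝ) ^ k * x⌋ + 1 := by
      simp only [u]; field_simp
    rw [← h2]
    gcongr

/-- Inside an open set, a point has a closed dyadic square of arbitrarily small size around it. -/
lemma exists_square {W : Set (ℝ × ℝ)} (hW : IsOpen W) {w : ℝ × ℝ} (hw : w ∈ W) (k : ℕ) :
    ∃ j, ∀ v : ℝ × ℝ, ((⌊(2 : ℝ) ^ (k + j) * w.1⌋ : ℝ) ≤ 2 ^ (k + j) * v.1 ∧
      2 ^ (k + j) * v.1 ≤ ⌊(2 : ℝ) ^ (k + j) * w.1⌋ + 1) →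
      ((⌊(2 : ℝ) ^ (k + j) * w.2⌋ : ℝ) ≤ 2 ^ (k + j) * v.2 ∧
      2 ^ (k + j) * v.2 ≤ ⌊(2 : ℝ) ^ (k + j) * w.2⌋ + 1) → v ∈ W := by
  obtain ⟨ε, hε, hball⟩ := Metric.isOpen_iff.1 hW w hw
  obtain ⟨j, hj⟩ := exists_pow_lt_of_lt_one hε (show (1 / 2 : ℝ) < 1 by norm_num)
  have hsmall : (1 : ℝ) < 2 ^ (k + j) * ε := by
    have h1 : (1 : ℝ) < 2 ^ j * ε := by
      have : (1 : ℝ) = 2 ^ j * (1 / 2) ^ j := by rw [← mul_pow]; norm_num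
      rw [this]
      gcongr
    have h2 : (1 : ℝ) ≤ 2 ^ k := one_le_pow₀ (by norm_num)
    rw [pow_add, mul_assoc]
    nlinarith
  have key : ∀ a b : ℝ, (⌊(2 : ℝ) ^ (k + j) * a⌋ : ℝ) ≤ 2 ^ (k + j) * b ∧
      2 ^ (k + j) * b ≤ ⌊(2 : ℝ) ^ (k + j) * a⌋ + 1 → dist b a < ε := by
    rintro a b ⟨h1, h2⟩
    have h3 := Int.floor_le ((2 : ℝ) ^ (k + j) * a)
    have h4 := Int.lt_floor_add_one ((2 : ℝ) ^ (k + j) * a)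
    have hp : (0 : ℝ) < 2 ^ (k + j) := by positivity
    rw [Real.dist_eq, abs_lt]
    constructor <;> refine lt_of_mul_lt_mul_left ?_ hp.le <;> nlinarith
  refine ⟨j, fun v h1 h2 => hball ?_⟩
  rw [Metric.mem_ball, Prod.dist_eq]
  exact max_lt (key _ _ h1) (key _ _ h2)

/-- There is a Borel map from the line to the plane for which preimages of meager sets are meager
and preimages of nonempty open sets have nonempty interior. -/
lemma exists_plane_map : ∃ f : ℝ → ℝ × ℝ, Measurable f ∧
    (∀ W, IsOpen W → W.Nonempty → ∃ U : Set ℝ, IsOpen U ∧ U.Nonempty ∧ U ⊆ f ⁻¹' W) ∧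
    ∀ S, IsMeagre S → IsMeagre (f ⁻¹' S) := by
  obtain ⟨H, hH⟩ := exists_grid
  obtain ⟨φ, hφm, hφ⟩ := exists_coordinate (g := fun k m => (H k m).1) fun k m => (hH k m).1
  obtain ⟨χ, hχm, hχ⟩ := exists_coordinate (g := fun k m => (H k m).2) fun k m => (hH k m).2
  let f : ℝ → ℝ × ℝ := fun x => (φ x, χ x)
  have hHj : ∀ k j m, (H (k + j) m).1 / 2 ^ j = (H k (m / 4 ^ j)).1 ∧
      (H (k + j) m).2 / 2 ^ j = (H k (m / 4 ^ j)).2 := by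
    intro k j
    induction j with
    | zero => simp
    | succ j ih =>
      intro m
      have h1 := ih (m / 4)
      have h2 := hH (k + j) m
      rw [← h2.1, ← h2.2, Int.ediv_ediv_of_nonneg (by norm_num),
        Int.ediv_ediv_of_nonneg (by norm_num), Int.ediv_ediv_of_nonneg (by norm_num)] at h1
      rw [pow_succ', pow_succ', ← add_assoc]
      exact h1
  -- The interval of generation `k + j` assigned to a small square around `w`.
  have h_square : ∀ W : Set (ℝ × ℝ), IsOpen W → ∀ w ∈ W, ∀ k, ∃ j, ∃ m : ℤ,
      H (k + j) m = (⌊(2 : ℝ) ^ (k + j) * w.1⌋, ⌊(2 : ℝ) ^ (k + j) * w.2⌋) ∧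
      ∀ x, ⌊(4 : ℝ) ^ (k + j) * x⌋ = m → f x ∈ W := by
    intro W hW w hw k
    obtain ⟨j, hj⟩ := exists_square hW hw k
    refine ⟨j, (H (k + j)).symm (⌊(2 : ℝ) ^ (k + j) * w.1⌋, ⌊(2 : ℝ) ^ (k + j) * w.2⌋),
      Equiv.apply_symm_apply _ _, fun x hx => hj _ ?_ ?_⟩
    · have := hφ (k + j) x
      simpa only [hx, Equiv.apply_symm_apply] using this
    · have := hχ (k + j) x
      simpa only [hx, Equiv.apply_symm_apply] using this
  -- A nonempty open subset of the interval of generation `k` and index `m`.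
  let I : ℕ → ℤ → Set ℝ := fun k m => Ioo (m / 4 ^ k) ((m + 1) / 4 ^ k)
  have hI : ∀ k m x, x ∈ I k m → ⌊(4 : ℝ) ^ k * x⌋ = m := by
    intro k m x hx
    obtain ⟨h1, h2⟩ := hx
    rw [div_lt_iff₀ (by positivity)] at h1
    rw [lt_div_iff₀ (by positivity)] at h2
    rw [Int.floor_eq_iff]
    constructor <;> linarith
  have hIo : ∀ k m, IsOpen (I k m) := fun k m => isOpen_Ioo
  have hIne : ∀ k m, (I k m).Nonempty := fun k m =>
    nonempty_Ioo.2 (by gcongr; linarith)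
  refine ⟨f, hφm.prodMk hχm, ?_, ?_⟩
  · rintro W hW ⟨w, hw⟩
    obtain ⟨j, m, -, hm⟩ := h_square W hW w hw 0
    exact ⟨I (0 + j) m, hIo _ _, hIne _ _, fun x hx => hm x (hI _ _ x hx)⟩
  have hnd : ∀ S, IsNowhereDense S → IsNowhereDense (f ⁻¹' S) := by
    intro S hS
    by_contra hne
    rw [IsNowhereDense, ← Ne, ← nonempty_iff_ne_empty] at hne
    obtain ⟨x, hx⟩ := hne
    obtain ⟨ε, hε, hball⟩ := Metric.isOpen_iff.1 isOpen_interior x hx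
    obtain ⟨k, hk⟩ := exists_pow_lt_of_lt_one hε (show (1 / 4 : ℝ) < 1 by norm_num)
    set n := ⌊(4 : ℝ) ^ k * x⌋ with hn
    have hball' : ∀ y, ⌊(4 : ℝ) ^ k * y⌋ = n → y ∈ interior (closure (f ⁻¹' S)) := by
      intro y hy
      refine hball ?_
      have hp : (0 : ℝ) < 4 ^ k := by positivity
      have h1 := Int.floor_le ((4 : ℝ) ^ k * x)
      have h2 := Int.lt_floor_add_one ((4 : ℝ) ^ k * x)
      have h3 := Int.floor_le ((4 : ℝ) ^ k * y)
      have h4 := Int.lt_floor_add_one ((4 : ℝ) ^ k * y)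
      rw [hy] at h3 h4
      rw [← hn] at h1 h2
      have h5 : (1 : ℝ) < 4 ^ k * ε := by
        have : (1 : ℝ) = 4 ^ k * (1 / 4) ^ k := by rw [← mul_pow]; norm_num
        rw [this]
        gcongr
      rw [Metric.mem_ball, Real.dist_eq, abs_lt]
      constructor <;> refine lt_of_mul_lt_mul_left ?_ hp.le <;> nlinarith
    let Q : Set (ℝ × ℝ) := Ioo ((H k n).1 / 2 ^ k : ℝ) (((H k n).1 + 1) / 2 ^ k) ×ˢ
      Ioo ((H k n).2 / 2 ^ k : ℝ) (((H k n).2 + 1) / 2 ^ k)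
    have hQo : IsOpen Q := isOpen_Ioo.prod isOpen_Ioo
    have hQne : Q.Nonempty := (nonempty_Ioo.2 (by gcongr; linarith)).prod
      (nonempty_Ioo.2 (by gcongr; linarith))
    have hQS : (Q ∩ (closure S)ᶜ).Nonempty := by
      by_contra hemp
      have hsub : Q ⊆ closure S := fun q hq => by
        by_contra hq'
        exact hemp ⟨q, hq, hq'⟩
      have := interior_maximal hsub hQo
      rw [hS] at this
      exact hQne.ne_empty (subset_empty_iff.1 this)
    obtain ⟨w, hwQ, hwS⟩ := hQS
    obtain ⟨j, m, hm, hmS⟩ := h_square _ isClosed_closure.isOpen_compl w hwS k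
    have hfl : ∀ (a : ℤ) (b : ℝ), b ∈ Ioo (a / 2 ^ k : ℝ) ((a + 1) / 2 ^ k) →
        ⌊(2 : ℝ) ^ k * b⌋ = a := by
      rintro a b ⟨h1, h2⟩
      rw [div_lt_iff₀ (by positivity)] at h1
      rw [lt_div_iff₀ (by positivity)] at h2
      rw [Int.floor_eq_iff]
      constructor <;> linarith
    have hmn : m / 4 ^ j = n := by
      apply (H k).injective
      have h1 := hHj k j m
      have h2 := floor_div_pow w.1 2 (by norm_num) k j
      have h3 := floor_div_pow w.2 2 (by norm_num) k j
      norm_num at h2 h3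
      rw [hfl _ _ hwQ.1] at h2
      rw [hfl _ _ hwQ.2] at h3
      rw [hm] at h1
      exact Prod.ext (h1.1.symm.trans h2) (h1.2.symm.trans h3)
    obtain ⟨y, hy⟩ := hIne (k + j) m
    have hy' : y ∈ closure (f ⁻¹' S) := by
      refine interior_subset (hball' y ?_)
      have h2 := floor_div_pow y 4 (by norm_num) k j
      norm_num at h2
      rw [← h2, hI _ _ y hy, hmn]
    obtain ⟨z, hz, hzS⟩ := mem_closure_iff.1 hy' _ (hIo _ _) hy
    exact hmS z (hI _ _ z hz) (subset_closure hzS)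
  intro S hS
  obtain ⟨T, hT, hTc, hST⟩ := isMeagre_iff_countable_union_isNowhereDense.1 hS
  refine (isMeagre_biUnion (f := fun t => f ⁻¹' t) hTc fun t ht => (hnd t (hT t ht)).isMeagre).mono ?_
  intro x hx
  obtain ⟨t, ht, hxt⟩ := mem_sUnion.1 (hST hx)
  exact mem_biUnion (x := t) ht hxt

end Plane

/-! ### An injective good norm on the reals -/

section InjectiveNorm

/-- The perfect set property for `𝚫¹₂` equivalence relations with meager classes. -/
def PerfectProp : Prop := ∀ B : Set ℝ, MeasurableSet B → ¬ IsMeagre B →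
  ∀ E : Set (ℝ × ℝ), IsEquivOn B E → Delta12 E →
    (∀ x ∈ B, IsMeagre {y | (x, y) ∈ E}) →
    ∃ P : Set ℝ, P ⊆ B ∧ Perfect P ∧ P.Nonempty ∧ ∀ x ∈ P, ∀ y ∈ P, x ≠ y → (x, y) ∉ E

/-- The witnesses for membership in `A` and in `Aᶜ`, taken together, form a coanalytic set with
full projection. The points with a witness of rank at most `α` form the union of an analytic subset
of `A` and an analytic subset of `Aᶜ`, which is meager in `V` if `A` is nowhere Baire measurable
in `V`. -/
lemma exists_meager_norm {X : Type} [TopologicalSpace X] [PolishSpace X] {A : Set X}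
    (hA : Delta12 A) (hB : ¬ BaireMeasurableSet A) :
    ∃ (D : Set (X × (ℕ → ℕ))) (ρ : X × (ℕ → ℕ) → Ordinal.{0}) (V : Set X),
      AnalyticSet Dᶜ ∧ IsNorm D ρ ∧ (∀ x, ∃ y, (x, y) ∈ D) ∧ IsOpen V ∧ V.Nonempty ∧
      ∀ x₀, IsMeagre ({x | minNorm D ρ x ≤ minNorm D ρ x₀} ∩ V) := by
  borelize X
  obtain ⟨C₀, hC₀, h₀⟩ := Sig.coded (p := (· ∈ A)) hA.1
  obtain ⟨C₁, hC₁, h₁⟩ := Sig.coded (p := (· ∈ Aᶜ)) hA.2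
  let sh : X × (ℕ → ℕ) → X × (ℕ → ℕ) := fun q => (q.1, fun n => q.2 (n + 1))
  have hsh : Continuous sh := by fun_prop
  let D : Set (X × (ℕ → ℕ)) :=
    {q | (q.2 0 = 0 → sh q ∈ C₀) ∧ (q.2 0 ≠ 0 → sh q ∈ C₁)}
  have hclopen : ∀ s : Set ℕ, IsClosed {q : X × (ℕ → ℕ) | q.2 0 ∈ s} := fun s =>
    (isClosed_discrete s).preimage (f := fun q : X × (ℕ → ℕ) => q.2 0) (by fun_prop)
  have hD : AnalyticSet Dᶜ := by
    have e0 := analytic_inter (hclopen {0}).analyticSet (hC₀.preimage hsh)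
    have e1 := analytic_inter (hclopen {0}ᶜ).analyticSet (hC₁.preimage hsh)
    convert analytic_union e0 e1 using 1
    ext q
    simp only [D, mem_compl_iff, mem_ofPred_eq, mem_union, mem_inter_iff, mem_preimage,
      mem_singleton_iff]
    tauto
  have hDA : ∀ x, x ∈ A → ∃ y, (x, y) ∈ D ∧ y 0 = 0 := by
    intro x hx
    obtain ⟨y, hy⟩ := (h₀ x).1 hx
    exact ⟨fun n => Nat.casesOn n 0 y, ⟨fun _ => hy, fun h => absurd rfl h⟩, rfl⟩
  have hDA' : ∀ x, x ∈ Aᶜ → ∃ y, (x, y) ∈ D ∧ y 0 ≠ 0 := by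
    intro x hx
    obtain ⟨y, hy⟩ := (h₁ x).1 hx
    exact ⟨fun n => Nat.casesOn n 1 y, ⟨fun h => absurd h one_ne_zero, fun _ => hy⟩, one_ne_zero⟩
  have hAD : ∀ x y, (x, y) ∈ D → (x ∈ A ↔ y 0 = 0) := by
    intro x y hxy
    by_cases hy : y 0 = 0
    · exact iff_of_true ((h₀ x).2 ⟨_, hxy.1 hy⟩) hy
    · exact iff_of_false ((h₁ x).2 ⟨_, hxy.2 hy⟩) hy
  have htot : ∀ x, ∃ y, (x, y) ∈ D := by
    intro x
    by_cases hx : x ∈ A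
    · exact (hDA x hx).imp fun _ h => h.1
    · exact (hDA' x hx).imp fun _ h => h.1
  obtain ⟨ρ, hρ⟩ := exists_isNorm hD
  obtain ⟨V, hV, hVne, hVm⟩ := exists_hereditary_nonbaire hB
  refine ⟨D, ρ, V, hD, hρ, htot, hV, hVne, fun x₀ => ?_⟩
  obtain ⟨y₀, hy₀, hyx₀⟩ := exists_minNorm ρ (htot x₀)
  obtain ⟨L, hL, hL'⟩ := hρ.le
  have hpart : ∀ s : Set ℕ, AnalyticSet {x | ∃ y : ℕ → ℕ, y 0 ∈ s ∧ ((x, y), (x₀, y₀)) ∈ L} :=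
    fun s => analytic_exists (p := fun x (y : ℕ → ℕ) => y 0 ∈ s ∧ ((x, y), (x₀, y₀)) ∈ L) <|
      analytic_inter (hclopen s).analyticSet
        (hL.preimage (f := fun q : X × (ℕ → ℕ) => (q, (x₀, y₀))) (by fun_prop))
  have hm0 := hVm _ (analytic_baire (hpart {0})) <| .inl <| by
    rintro x ⟨y, hy, hxy⟩
    exact (hAD x y ((hL' _ hy₀ _).1 hxy).1).2 hy
  have hm1 := hVm _ (analytic_baire (hpart {0}ᶜ)) <| .inr <| by
    rintro x ⟨y, hy, hxy⟩ hx
    exact hy ((hAD x y ((hL' _ hy₀ _).1 hxy).1).1 hx)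
  refine (hm0.union hm1).mono ?_
  rintro x ⟨hx, hxV⟩
  obtain ⟨y, hy, hyx⟩ := exists_minNorm ρ (htot x)
  have hxL : ((x, y), (x₀, y₀)) ∈ L := (hL' _ hy₀ _).2 ⟨hy, by rw [hyx, hyx₀]; exact hx⟩
  by_cases h : y 0 = 0
  · exact .inl ⟨⟨y, h, hxL⟩, hxV⟩
  · exact .inr ⟨⟨y, h, hxL⟩, hxV⟩

lemma not_countable_cantor : ¬ Countable (ℕ → Bool) := by
  intro h2
  have h3 : Cardinal.mk (ℕ → Bool) ≤ Cardinal.aleph0 := Cardinal.mk_le_aleph0_iff.2 h2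
  rw [← Cardinal.power_def, Cardinal.mk_bool, Cardinal.mk_nat, Cardinal.two_power_aleph0] at h3
  exact absurd h3 (not_le.2 Cardinal.aleph0_lt_continuum)

lemma not_countable_perfect {P : Set ℝ} (hP : Perfect P) (hne : P.Nonempty) : ¬ P.Countable := by
  intro hc
  obtain ⟨f, hf, -, hinj⟩ := hP.exists_nat_bool_injection hne
  have h1 : (range f).Countable := hc.mono hf
  have := h1.to_subtype
  exact not_countable_cantor (rangeFactorization_injective.2 hinj).countable

/-- The failure of the Baire property yields, by one application of the perfect set property,
a good well-ordering of the reals. -/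
lemma exists_injective_goodNorm (h : PerfectProp) {A : Set (ℝ × ℝ)} (hA : Delta12 A)
    (hB : ¬ BaireMeasurableSet A) :
    ∃ ψ : ℝ → Ordinal.{0}, GoodNorm ψ ∧ Function.Injective ψ := by
  obtain ⟨D, ρ, V, hD, hρ, htot, hV, hVne, hm⟩ := exists_meager_norm hA hB
  obtain ⟨f, hf, hfo, hfm⟩ := exists_plane_map
  have hφ := goodNorm_minNorm hD hρ htot
  set φ := minNorm D ρ
  have hBm : MeasurableSet (f ⁻¹' V) := hf hV.measurableSet
  have hBn : ¬ IsMeagre (f ⁻¹' V) := by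
    obtain ⟨U, hU, hUne, hUV⟩ := hfo V hV hVne
    exact fun hmV => not_isMeagre_isOpen hU hUne (hmV.mono hUV)
  have hfst : Measurable fun p : ℝ × ℝ => (f p.1, f p.2) := by fun_prop
  have hE : Del fun p : ℝ × ℝ => (p.1 ∈ f ⁻¹' V ∧ p.2 ∈ f ⁻¹' V) ∧
      (φ (f p.1) ≤ φ (f p.2) ∧ φ (f p.2) ≤ φ (f p.1)) := by
    refine ((Del.of_measurable (hBm.preimage measurable_fst)).and
      (Del.of_measurable (hBm.preimage measurable_snd))).and ?_
    exact (hφ.del_le.comp hfst).and (hφ.del_le.comp (measurable_swap.comp hfst))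
  obtain ⟨P, hPB, hP, hPne, hPE⟩ := h _ hBm hBn
    {p | (p.1 ∈ f ⁻¹' V ∧ p.2 ∈ f ⁻¹' V) ∧ (φ (f p.1) ≤ φ (f p.2) ∧ φ (f p.2) ≤ φ (f p.1))}
    ⟨fun p hp => hp.1, fun x hx => ⟨⟨hx, hx⟩, le_rfl, le_rfl⟩,
      fun x y hxy => ⟨hxy.1.symm, hxy.2.symm⟩,
      fun x y z hxy hyz => ⟨⟨hxy.1.1, hyz.1.2⟩, hxy.2.1.trans hyz.2.1, hyz.2.2.trans hxy.2.2⟩⟩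
    hE (fun x hx => (hfm _ (hm (f x))).mono fun y hy => (⟨hy.2.2, hy.1.2⟩ : f y ∈ _ ∩ V))
  have hPc : ¬ Countable P := fun hc => not_countable_perfect hP hPne hc
  have : StandardBorelSpace P := hP.closed.measurableSet.standardBorel
  let g : ℝ ≃ᵐ P := PolishSpace.measurableEquivOfNotCountable
    (fun hc => not_countable (α := ℝ) hc) hPc
  let k : ℝ → ℝ × ℝ := fun x => f (g x)
  have hk : Measurable k := hf.comp (measurable_subtype_coe.comp g.measurable)
  have hk' : Measurable fun q : ℝ × (ℕ → ℕ) => (k q.1, q.2) := by fun_prop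
  have hψ := goodNorm_minNorm (D := (fun q : ℝ × (ℕ → ℕ) => (k q.1, q.2)) ⁻¹' D)
    (analytic_preimage hD hk') (hρ.comp hk') fun x => htot (k x)
  refine ⟨_, hψ, fun x y hxy => ?_⟩
  have hxy' : φ (f (g x)) = φ (f (g y)) := hxy
  by_contra hne
  refine hPE _ (g x).2 _ (g y).2 (fun h => hne (g.injective (Subtype.ext h)))
    ⟨⟨hPB (g x).2, hPB (g y).2⟩, hxy'.le, hxy'.ge⟩

end InjectiveNorm

/-! ### Coding perfect sets, and a thin relation with countable classes -/

section Closed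

/-- `d` enumerates a set without isolated points; its closure is then perfect. -/
def Perf (d : ℕ → ℝ) : Prop := ∀ n (k : ℕ), ∃ m, d m ≠ d n ∧ |d m - d n| < 1 / (k + 1)

/-- `x` lies in the closure of the range of `d`. -/
def InCl (d : ℕ → ℝ) (x : ℝ) : Prop := ∀ k : ℕ, ∃ m, |d m - x| < 1 / (k + 1)

lemma inCl_iff {d : ℕ → ℝ} {x : ℝ} : InCl d x ↔ x ∈ closure (range d) := by
  rw [Metric.mem_closure_iff]
  constructor
  · intro h ε hε
    obtain ⟨k, hk⟩ := exists_nat_one_div_lt hε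
    obtain ⟨m, hm⟩ := h k
    refine ⟨d m, mem_range_self m, ?_⟩
    rw [dist_comm, Real.dist_eq]
    exact hm.trans hk
  · intro h k
    obtain ⟨_, ⟨m, rfl⟩, hm⟩ := h (1 / (k + 1)) (by positivity)
    rw [dist_comm, Real.dist_eq] at hm
    exact ⟨m, hm⟩

lemma measurableSet_perf : MeasurableSet {d : ℕ → ℝ | Perf d} := by
  have : {d : ℕ → ℝ | Perf d} =
      ⋂ n, ⋂ k : ℕ, ⋃ m, {d : ℕ → ℝ | d m ≠ d n} ∩ {d : ℕ → ℝ | |d m - d n| < 1 / (k + 1)} := by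
    ext; simp [Perf]
  rw [this]
  refine .iInter fun n => .iInter fun k => .iUnion fun m => .inter ?_ ?_
  · exact (measurableSet_eq_fun (by fun_prop) (by fun_prop)).compl
  · exact measurableSet_lt (by fun_prop) measurable_const

lemma measurableSet_inCl : MeasurableSet {q : (ℕ → ℝ) × ℝ | InCl q.1 q.2} := by
  have : {q : (ℕ → ℝ) × ℝ | InCl q.1 q.2} =
      ⋂ k : ℕ, ⋃ m, {q : (ℕ → ℝ) × ℝ | |q.1 m - q.2| < 1 / (k + 1)} := by
    ext; simp [InCl]
  rw [this]
  refine .iInter fun k => .iUnion fun m => measurableSet_lt ?_ measurable_const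
  fun_prop

lemma Perf.not_countable {d : ℕ → ℝ} (hd : Perf d) : ¬ (closure (range d)).Countable := by
  refine not_countable_perfect (Preperfect.perfect_closure ?_) (range_nonempty d).closure
  rw [preperfect_iff_nhds]
  rintro _ ⟨n, rfl⟩ U hU
  obtain ⟨ε, hε, hball⟩ := Metric.mem_nhds_iff.1 hU
  obtain ⟨k, hk⟩ := exists_nat_one_div_lt hε
  obtain ⟨m, hm, hmk⟩ := hd n k
  exact ⟨d m, ⟨hball (by rw [Metric.mem_ball, Real.dist_eq]; exact hmk.trans hk),
    mem_range_self m⟩, hm⟩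

/-- Every nonempty perfect set contains one that is coded by a sequence. -/
lemma exists_perf {P : Set ℝ} (hP : Perfect P) (hne : P.Nonempty) :
    ∃ d, Perf d ∧ ∀ x, InCl d x → x ∈ P := by
  have : Nonempty P := hne.to_subtype
  let e := TopologicalSpace.denseSeq P
  refine ⟨fun n => e n, fun n k => ?_, fun x hx => ?_⟩
  · obtain ⟨y, ⟨hyU, hyP⟩, hy⟩ := preperfect_iff_nhds.1 hP.acc (e n) (e n).2
      (Metric.ball (e n : ℝ) (1 / (k + 1))) (Metric.ball_mem_nhds _ (by positivity))
    have hopen : IsOpen {p : P | (p : ℝ) ≠ e n ∧ (p : ℝ) ∈ Metric.ball (e n : ℝ) (1 / (k + 1))} :=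
      (isOpen_ne.preimage continuous_subtype_val).inter
        (Metric.isOpen_ball.preimage continuous_subtype_val)
    obtain ⟨_, ⟨h1, h2⟩, m, rfl⟩ := (TopologicalSpace.denseRange_denseSeq P).inter_open_nonempty
      _ hopen ⟨⟨y, hyP⟩, hy, hyU⟩
    exact ⟨m, h1, by rwa [Metric.mem_ball, Real.dist_eq] at h2⟩
  · rw [inCl_iff] at hx
    refine closure_minimal ?_ hP.closed hx
    rintro _ ⟨n, rfl⟩
    exact (e n).2

lemma countable_segment {ψ : ℝ → Ordinal.{0}} (hinj : Function.Injective ψ) {o : Ordinal.{0}}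
    (ho : o < Ordinal.omega 1) : {z | ψ z < o}.Countable := by
  have h1 : (Iio o).Countable := by
    rw [← Cardinal.le_aleph0_iff_set_countable, Cardinal.mk_Iio_ordinal,
      Cardinal.lift_le_aleph0]
    rw [Cardinal.lt_omega_iff_card_lt, ← Cardinal.succ_aleph0, Order.lt_succ_iff] at ho
    exact ho
  exact h1.preimage hinj

lemma Set.Countable.isMeagre_real {s : Set ℝ} (hs : s.Countable) : IsMeagre s := by
  have := isMeagre_biUnion (f := fun x : ℝ => {x}) hs fun x _ => by
    refine IsNowhereDense.isMeagre ?_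
    rw [IsNowhereDense, closure_singleton, interior_singleton]
  simpa using this

variable {ψ : ℝ → Ordinal.{0}} {κ : ℝ → ℕ → ℝ}

/-- The point `r` is closed if each perfect set with a code below `r` has two points below `r`
that come no earlier than the code. -/
def ClosedPt (ψ : ℝ → Ordinal.{0}) (κ : ℝ → ℕ → ℝ) (r : ℝ) : Prop :=
  ∀ c, ψ c < ψ r → Perf (κ c) → ∃ x x', x ≠ x' ∧ (InCl (κ c) x ∧ InCl (κ c) x') ∧
    (ψ c ≤ ψ x ∧ ψ x < ψ r) ∧ (ψ c ≤ ψ x' ∧ ψ x' < ψ r)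

/-- Closed points are cofinal, by a closing-off argument of length `ω`: a perfect set is uncountable,
so two of its points avoid any given countable initial segment. -/
lemma exists_closedPt (hω : ∀ x, ψ x < Ordinal.omega 1) (hinj : Function.Injective ψ) (x₀ : ℝ) :
    ∃ r, ClosedPt ψ κ r ∧ ψ x₀ < ψ r := by
  have hlim : Order.IsSuccLimit (Ordinal.omega 1) := Cardinal.isSuccLimit_omega 1
  have hstep : ∀ c, ∃ o < Ordinal.omega 1, Perf (κ c) → ∃ x x', x ≠ x' ∧
      (InCl (κ c) x ∧ InCl (κ c) x') ∧ (ψ c ≤ ψ x ∧ ψ x < o) ∧ (ψ c ≤ ψ x' ∧ ψ x' < o) := by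
    intro c
    by_cases hc : Perf (κ c)
    · have h1 : ¬ (closure (range (κ c)) \ {z | ψ z < ψ c}).Countable := fun h =>
        hc.not_countable (((countable_segment hinj (hω c)).union h).mono fun z hz => by
          by_cases hz' : ψ z < ψ c
          · exact .inl hz'
          · exact .inr ⟨hz, hz'⟩)
      have h2 : (closure (range (κ c)) \ {z | ψ z < ψ c}).Nontrivial := by
        rw [← not_subsingleton_iff]
        exact fun h => h1 h.countable
      obtain ⟨x, hx, x', hx', hne⟩ := h2
      refine ⟨Order.succ (max (ψ x) (ψ x')), hlim.succ_lt (max_lt (hω x) (hω x')), fun _ =>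
        ⟨x, x', hne, ⟨inCl_iff.2 hx.1, inCl_iff.2 hx'.1⟩, ⟨not_lt.1 hx.2, ?_⟩, not_lt.1 hx'.2, ?_⟩⟩
      · exact Order.lt_succ_iff.2 (le_max_left _ _)
      · exact Order.lt_succ_iff.2 (le_max_right _ _)
    · exact ⟨0, hlim.bot_lt, fun h => absurd h hc⟩
  choose m hmω hm using hstep
  let β : ℕ → Ordinal.{0} := fun n =>
    Nat.rec (Order.succ (ψ x₀)) (fun _ b => ⨆ c : {c | ψ c < b}, m c) n
  have hβ : ∀ n, β n < Ordinal.omega 1 := by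
    intro n
    induction n with
    | zero => exact hlim.succ_lt (hω x₀)
    | succ n ih =>
      have : Countable {c | ψ c < β n} := (countable_segment hinj ih).to_subtype
      exact Ordinal.iSup_lt_omega_one fun c => hmω c
  have hsup : ⨆ n, β n < Ordinal.omega 1 := Ordinal.iSup_lt_omega_one hβ
  have hex : ∃ r, ⨆ n, β n ≤ ψ r := by
    by_contra hne
    have : {z | ψ z < ⨆ n, β n} = univ := by
      ext z
      simpa using not_le.1 fun h => hne ⟨z, h⟩
    exact Cardinal.not_countable_real (this ▸ countable_segment hinj hsup)
  obtain ⟨r, hr, hmin⟩ := (InvImage.wf ψ (wellFounded_lt (α := Ordinal.{0}))).has_min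
    {r | ⨆ n, β n ≤ ψ r} hex
  refine ⟨r, fun c hc hcP => ?_, ?_⟩
  · have hc' : ψ c < ⨆ n, β n := not_le.1 fun h => hmin c h hc
    obtain ⟨n, hn⟩ := (Ordinal.lt_iSup_iff).1 hc'
    have hmr : m c ≤ ψ r := by
      refine le_trans ?_ ((Ordinal.le_iSup β (n + 1)).trans hr)
      exact Ordinal.le_iSup (fun c : {c | ψ c < β n} => m c) ⟨c, hn⟩
    obtain ⟨x, x', hne, hcl, hx, hx'⟩ := hm c hcP
    exact ⟨x, x', hne, hcl, ⟨hx.1, hx.2.trans_le hmr⟩, hx'.1, hx'.2.trans_le hmr⟩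
  · exact (Order.lt_succ (ψ x₀)).trans_le ((Ordinal.le_iSup β 0).trans hr)

/-- `ClosedPt` for the `n`-th term of a sequence, with all quantifiers restricted to the terms
of the sequence. -/
def ClosedSeq (ψ : ℝ → Ordinal.{0}) (κ : ℝ → ℕ → ℝ) (s : ℕ → ℝ) (n : ℕ) : Prop :=
  ∀ i, ψ (s i) < ψ (s n) → Perf (κ (s i)) → ∃ j l, s j ≠ s l ∧
    (InCl (κ (s i)) (s j) ∧ InCl (κ (s i)) (s l)) ∧
    (ψ (s i) ≤ ψ (s j) ∧ ψ (s j) < ψ (s n)) ∧ (ψ (s i) ≤ ψ (s l) ∧ ψ (s l) < ψ (s n))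

lemma closedSeq_iff {s : ℕ → ℝ} {n : ℕ} (hs : ∀ z, ψ z ≤ ψ (s n) → ∃ i, s i = z) :
    ClosedSeq ψ κ s n ↔ ClosedPt ψ κ (s n) := by
  constructor
  · intro h c hc hcP
    obtain ⟨i, rfl⟩ := hs c hc.le
    obtain ⟨j, l, h⟩ := h i hc hcP
    exact ⟨s j, s l, h⟩
  · intro h i hi hiP
    obtain ⟨x, x', hne, hcl, hx, hx'⟩ := h (s i) hi hiP
    obtain ⟨j, rfl⟩ := hs x hx.2.le
    obtain ⟨l, rfl⟩ := hs x' hx'.2.le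
    exact ⟨j, l, hne, hcl, hx, hx'⟩

lemma del_closedSeq (hψ : GoodNorm ψ) (hκ : Measurable κ) (n : ℕ) :
    Del fun s : ℕ → ℝ => ClosedSeq ψ κ s n := by
  have hlt : ∀ i j : ℕ, Del fun s : ℕ → ℝ => ψ (s i) < ψ (s j) := fun i j =>
    hψ.del_lt.comp (f := fun s : ℕ → ℝ => (s i, s j)) (by fun_prop)
  have hle : ∀ i j : ℕ, Del fun s : ℕ → ℝ => ψ (s i) ≤ ψ (s j) := fun i j =>
    hψ.del_le.comp (f := fun s : ℕ → ℝ => (s i, s j)) (by fun_prop)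
  have hcl : ∀ i j : ℕ, Del fun s : ℕ → ℝ => InCl (κ (s i)) (s j) := fun i j =>
    .of_measurable <| measurableSet_inCl.preimage
      (f := fun s : ℕ → ℝ => (κ (s i), s j)) (by fun_prop)
  have hP : ∀ i : ℕ, Del fun s : ℕ → ℝ => Perf (κ (s i)) := fun i =>
    .of_measurable <| measurableSet_perf.preimage (f := fun s : ℕ → ℝ => κ (s i)) (by fun_prop)
  have hne : ∀ i j : ℕ, Del fun s : ℕ → ℝ => s i ≠ s j := fun i j =>
    .of_measurable (measurableSet_eq_fun (by fun_prop) (by fun_prop)).compl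
  exact .forall_countable fun i => (hlt i n).imp <| (hP i).imp <| .exists_countable fun j =>
    .exists_countable fun l => (hne j l).and <| ((hcl i j).and (hcl i l)).and <|
      ((hle i j).and (hlt j n)).and ((hle i l).and (hlt l n))

/-- Two points are equivalent if no closed point separates them. -/
def BlockRel (ψ : ℝ → Ordinal.{0}) (κ : ℝ → ℕ → ℝ) (x y : ℝ) : Prop :=
  ∀ r, ClosedPt ψ κ r → (ψ r ≤ ψ x ↔ ψ r ≤ ψ y)

/-- A sequence enumerating the initial segments below `x` and `y` decides their equivalence by
quantifiers over the natural numbers. -/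
lemma blockRel_iff {x y : ℝ} {s : ℕ → ℝ} (hx : ∀ z, ψ z ≤ ψ x → ∃ n, s n = z)
    (hy : ∀ z, ψ z ≤ ψ y → ∃ n, s n = z) :
    BlockRel ψ κ x y ↔ ∀ n, ClosedSeq ψ κ s n → (ψ (s n) ≤ ψ x ↔ ψ (s n) ≤ ψ y) := by
  have key : ∀ r, ψ r ≤ ψ x ∨ ψ r ≤ ψ y → ∀ z, ψ z ≤ ψ r → ∃ i, s i = z := by
    rintro r (h | h) z hz
    · exact hx z (hz.trans h)
    · exact hy z (hz.trans h)
  constructor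
  · intro h n hn
    by_cases hr : ψ (s n) ≤ ψ x ∨ ψ (s n) ≤ ψ y
    · exact h _ ((closedSeq_iff (key _ hr)).1 hn)
    · exact iff_of_false (fun h => hr (.inl h)) (fun h => hr (.inr h))
  · intro h r hr
    by_cases hrxy : ψ r ≤ ψ x ∨ ψ r ≤ ψ y
    · obtain ⟨n, rfl⟩ := key r hrxy r le_rfl
      exact h n ((closedSeq_iff (key _ hrxy)).2 hr)
    · exact iff_of_false (fun h => hrxy (.inl h)) (fun h => hrxy (.inr h))

lemma del_blockRel (hψ : GoodNorm ψ) (hinj : Function.Injective ψ) (hκ : Measurable κ) :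
    Del fun p : ℝ × ℝ => BlockRel ψ κ p.1 p.2 := by
  have hgood : Sig fun q : (ℝ × ℝ) × (ℕ → ℝ) => (∀ z, ψ z ≤ ψ q.1.1 → ∃ n, q.2 n = z) ∧
      ∀ z, ψ z ≤ ψ q.1.2 → ∃ n, q.2 n = z :=
    (hψ.good.comp (f := fun q : (ℝ × ℝ) × (ℕ → ℝ) => (q.1.1, q.2)) (by fun_prop)).and
      (hψ.good.comp (f := fun q : (ℝ × ℝ) × (ℕ → ℝ) => (q.1.2, q.2)) (by fun_prop))
  have hΦ : Del fun q : (ℝ × ℝ) × (ℕ → ℝ) =>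
      ∀ n, ClosedSeq ψ κ q.2 n → (ψ (q.2 n) ≤ ψ q.1.1 ↔ ψ (q.2 n) ≤ ψ q.1.2) :=
    .forall_countable fun n => ((del_closedSeq hψ hκ n).comp measurable_snd).imp <|
      (hψ.del_le.comp (f := fun q : (ℝ × ℝ) × (ℕ → ℝ) => (q.2 n, q.1.1)) (by fun_prop)).iff
      (hψ.del_le.comp (f := fun q : (ℝ × ℝ) × (ℕ → ℝ) => (q.2 n, q.1.2)) (by fun_prop))
  have hex : ∀ p : ℝ × ℝ, ∃ s : ℕ → ℝ, (∀ z, ψ z ≤ ψ p.1 → ∃ n, s n = z) ∧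
      ∀ z, ψ z ≤ ψ p.2 → ∃ n, s n = z := by
    intro p
    have hlim : Order.IsSuccLimit (Ordinal.omega 1) := Cardinal.isSuccLimit_omega 1
    have hc := countable_segment hinj
      (hlim.succ_lt (max_lt (hψ.lt_omega p.1) (hψ.lt_omega p.2)))
    obtain ⟨s, hs⟩ := hc.exists_eq_range
      ⟨p.1, mem_ofPred_eq ▸ Order.lt_succ_iff.2 (le_max_left (ψ p.1) (ψ p.2))⟩
    have hs' : ∀ z, ψ z ≤ max (ψ p.1) (ψ p.2) → ∃ n, s n = z := fun z hz => by
      have : z ∈ range s := hs ▸ Order.lt_succ_iff.2 hz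
      exact this
    exact ⟨s, fun z hz => hs' z (hz.trans (le_max_left _ _)),
      fun z hz => hs' z (hz.trans (le_max_right _ _))⟩
  refine .mk ?_ ?_
  · refine (Sig.exists_snd (hgood.and hΦ.sig)).congr fun p => ⟨?_, fun h => ?_⟩
    · rintro ⟨s, ⟨h1, h2⟩, h3⟩
      exact (blockRel_iff h1 h2).2 h3
    · obtain ⟨s, h1, h2⟩ := hex p
      exact ⟨s, ⟨h1, h2⟩, (blockRel_iff h1 h2).1 h⟩
  · refine (Sig.exists_snd (hgood.and hΦ.not.sig)).congr fun p => ⟨?_, fun h => ?_⟩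
    · rintro ⟨s, ⟨h1, h2⟩, h3⟩
      exact fun h => h3 ((blockRel_iff h1 h2).1 h)
    · obtain ⟨s, h1, h2⟩ := hex p
      exact ⟨s, ⟨h1, h2⟩, fun h' => h ((blockRel_iff h1 h2).2 h')⟩

/-- A good well-ordering of the reals refutes the perfect set property: the blocks between
consecutive closed points are countable, but every perfect set meets some block twice. -/
lemma not_perfectProp (hψ : GoodNorm ψ) (hinj : Function.Injective ψ) : ¬ PerfectProp := by
  intro h
  let κ : ℝ ≃ᵐ (ℕ → ℝ) := PolishSpace.measurableEquivOfNotCountable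
    (fun hc => not_countable (α := ℝ) hc) (fun hc => by
      have : Function.Injective fun (x : ℝ) (_ : ℕ) => x := fun x y hxy => congrFun hxy 0
      exact not_countable (α := ℝ) this.countable)
  obtain ⟨P, -, hP, hPne, hPE⟩ := h univ .univ
    (not_isMeagre_isOpen isOpen_univ univ_nonempty) {p | BlockRel ψ κ p.1 p.2}
    ⟨fun p _ => ⟨trivial, trivial⟩, fun x _ r _ => Iff.rfl, fun x y hxy r hr => (hxy r hr).symm,
      fun x y z hxy hyz r hr => (hxy r hr).trans (hyz r hr)⟩
    (del_blockRel hψ hinj κ.measurable) (fun x _ => by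
      obtain ⟨r, hr, hxr⟩ := exists_closedPt (κ := κ) hψ.lt_omega hinj x
      refine ((countable_segment hinj (hψ.lt_omega r)).mono fun y hy => ?_).isMeagre_real
      exact not_le.1 fun hle => not_le.2 hxr ((hy r hr).2 hle))
  obtain ⟨d, hd, hdP⟩ := exists_perf hP hPne
  obtain ⟨c, rfl⟩ := κ.surjective d
  obtain ⟨r, ⟨hr, hcr⟩, hmin⟩ := (InvImage.wf ψ (wellFounded_lt (α := Ordinal.{0}))).has_min
    {r | ClosedPt ψ κ r ∧ ψ c < ψ r} (exists_closedPt hψ.lt_omega hinj c)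
  obtain ⟨x, x', hne, ⟨hx, hx'⟩, ⟨h1, h2⟩, h3, h4⟩ := hr c hcr hd
  refine hPE x (hdP x hx) x' (hdP x' hx') hne fun q hq => ?_
  have key : ∀ y, ψ y < ψ r → ψ q ≤ ψ y → ψ q ≤ ψ c := fun y hy hqy =>
    not_lt.1 fun hlt => hmin q ⟨hq, hlt⟩ (hqy.trans_lt hy)
  exact ⟨fun hqx => (key x h2 hqx).trans h3, fun hqx => (key x' h4 hqx).trans h1⟩

/-- The implication from the perfect set property to the Baire property. -/
lemma baire_of_perfectProp (h : PerfectProp) {A : Set (ℝ × ℝ)} (hA : Delta12 A) :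
    HasBaireProp A := by
  by_contra hB
  rw [hasBaireProp_iff] at hB
  obtain ⟨ψ, hψ, hinj⟩ := exists_injective_goodNorm h hA hB
  exact not_perfectProp hψ hinj h

end Closed

/-! ### The theorems of Kuratowski-Ulam and Mycielski -/

section Mycielski

open Topology Filter

/-- The Kuratowski-Ulam theorem: almost all vertical sections of a meager set are meager. -/
lemma kuratowski_ulam {X Y : Type} [TopologicalSpace X] [TopologicalSpace Y]
    [SecondCountableTopology Y] {M : Set (X × Y)} (hM : IsMeagre M) :
    ∀ᶠ x in residual X, IsMeagre {y | (x, y) ∈ M} := by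
  obtain ⟨S, hSo, hSd, hSc, hSM⟩ := mem_residual_iff.1 hM
  have h1 : ∀ O ∈ S, ∀ᶠ x in residual X, Dense {y | (x, y) ∈ O} := by
    intro O hO
    have h2 : ∀ b ∈ TopologicalSpace.countableBasis Y,
        ∀ᶠ x in residual X, ∃ y ∈ b, (x, y) ∈ O := by
      intro b hb
      have hbo := TopologicalSpace.isOpen_of_mem_countableBasis hb
      have hbn := TopologicalSpace.nonempty_of_mem_countableBasis hb
      have he : {x | ∃ y ∈ b, (x, y) ∈ O} = Prod.fst '' (O ∩ univ ×ˢ b) := by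
        ext x
        simp [and_comm]
      refine residual_of_dense_open (s := {x | ∃ y ∈ b, (x, y) ∈ O}) ?_ ?_
      · rw [he]
        exact isOpenMap_fst _ ((hSo O hO).inter (isOpen_univ.prod hbo))
      · rw [dense_iff_inter_open]
        intro U hU hUn
        obtain ⟨⟨x, y⟩, ⟨hx, hy⟩, hxy⟩ :=
          (hSd O hO).inter_open_nonempty _ (hU.prod hbo) (hUn.prod hbn)
        exact ⟨x, hx, y, hy, hxy⟩
    have h3 := (eventually_countable_ball (TopologicalSpace.countable_countableBasis Y)).2 h2
    filter_upwards [h3] with x hx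
    exact (TopologicalSpace.isBasis_countableBasis Y).dense_iff.2 fun b hb _ =>
      (hx b hb).imp fun y hy => hy
  filter_upwards [(eventually_countable_ball hSc).2 h1] with x hx
  have h4 : ∀ᶠ y in residual Y, ∀ O ∈ S, (x, y) ∈ O :=
    (eventually_countable_ball hSc).2 fun O hO => residual_of_dense_open
      ((hSo O hO).preimage (f := fun y => (x, y)) (by fun_prop)) (hx O hO)
  refine mem_of_superset h4 fun y hy => ?_
  exact hSM (mem_sInter.2 hy)

/-- A set with the Baire property, all of whose vertical sections are meager, is meager. -/
lemma isMeagre_of_sections {E : Set (ℝ × ℝ)} (hE : BaireMeasurableSet E)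
    (hs : ∀ x, IsMeagre {y | (x, y) ∈ E}) : IsMeagre E := by
  by_contra hne
  obtain ⟨O, hO, hOn, hm⟩ := hE.exists_isOpen hne
  obtain ⟨⟨x₀, y₀⟩, h₀⟩ := nonempty_of_not_isMeagre hOn
  obtain ⟨U, V, hU, hV, hxU, hyV, hUV⟩ := isOpen_prod_iff.1 hO x₀ y₀ h₀
  obtain ⟨x, hxU, hx⟩ := (dense_of_mem_residual (kuratowski_ulam hm)).inter_open_nonempty U hU
    ⟨x₀, hxU⟩
  refine not_isMeagre_isOpen hV ⟨y₀, hyV⟩ (((hs x).union hx).mono fun y hy => ?_)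
  by_cases hyE : (x, y) ∈ E
  · exact .inl hyE
  · exact .inr ⟨hUV ⟨hxU, hy⟩, hyE⟩

/-- Restriction of a binary sequence to its first `k` terms. -/
def cut (k : ℕ) (a : ℕ → Bool) : Fin k → Bool := fun i => a i

lemma continuous_cut (k : ℕ) : Continuous (cut k) := by unfold cut; fun_prop

lemma cut_mono {k l : ℕ} (hkl : k ≤ l) {a b : ℕ → Bool} (h : cut l a = cut l b) :
    cut k a = cut k b :=
  funext fun i => congrFun h ⟨i, i.2.trans_le hkl⟩

/-- Uniform continuity on the Cantor space, expressed by initial segments. -/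
lemma exists_cut_dist {X : Type} [MetricSpace X] (g : C(ℕ → Bool, X)) {ε : ℝ} (hε : 0 < ε) :
    ∃ l, ∀ a b, cut l a = cut l b → dist (g a) (g b) < ε := by
  let U : ℕ → Set (ℕ → Bool) := fun l =>
    cut l ⁻¹' {s | ∀ b c, cut l b = s → cut l c = s → dist (g b) (g c) < ε}
  have hU : ∀ l, IsOpen (U l) := fun l => (isOpen_discrete _).preimage (continuous_cut l)
  have hmono : Monotone U := fun k l hkl a ha b c hb hc =>
    ha b c (cut_mono hkl hb) (cut_mono hkl hc)
  have hcov : (univ : Set (ℕ → Bool)) ⊆ ⋃ l, U l := by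
    intro a _
    obtain ⟨s, ⟨x, n, rfl⟩, has, hsV⟩ := (PiNat.isTopologicalBasis_cylinders
      (E := fun _ => Bool)).exists_subset_of_mem_open (a := a)
      (u := g ⁻¹' Metric.ball (g a) (ε / 2)) (Metric.mem_ball_self (by positivity))
      (Metric.isOpen_ball.preimage g.continuous)
    have key : ∀ b, cut n b = cut n a → dist (g b) (g a) < ε / 2 := fun b hb =>
      hsV fun i hi => (congrFun hb ⟨i, hi⟩).trans (has i hi)
    refine mem_iUnion.2 ⟨n, fun b c hb hc => ?_⟩
    have h1 := dist_triangle_right (g b) (g c) (g a)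
    linarith [key b hb, key c hc]
  obtain ⟨l, hl⟩ := isCompact_univ.elim_directed_cover U hU hcov hmono.directed_le
  exact ⟨l, fun a b hab => hl (mem_univ b) a b hab rfl⟩

/-- Finitely many points can be moved slightly so that distinct ones satisfy an open dense
relation. -/
lemma exists_generic_tuple {X S : Type} [MetricSpace X] [CompleteSpace X] [Finite S]
    {W : Set (X × X)} (hW : IsOpen W) (hWd : Dense W) (x : S → X) {ε : ℝ} (hε : 0 < ε) :
    ∃ z : S → X, (∀ s, dist (z s) (x s) < ε) ∧ ∀ s t, s ≠ t → (z s, z t) ∈ W := by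
  classical
  have := Fintype.ofFinite S
  let O : {p : S × S // p.1 ≠ p.2} → Set (S → X) := fun p => {z | (z p.1.1, z p.1.2) ∈ W}
  have hO : ∀ p, IsOpen (O p) := fun p =>
    hW.preimage (f := fun z : S → X => (z p.1.1, z p.1.2)) (by fun_prop)
  have hOd : ∀ p, Dense (O p) := by
    rintro ⟨⟨s, t⟩, hst⟩
    rw [Metric.dense_iff]
    intro z r hr
    obtain ⟨⟨u, v⟩, huv, hW⟩ := Metric.dense_iff.1 hWd (z s, z t) r hr
    rw [Metric.mem_ball, Prod.dist_eq, max_lt_iff] at huv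
    refine ⟨Function.update (Function.update z s u) t v, ?_, ?_⟩
    · rw [Metric.mem_ball, dist_pi_lt_iff hr]
      intro i
      by_cases hit : i = t
      · subst hit; simpa using huv.2
      · by_cases his : i = s
        · subst his; simpa [hit] using huv.1
        · simpa [hit, his] using hr
    · simpa [O, Function.update_of_ne hst] using hW
  obtain ⟨z, hz, hzO⟩ := Metric.dense_iff.1 (dense_iInter_of_isOpen hO hOd) x ε hε
  rw [Metric.mem_ball, dist_pi_lt_iff hε] at hz
  exact ⟨z, hz, fun s t hst => mem_iInter.1 hzO ⟨(s, t), hst⟩⟩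

/-- Mycielski's theorem for a binary relation: a generic continuous map on the Cantor space
sends distinct points to related points. -/
lemma exists_generic_map {X : Type} [TopologicalSpace X] [PolishSpace X] [Nonempty X]
    {R : Set (X × X)} (hR : R ∈ residual (X × X)) :
    ∃ g : C(ℕ → Bool, X), ∀ a b, a ≠ b → (g a, g b) ∈ R := by
  let := TopologicalSpace.upgradeIsCompletelyMetrizable X
  obtain ⟨S, hSo, hSd, hSc, hSR⟩ := mem_residual_iff.1 hR
  have := hSc.to_subtype
  let O : S × ℕ → Set C(ℕ → Bool, X) := fun p =>
    {g | ∀ a b, cut p.2 a ≠ cut p.2 b → (g a, g b) ∈ p.1.1}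
  have hO : ∀ p, IsOpen (O p) := by
    rintro ⟨⟨W, hW⟩, k⟩
    have hK : IsCompact {q : (ℕ → Bool) × (ℕ → Bool) | cut k q.1 ≠ cut k q.2} := by
      refine IsClosed.isCompact ?_
      exact (isClosed_discrete {q : (Fin k → Bool) × (Fin k → Bool) | q.1 ≠ q.2}).preimage
        (((continuous_cut k).comp continuous_fst).prodMk
          ((continuous_cut k).comp continuous_snd))
    have hc : Continuous fun g : C(ℕ → Bool, X) => (g.prodMap g) :=
      ContinuousMap.continuous_of_continuous_uncurry _ <| by
        change Continuous fun q : C(ℕ → Bool, X) × ((ℕ → Bool) × (ℕ → Bool)) =>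
          (q.1 q.2.1, q.1 q.2.2)
        fun_prop
    convert (ContinuousMap.isOpen_setOfPred_mapsTo hK (hSo W hW)).preimage hc using 1
    ext g
    exact ⟨fun h q hq => h q.1 q.2 hq, fun h a b hab => h (x := (a, b)) hab⟩
  -- Approximate `g` by a locally constant map and move its finitely many values.
  have hOd : ∀ p, Dense (O p) := by
    rintro ⟨⟨W, hW⟩, k⟩
    rw [Metric.dense_iff]
    intro g r hr
    obtain ⟨l, hl⟩ := exists_cut_dist g (half_pos hr)
    let pad : (Fin (max k l) → Bool) → ℕ → Bool :=
      fun s i => if h : i < max k l then s ⟨i, h⟩ else false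
    have hpad : ∀ s, cut (max k l) (pad s) = s := fun s => by
      funext i
      simp only [cut, pad, Fin.is_lt, dite_true]
    obtain ⟨z, hz, hzW⟩ := exists_generic_tuple (hSo W hW) (hSd W hW) (fun s => g (pad s))
      (half_pos hr)
    let g' : C(ℕ → Bool, X) :=
      ⟨fun a => z (cut (max k l) a), continuous_of_discreteTopology.comp (continuous_cut _)⟩
    refine ⟨g', ?_, fun a b hab => hzW _ _ fun h => hab (cut_mono (le_max_left k l) h)⟩
    rw [Metric.mem_ball, ContinuousMap.dist_lt_iff hr]
    intro a
    have h1 : dist (g (pad (cut (max k l) a))) (g a) < r / 2 :=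
      hl _ _ (cut_mono (le_max_right k l) (hpad _))
    have h2 : dist (g' a) (g (pad (cut (max k l) a))) < r / 2 := hz _
    linarith [dist_triangle (g' a) (g (pad (cut (max k l) a))) (g a)]
  have : Nonempty C(ℕ → Bool, X) := ⟨ContinuousMap.const _ (Classical.arbitrary X)⟩
  obtain ⟨g, hg⟩ := (dense_iInter_of_isOpen hO hOd).nonempty
  refine ⟨g, fun a b hab => hSR (mem_sInter.2 fun W hW => ?_)⟩
  obtain ⟨n, hn⟩ := Function.ne_iff.1 hab
  refine mem_iInter.1 hg (⟨W, hW⟩, n + 1) a b fun h => hn ?_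
  exact congrFun h ⟨n, n.lt_succ_self⟩

lemma isMeagre_diagonal : IsMeagre {p : ℝ × ℝ | p.1 = p.2} := by
  refine isMeagre_of_sections ?_ fun x => ?_
  · exact (isClosed_eq continuous_fst continuous_snd).measurableSet.baireMeasurableSet
  · refine Set.Countable.isMeagre_real ?_
    simp

/-- The implication from the Baire property to the perfect set property. -/
lemma perfectProp_of_baire (h : ∀ A : Set (ℝ × ℝ), Delta12 A → HasBaireProp A) :
    PerfectProp := by
  intro B hB hBn E hE hEd hEm
  have hEmeagre : IsMeagre E := by
    refine isMeagre_of_sections (hasBaireProp_iff.1 (h E hEd)) fun x => ?_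
    by_cases hx : x ∈ B
    · exact hEm x hx
    · have : {y | (x, y) ∈ E} = ∅ := by
        ext y
        simp only [mem_ofPred_eq, mem_empty_iff_false, iff_false]
        exact fun hxy => hx (hE.1 hxy).1
      rw [this]
      exact .empty
  obtain ⟨U, hU, hUn, hUB⟩ := hB.baireMeasurableSet.exists_isOpen hBn
  have : Nonempty U := (nonempty_of_not_isMeagre hUn).to_subtype
  have : PolishSpace U := hU.polishSpace
  let v : U × U → ℝ × ℝ := Prod.map Subtype.val Subtype.val
  have hv : Continuous v := continuous_subtype_val.prodMap continuous_subtype_val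
  have hvo : IsOpenMap v := hU.isOpenMap_subtype_val.prodMap hU.isOpenMap_subtype_val
  have hm : IsMeagre ((Prod.fst ⁻¹' (U \ B) ∪ Prod.snd ⁻¹' (U \ B)) ∪
      (E ∪ {p : ℝ × ℝ | p.1 = p.2})) :=
    ((hUB.preimage_of_isOpenMap continuous_fst isOpenMap_fst).union
      (hUB.preimage_of_isOpenMap continuous_snd isOpenMap_snd)).union
      (hEmeagre.union isMeagre_diagonal)
  obtain ⟨g, hg⟩ := exists_generic_map (hm.preimage_of_isOpenMap hv hvo)
  have hg' : ∀ a b, a ≠ b → (g a : ℝ) ∈ B ∧ ((g a : ℝ), (g b : ℝ)) ∉ E ∧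
      (g a : ℝ) ≠ g b := by
    intro a b hab
    have h1 : v (g a, g b) ∉ (Prod.fst ⁻¹' (U \ B) ∪ Prod.snd ⁻¹' (U \ B)) ∪
      (E ∪ {p : ℝ × ℝ | p.1 = p.2}) := hg a b hab
    refine ⟨?_, fun h => h1 (.inr (.inl h)), fun h => h1 (.inr (.inr h))⟩
    by_contra hB
    exact h1 (.inl (.inl ⟨(g a).2, hB⟩))
  let k : (ℕ → Bool) → ℝ := fun a => g a
  have hk : Continuous k := continuous_subtype_val.comp g.continuous
  have hkinj : Function.Injective k := fun a b hab => by
    by_contra hne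
    exact (hg' a b hne).2.2 hab
  have hkc : ¬ (range k).Countable := by
    intro hc
    have := hc.to_subtype
    exact not_countable_cantor (rangeFactorization_injective.2 hkinj).countable
  obtain ⟨P, hP, hPne, hPk⟩ := exists_perfect_nonempty_of_isClosed_of_not_countable
    (isCompact_range hk).isClosed hkc
  refine ⟨P, fun x hx => ?_, hP, hPne, fun x hx y hy hxy => ?_⟩
  · obtain ⟨a, rfl⟩ := hPk hx
    obtain ⟨b, hb⟩ := exists_ne a
    exact (hg' a b hb.symm).1
  · obtain ⟨a, rfl⟩ := hPk hx
    obtain ⟨b, rfl⟩ := hPk hy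
    exact (hg' a b fun hab => hxy (congrArg k hab)).2.1

end Mycielski

theorem psp_meager_delta12_iff_delta12_baire :
    (∀ B : Set ℝ, MeasurableSet B → ¬ IsMeagre B →
      ∀ E : Set (ℝ × ℝ), IsEquivOn B E → Delta12 E →
        (∀ x ∈ B, IsMeagre {y | (x, y) ∈ E}) →
        ∃ P : Set ℝ, P ⊆ B ∧ Perfect P ∧ P.Nonempty ∧
          ∀ x ∈ P, ∀ y ∈ P, x ≠ y → (x, y) ∉ E) ↔
    (∀ A : Set (ℝ × ℝ), Delta12 A → HasBaireProp A) :=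
  ⟨fun h _ hA => baire_of_perfectProp h hA, perfectProp_of_baire⟩
end

section
/- The following are equivalent: (1) for every Borel set B ⊆ ℝ of positive Lebesgue measure and every equivalence relation E on B which is a 𝚫¹₂ subset of ℝ × ℝ and all of whose equivalence classes are Lebesgue null, there is a perfect set P ⊆ B of pairwise E-inequivalent elements; (2) every 𝚫¹₂ subset of ℝ × ℝ is Lebesgue measurable. -/
/-!
Assume first that 𝚫¹₂ subsets of the plane are measurable. A 𝚫¹₂ equivalence relation with null
classes is then a null set by Fubini, and Mycielski's theorem (`mycielski`) yields a Cantor set of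
pairwise inequivalent points. Mathlib does not have that theorem; it is proved by building a
sequence of reals in which every point is approximated by later clones of itself, the pairs
staying within an increasing sequence of closed sets disjoint from the null set.

Assume conversely the perfect set property and let `A` be 𝚫¹₂. Write `A` and its complement as
projections of coanalytic sets `C₁`, `C₂`. The union `C₁ ∪ C₂` carries a 𝚷¹₁-norm with countable
initial segments (`coanalytic_norm`, by comparing ranks of well-founded trees), and its fibrewise
minimum is a norm `ψ` on the whole plane (`SigmaNorm`) for which `ψ x ≤ ψ y` and `ψ x < ψ y` are
𝚺¹₂, hence `ψ x = ψ y` is 𝚫¹₂. The initial segments of `ψ` and the traces of `A` on them are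
analytic, hence measurable (`ana_nullMeasurable`). Either countably many segments cover the plane,
and `A` is measurable, or there is a segment that is maximal modulo null sets
(`exists_max_segment`). If its complement is null, `A` is again measurable. Otherwise the level
sets of `ψ` are null on a Borel set of positive measure, and the perfect set property, transferred
to the line by `exists_map_volume_eq`, gives a Borel map from Cantor space into the plane along
which `ψ` is injective.

That is impossible (`NullClassPSP.not_injective`). Pulled back to Cantor space, `ψ` becomes a good
well-ordering of the codes of closed null sets, with countable initial segments. Calling two reals
equivalent when their least codes agree gives a second 𝚫¹₂ equivalence relation with null classes.
A perfect transversal of it contains an uncountable closed null set `K`; but the points of `K` have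
distinct least codes, all of them at most the code of `K`, so `K` is countable.
-/

open MeasureTheory Set

namespace Delta12Psp

/-! ### Closure properties of analytic, coanalytic and 𝚺¹₂ sets -/

section Closure
variable {X Y : Type*} [TopologicalSpace X] [PolishSpace X] [MeasurableSpace X] [BorelSpace X]
  [TopologicalSpace Y] [PolishSpace Y] [MeasurableSpace Y] [BorelSpace Y]

theorem ana_inter {Z : Type*} [TopologicalSpace Z] [T2Space Z] {s t : Set Z}
    (hs : AnalyticSet s) (ht : AnalyticSet t) : AnalyticSet (s ∩ t) := by
  rw [inter_eq_iInter]
  refine AnalyticSet.iInter fun b => ?_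
  cases b <;> assumption

theorem ana_union {Z : Type*} [TopologicalSpace Z] {s t : Set Z}
    (hs : AnalyticSet s) (ht : AnalyticSet t) : AnalyticSet (s ∪ t) := by
  rw [union_eq_iUnion]
  refine AnalyticSet.iUnion fun b => ?_
  cases b <;> assumption

theorem ana_proj {Z W : Type*} [TopologicalSpace Z] [TopologicalSpace W] {s : Set (Z × W)}
    (hs : AnalyticSet s) : AnalyticSet {x | ∃ y, (x, y) ∈ s} := by
  have := hs.image_of_continuous (continuous_fst)
  convert this using 1
  ext x; simp

theorem ana_preimage {f : X → Y} (hf : Measurable f) {s : Set Y} (hs : AnalyticSet s) :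
    AnalyticSet (f ⁻¹' s) := by
  have h1 : AnalyticSet {p : X × Y | f p.1 = p.2} :=
    (measurableSet_eq_fun (hf.comp measurable_fst) measurable_snd).analyticSet
  have h2 : AnalyticSet (Prod.snd ⁻¹' s : Set (X × Y)) := hs.preimage continuous_snd
  convert ana_proj (ana_inter h1 h2) using 1
  ext x; simp

theorem coa_inter {Z : Type*} [TopologicalSpace Z] {s t : Set Z}
    (hs : AnalyticSet sᶜ) (ht : AnalyticSet tᶜ) : AnalyticSet (s ∩ t)ᶜ := by
  rw [compl_inter]; exact ana_union hs ht

theorem coa_union {Z : Type*} [TopologicalSpace Z] [T2Space Z] {s t : Set Z}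
    (hs : AnalyticSet sᶜ) (ht : AnalyticSet tᶜ) : AnalyticSet (s ∪ t)ᶜ := by
  rw [compl_union]; exact ana_inter hs ht

theorem coa_meas {s : Set X} (hs : MeasurableSet s) : AnalyticSet sᶜ := hs.compl.analyticSet

theorem coa_preimage {f : X → Y} (hf : Measurable f) {s : Set Y} (hs : AnalyticSet sᶜ) :
    AnalyticSet (f ⁻¹' s)ᶜ := ana_preimage hf hs

/-- Coanalytic sets are closed under universal quantification over a space. -/
theorem coa_forall {Z W : Type*} [TopologicalSpace Z] [TopologicalSpace W] {s : Set (Z × W)}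
    (hs : AnalyticSet sᶜ) : AnalyticSet {x | ∀ y, (x, y) ∈ s}ᶜ := by
  convert ana_proj hs using 1
  ext x; simp

/-- The witness space in the definition of `Sigma12` may be any Polish space. -/
theorem sigma12_of_proj {s : Set (X × Y)} (hs : AnalyticSet sᶜ) :
    Sigma12 {x | ∃ y, (x, y) ∈ s} := by
  rcases isEmpty_or_nonempty Y with hY | hY
  · refine ⟨∅, ?_, ?_⟩
    · rw [compl_empty]; exact MeasurableSet.univ.analyticSet
    · ext x; simp
  · obtain ⟨g, hg, hgs⟩ := PolishSpace.exists_nat_nat_continuous_surjective Y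
    refine ⟨(Prod.map id g) ⁻¹' s, coa_preimage (continuous_id.prodMap hg).measurable hs, ?_⟩
    ext x
    simp only [mem_ofPred_eq, mem_image, mem_preimage, Prod.exists, Prod.map_apply, id]
    constructor
    · rintro ⟨y, hy⟩
      obtain ⟨w, rfl⟩ := hgs y
      exact ⟨x, w, hy, rfl⟩
    · rintro ⟨_, w, h, rfl⟩
      exact ⟨g w, h⟩

theorem sigma12_union {X : Type*} [TopologicalSpace X] [PolishSpace X] {s t : Set X}
    (hs : Sigma12 s) (ht : Sigma12 t) : Sigma12 (s ∪ t) := by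
  obtain ⟨C, hC, rfl⟩ := hs
  obtain ⟨D, hD, rfl⟩ := ht
  exact ⟨C ∪ D, coa_union hC hD, (image_union _ _ _).symm⟩

theorem sigma12_preimage {f : X → Y} (hf : Measurable f) {s : Set Y} (hs : Sigma12 s) :
    Sigma12 (f ⁻¹' s) := by
  obtain ⟨C, hC, rfl⟩ := hs
  refine ⟨(Prod.map f id) ⁻¹' C, coa_preimage (hf.prodMap measurable_id) hC, ?_⟩
  ext x
  simp only [mem_preimage, mem_image, Prod.exists, Prod.map_apply, id]
  constructor
  · rintro ⟨a, w, h, rfl⟩; exact ⟨x, w, h, rfl⟩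
  · rintro ⟨a, w, h, rfl⟩; exact ⟨f a, w, h, rfl⟩

theorem sigma12_inter {s t : Set X} (hs : Sigma12 s) (ht : Sigma12 t) : Sigma12 (s ∩ t) := by
  obtain ⟨C, hC, rfl⟩ := hs
  obtain ⟨D, hD, rfl⟩ := ht
  have h1 : AnalyticSet ((fun p : X × ((ℕ → ℕ) × (ℕ → ℕ)) => (p.1, p.2.1)) ⁻¹' C)ᶜ :=
    coa_preimage (by fun_prop) hC
  have h2 : AnalyticSet ((fun p : X × ((ℕ → ℕ) × (ℕ → ℕ)) => (p.1, p.2.2)) ⁻¹' D)ᶜ :=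
    coa_preimage (by fun_prop) hD
  convert sigma12_of_proj (coa_inter h1 h2) using 1
  ext x; simp

theorem sigma12_meas {s : Set X} (hs : MeasurableSet s) : Sigma12 s := by
  refine ⟨Prod.fst ⁻¹' s, coa_meas (measurable_fst hs), ?_⟩
  rw [← prod_univ, fst_image_prod _ univ_nonempty]

end Closure

/-! ### Norms on coanalytic sets -/

section Norm
variable {Z : Type*}

/-- The child relation of the tree `{s | z ∈ F s}` attached to `z` by a scheme `F` of sets.
Lists are read backwards, as in `PiNat.res`: the children of the node `t` are the `a :: t`. -/
def childRel (F : List ℕ → Set Z) (z : Z) (s t : List ℕ) : Prop := (∃ a, s = a :: t) ∧ z ∈ F s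

/-- The length-preserving monotone map of finite sequences that sends the root to `r` and whose
last entries are prescribed by `b`. -/
def treeMap (b : List ℕ → ℕ) (r : List ℕ) : List ℕ → List ℕ
  | [] => r
  | a :: t => b (a :: t) :: treeMap b r t

/-- The pairs `(z', z)` for which the tree of `z'` embeds into the tree of `z` above `r`. -/
def embedRel (F : List ℕ → Set Z) (r : List ℕ) : Set (Z × Z) :=
  {p | ∃ b : List ℕ → ℕ, ∀ a t, p.1 ∈ F (a :: t) → p.2 ∈ F (treeMap b r (a :: t))}

/-- An embedding of trees does not decrease ranks; in particular well-foundedness pulls back. -/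
theorem embedRel_forward {F : List ℕ → Set Z} {z z' : Z} {r : List ℕ} {b : List ℕ → ℕ}
    (hb : ∀ a t, z' ∈ F (a :: t) → z ∈ F (treeMap b r (a :: t))) {u : List ℕ}
    (hu : Acc (childRel F z) u) :
    ∀ t, treeMap b r t = u → ∃ h : Acc (childRel F z') t, h.rank ≤ hu.rank := by
  induction hu with
  | intro u hu ih =>
    rintro t rfl
    have key : ∀ s, ∀ hs : childRel F z' s t, ∃ hr : childRel F z (treeMap b r s) (treeMap b r t),
        ∃ h : Acc (childRel F z') s, h.rank ≤ (hu _ hr).rank := by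
      rintro s ⟨⟨a, rfl⟩, hs⟩
      exact ⟨⟨⟨_, rfl⟩, hb a t hs⟩, ih _ ⟨⟨_, rfl⟩, hb a t hs⟩ _ rfl⟩
    refine ⟨Acc.intro _ fun s hs => (key s hs).2.1, ?_⟩
    rw [Acc.rank_eq]
    refine Ordinal.iSup_le ?_
    rintro ⟨s, hs⟩
    obtain ⟨hr, h, hle⟩ := key s hs
    exact Order.succ_le_of_lt (lt_of_le_of_lt hle (Acc.rank_lt_of_rel (Acc.intro _ hu) hr))

theorem exists_child_of_lt_rank {F : List ℕ → Set Z} {z : Z} {v : List ℕ}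
    (h : Acc (childRel F z) v) {o : Ordinal.{0}} (ho : o < h.rank) :
    ∃ n, ∃ hn : childRel F z (n :: v) v, o ≤ (h.inv hn).rank := by
  rw [Acc.rank_eq, Ordinal.lt_iSup_iff] at ho
  obtain ⟨⟨s, hs⟩, h1⟩ := ho
  obtain ⟨⟨n, rfl⟩, h2⟩ := id hs
  exact ⟨n, hs, Order.lt_succ_iff.1 h1⟩

/-- Conversely, an inequality of ranks between well-founded trees yields an embedding, built by
recursion on the length of sequences while keeping the inequality at corresponding nodes. -/
theorem embedRel_backward {F : List ℕ → Set Z} (hF : ∀ a t, F (a :: t) ⊆ F t) {z z' : Z}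
    {r : List ℕ} (hz' : Acc (childRel F z') []) (hz : Acc (childRel F z) r)
    (hle : hz'.rank ≤ hz.rank) : (z', z) ∈ embedRel F r := by
  classical
  let Q : List ℕ → List ℕ → Prop := fun t v =>
    ∃ h' : Acc (childRel F z') t, ∃ h : Acc (childRel F z) v, h'.rank ≤ h.rank
  have step : ∀ a t v, ∃ n, Q t v → z' ∈ F (a :: t) → z ∈ F (n :: v) ∧ Q (a :: t) (n :: v) := by
    intro a t v
    by_cases h : Q t v ∧ z' ∈ F (a :: t)
    · obtain ⟨⟨h', h, hl⟩, hm⟩ := h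
      have hc : childRel F z' (a :: t) t := ⟨⟨a, rfl⟩, hm⟩
      obtain ⟨n, hn, h3⟩ := exists_child_of_lt_rank h ((Acc.rank_lt_of_rel h' hc).trans_le hl)
      exact ⟨n, fun _ _ => ⟨hn.2, h'.inv hc, h.inv hn, h3⟩⟩
    · exact ⟨0, fun h1 h2 => (h ⟨h1, h2⟩).elim⟩
  choose st hst using step
  let G : List ℕ → List ℕ := fun s => List.rec r (fun a t v => st a t v :: v) s
  let b : List ℕ → ℕ := fun s => match s with
    | [] => 0
    | a :: t => st a t (G t)
  have hG : ∀ s, treeMap b r s = G s := by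
    intro s
    induction s with
    | nil => rfl
    | cons a t ih => simp only [treeMap, ih]; rfl
  have hQ : ∀ s, (s = [] ∨ z' ∈ F s) → Q s (G s) := by
    intro s
    induction s with
    | nil => exact fun _ => ⟨hz', hz, hle⟩
    | cons a t ih =>
      intro h
      have hm : z' ∈ F (a :: t) := by simpa using h
      exact (hst a t (G t) (ih (Or.inr (hF a t hm))) hm).2
  refine ⟨b, fun a t hm => ?_⟩
  rw [hG]
  exact (hst a t (G t) (hQ t (Or.inr (hF a t hm))) hm).1

variable [TopologicalSpace Z] [PolishSpace Z] [MeasurableSpace Z] [BorelSpace Z]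

theorem measurableSet_treeMap (r s u : List ℕ) :
    MeasurableSet {b : List ℕ → ℕ | treeMap b r s = u} := by
  induction s generalizing u with
  | nil => exact MeasurableSet.const (r = u)
  | cons a t ih =>
    cases u with
    | nil => simp [treeMap]
    | cons c v =>
      have : {b : List ℕ → ℕ | treeMap b r (a :: t) = c :: v} =
          {b | b (a :: t) = c} ∩ {b | treeMap b r t = v} := by
        ext b; simp [treeMap]
      rw [this]
      exact (measurableSet_eq_fun (measurable_pi_apply _) measurable_const).inter (ih v)

theorem analytic_embedRel {F : List ℕ → Set Z} (hm : ∀ s, MeasurableSet (F s)) (r : List ℕ) :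
    AnalyticSet (embedRel F r) := by
  have : MeasurableSet {p : (Z × Z) × (List ℕ → ℕ) |
      ∀ a t, p.1.1 ∈ F (a :: t) → ∃ u, treeMap p.2 r (a :: t) = u ∧ p.1.2 ∈ F u} := by
    refine measurableSet_setOfPred.2 (Measurable.forall fun a => Measurable.forall fun t =>
      Measurable.imp ?_ (Measurable.exists fun u => Measurable.and ?_ ?_))
    · exact measurableSet_setOfPred.1 ((measurable_fst.comp measurable_fst) (hm (a :: t)))
    · exact measurableSet_setOfPred.1 (measurable_snd (measurableSet_treeMap r (a :: t) u))
    · exact measurableSet_setOfPred.1 ((measurable_snd.comp measurable_fst) (hm u))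
  convert ana_proj this.analyticSet using 1
  ext p
  simp [embedRel]

/-- A coanalytic set consists of the points whose tree, taken along a Suslin scheme of closed sets
for the complement, is well-founded. -/
theorem exists_scheme {C : Set Z} (hC : AnalyticSet Cᶜ) :
    ∃ F : List ℕ → Set Z, (∀ s, MeasurableSet (F s)) ∧ (∀ a t, F (a :: t) ⊆ F t) ∧
      ∀ z, z ∈ C ↔ Acc (childRel F z) [] := by
  rw [AnalyticSet] at hC
  rcases hC with h0 | ⟨f, hf, hfC⟩
  · refine ⟨fun _ => ∅, fun _ => MeasurableSet.empty, fun _ _ => le_rfl, fun z => ?_⟩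
    have : z ∈ C := by
      by_contra h
      exact (h0 ▸ (show z ∈ Cᶜ from h) : z ∈ (∅ : Set Z))
    simp only [this, true_iff]
    exact Acc.intro _ fun s hs => hs.2.elim
  · refine ⟨fun s => closure (f '' {u | PiNat.res u s.length = s}),
      fun s => isClosed_closure.measurableSet, fun a t => ?_, fun z => ?_⟩
    · refine closure_mono (image_mono ?_)
      intro u hu
      simp only [List.length_cons, PiNat.res_succ, mem_ofPred_eq, List.cons.injEq] at hu
      exact hu.2
    · rw [← not_iff_not, ← mem_compl_iff, ← hfC, not_acc_iff_exists_descending_chain]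
      constructor
      · rintro ⟨u, rfl⟩
        refine ⟨PiNat.res u, rfl, fun n => ⟨⟨u n, rfl⟩, subset_closure ⟨u, ?_, rfl⟩⟩⟩
        simp
      · rintro ⟨s, hs0, hs⟩
        choose a ha using fun n => (hs n).1
        have hres : ∀ n, s n = PiNat.res a n := by
          intro n
          induction n with
          | zero => exact hs0
          | succ n ih => rw [ha, ih]; rfl
        refine ⟨a, ?_⟩
        by_contra hne
        obtain ⟨V, hV, hVc, hzV⟩ : ∃ V ∈ nhds (f a), IsClosed V ∧ z ∉ V := by
          obtain ⟨V, hV, hVc, hVs⟩ := exists_mem_nhds_isClosed_subset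
            ((isOpen_compl_singleton (x := z)).mem_nhds (show f a ∈ ({z} : Set Z)ᶜ from hne))
          exact ⟨V, hV, hVc, fun h => hVs h rfl⟩
        obtain ⟨I, hI⟩ : ∃ n, ∀ u, PiNat.res u n = PiNat.res a n → f u ∈ V := by
          have h1 := hf.continuousAt.preimage_mem_nhds hV
          rw [nhds_pi, Filter.mem_pi] at h1
          obtain ⟨I, hI, t, ht, hts⟩ := h1
          obtain ⟨n, hn⟩ := hI.bddAbove
          refine ⟨n + 1, fun u hu => hts fun i hi => ?_⟩
          rw [PiNat.res_eq_res] at hu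
          rw [hu (Nat.lt_succ_of_le (hn hi))]
          exact mem_of_mem_nhds (ht i)
        have h2 := (hs I).2
        rw [hres] at h2
        refine hzV (closure_minimal ?_ hVc h2)
        rintro _ ⟨u, hu, rfl⟩
        simp only [List.length_cons, PiNat.res_length, mem_ofPred_eq, PiNat.res_succ,
          List.cons.injEq] at hu
        exact hI u hu.2

/-- Every coanalytic set `C` carries a norm with countable initial segments such that, for a fixed
`z ∈ C`, the sets `{z' ∈ C | φ z' ≤ φ z}` and `{z' ∈ C | φ z' < φ z}` are analytic, uniformly
in `z`. -/
theorem coanalytic_norm {C : Set Z} (hC : AnalyticSet Cᶜ) :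
    ∃ (φ : Z → Ordinal.{0}) (Lle Llt : Set (Z × Z)), AnalyticSet Lle ∧ AnalyticSet Llt ∧
      (∀ z ∈ C, (Iic (φ z)).Countable) ∧
      (∀ z ∈ C, ∀ z', (z', z) ∈ Lle ↔ z' ∈ C ∧ φ z' ≤ φ z) ∧
      (∀ z ∈ C, ∀ z', (z', z) ∈ Llt ↔ z' ∈ C ∧ φ z' < φ z) := by
  classical
  obtain ⟨F, hm, hF, hFC⟩ := exists_scheme hC
  let φ : Z → Ordinal.{0} := fun z => if h : Acc (childRel F z) [] then h.rank else 0
  have hφ : ∀ z (h : Acc (childRel F z) []), φ z = h.rank := fun z h => dif_pos h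
  -- the tree of `z'` has smaller rank than that of `z` iff it embeds above a child of the root
  refine ⟨φ, embedRel F [], ⋃ n, (Prod.snd ⁻¹' (F [n])) ∩ embedRel F [n],
    analytic_embedRel hm _, AnalyticSet.iUnion fun n =>
      ana_inter (measurable_snd (hm _)).analyticSet (analytic_embedRel hm _), ?_, ?_, ?_⟩
  · intro z hz
    have h := (hFC z).1 hz
    rw [hφ z h]
    refine (countable_range fun b : {b // Acc (childRel F z) b} => b.2.rank).mono ?_
    intro o ho
    obtain ⟨b, hb, hbo⟩ := Acc.mem_range_rank_of_le h ho
    exact ⟨⟨b, hb⟩, hbo⟩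
  · intro z hz z'
    have h := (hFC z).1 hz
    constructor
    · rintro ⟨b, hb⟩
      obtain ⟨h', hle⟩ := embedRel_forward hb h [] rfl
      exact ⟨(hFC z').2 h', by rwa [hφ z h, hφ z' h']⟩
    · rintro ⟨hz', hle⟩
      have h' := (hFC z').1 hz'
      rw [hφ z h, hφ z' h'] at hle
      exact embedRel_backward hF h' h hle
  · intro z hz z'
    have h := (hFC z).1 hz
    simp only [mem_iUnion, mem_inter_iff, mem_preimage]
    constructor
    · rintro ⟨n, hn, b, hb⟩
      have hc : childRel F z [n] [] := ⟨⟨n, rfl⟩, hn⟩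
      obtain ⟨h', hle⟩ := embedRel_forward hb (h.inv hc) [] rfl
      refine ⟨(hFC z').2 h', ?_⟩
      rw [hφ z h, hφ z' h']
      exact hle.trans_lt (Acc.rank_lt_of_rel h hc)
    · rintro ⟨hz', hlt⟩
      have h' := (hFC z').1 hz'
      rw [hφ z h, hφ z' h'] at hlt
      obtain ⟨n, hn, hle⟩ := exists_child_of_lt_rank h hlt
      exact ⟨n, hn.2, embedRel_backward hF h' (h.inv hn) hle⟩

end Norm

/-! ### Universal measurability and transfer of measures -/

section Universal

/-- Inner approximation of analytic sets by compact sets: the coordinates of the parametrizing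
sequences are bounded one at a time, losing little outer measure. -/
theorem exists_compact_of_lt {X : Type*} [TopologicalSpace X] [PolishSpace X] [MeasurableSpace X]
    [BorelSpace X] (μ : Measure X) [IsFiniteMeasure μ] {f : (ℕ → ℕ) → X} (hf : Continuous f)
    {a : ENNReal} (ha : a < μ (range f)) : ∃ K ⊆ range f, IsCompact K ∧ a ≤ μ K := by
  classical
  let _ := TopologicalSpace.upgradeIsCompletelyMetrizable X
  have step : ∀ (k : ℕ) (S : {S : Set (ℕ → ℕ) // a < μ (f '' S)}),
      ∃ m, a < μ (f '' (S.1 ∩ {u | u k ≤ m})) := by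
    rintro k ⟨S, hS⟩
    have h1 : f '' S = ⋃ m, f '' (S ∩ {u | u k ≤ m}) := by
      rw [← image_iUnion, ← inter_iUnion]
      congr 1
      ext u
      simp only [mem_inter_iff, mem_iUnion, mem_ofPred_eq]
      exact ⟨fun h => ⟨h, _, le_rfl⟩, fun h => h.1⟩
    have hmono : Monotone fun m => f '' (S ∩ {u | u k ≤ m}) := by
      intro m m' hmm
      exact image_mono (inter_subset_inter_right _ fun u (hu : u k ≤ m) => hu.trans hmm)
    rw [h1, hmono.measure_iUnion, lt_iSup_iff] at hS
    exact hS
  choose m hm using step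
  let S : ℕ → {S : Set (ℕ → ℕ) // a < μ (f '' S)} := fun k =>
    Nat.rec ⟨univ, by rwa [image_univ]⟩ (fun k S => ⟨_, hm k S⟩) k
  let n : ℕ → ℕ := fun k => m k (S k)
  have hS : ∀ k, (S k).1 = {u | ∀ i < k, u i ≤ n i} := by
    intro k
    induction k with
    | zero => ext u; simp [S]
    | succ k ih =>
      have : (S (k + 1)).1 = (S k).1 ∩ {u | u k ≤ n k} := rfl
      rw [this, ih]
      ext u
      simp only [mem_inter_iff, mem_ofPred_eq, Nat.lt_succ_iff_lt_or_eq, or_imp, forall_and,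
        forall_eq]
  have hcomp : IsCompact {u : ℕ → ℕ | ∀ i, u i ≤ n i} := by
    have := isCompact_univ_pi fun i => (finite_Iic (n i)).isCompact
    convert this using 1
    ext u; simp [Pi.le_def]
  refine ⟨f '' {u | ∀ i, u i ≤ n i}, image_subset_range _ _, hcomp.image hf, ?_⟩
  rw [Set.measure_eq_iInf_isOpen]
  refine le_iInf₂ fun U hU => le_iInf fun hUo => ?_
  have hloc : ∀ x ∈ {u : ℕ → ℕ | ∀ i, u i ≤ n i}, ∃ k, ∀ u, (∀ i < k, u i = x i) → f u ∈ U := by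
    intro x hx
    have h1 := hf.continuousAt.preimage_mem_nhds (hUo.mem_nhds (hU ⟨x, hx, rfl⟩))
    rw [nhds_pi, Filter.mem_pi] at h1
    obtain ⟨I, hI, t, ht, hts⟩ := h1
    obtain ⟨k, hk⟩ := hI.bddAbove
    refine ⟨k + 1, fun u hu => hts fun i hi => ?_⟩
    rw [hu i (Nat.lt_succ_of_le (hk hi))]
    exact mem_of_mem_nhds (ht i)
  choose! κ hκ using hloc
  obtain ⟨t, ht, hcov⟩ := hcomp.elim_nhds_subcover (fun x => {u | ∀ i < κ x, u i = x i}) (by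
    intro x _
    have : {u : ℕ → ℕ | ∀ i < κ x, u i = x i} = (Iio (κ x)).pi fun i => {x i} := by
      ext u; simp [Set.mem_pi]
    rw [this]
    exact set_pi_mem_nhds (finite_Iio _) fun i _ => by simp)
  have hsub : f '' (S (t.sup κ)).1 ⊆ U := by
    rw [hS]
    rintro _ ⟨u, hu, rfl⟩
    obtain ⟨x, hx, hux⟩ := mem_iUnion₂.1
      (hcov (show (fun i => min (u i) (n i)) ∈ {u : ℕ → ℕ | ∀ i, u i ≤ n i} from
        fun i => min_le_right _ _))
    refine hκ x (ht x hx) u fun i hi => ?_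
    rw [← hux i hi]
    exact (min_eq_left (hu i (hi.trans_le (Finset.le_sup hx)))).symm
  exact (S _).2.le.trans (measure_mono hsub)

/-- Analytic sets are universally measurable. -/
theorem ana_nullMeasurable {X : Type*} [TopologicalSpace X] [PolishSpace X] [MeasurableSpace X]
    [BorelSpace X] (μ : Measure X) [IsFiniteMeasure μ] {s : Set X} (hs : AnalyticSet s) :
    NullMeasurableSet s μ := by
  rw [AnalyticSet] at hs
  rcases hs with rfl | ⟨f, hf, rfl⟩
  · exact nullMeasurableSet_empty
  rcases eq_or_ne (μ (range f)) 0 with h0 | h0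
  · exact NullMeasurableSet.of_null h0
  obtain ⟨a, -, ha, hlim⟩ := exists_seq_strictMono_tendsto' (pos_iff_ne_zero.2 h0)
  choose K hK hKc hKa using fun n => exists_compact_of_lt μ hf (ha n).2
  have hm : MeasurableSet (⋃ n, K n) := MeasurableSet.iUnion fun n => (hKc n).measurableSet
  have := ae_eq_of_subset_of_measure_ge (μ := μ) (iUnion_subset hK)
    (le_of_tendsto' hlim fun n => (hKa n).trans (measure_mono (subset_iUnion K n)))
    hm.nullMeasurableSet (measure_ne_top _ _)
  exact NullMeasurableSet.congr hm.nullMeasurableSet this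

end Universal

section Transfer
open ProbabilityTheory

/-- Every Borel probability measure on a space Borel isomorphic to `ℝ` is the image of Lebesgue
measure on the unit interval, through the quantile function. -/
theorem exists_map_volume_eq {X : Type*} [MeasurableSpace X] (e : X ≃ᵐ ℝ) (μ : Measure X)
    [IsProbabilityMeasure μ] :
    ∃ f : ℝ → X, Measurable f ∧ (volume.restrict (Ioo (0 : ℝ) 1)).map f = μ := by
  classical
  let ν : Measure ℝ := μ.map e
  have : IsProbabilityMeasure ν := Measure.isProbabilityMeasure_map e.measurable.aemeasurable
  let G : ℝ → ℝ := fun t => if t ∈ Ioo (0 : ℝ) 1 then sInf {x | t ≤ cdf ν x} else 0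
  have hG : ∀ t ∈ Ioo (0 : ℝ) 1, ∀ x, G t ≤ x ↔ t ≤ cdf ν x := by
    intro t ht x
    have hne : {x | t ≤ cdf ν x}.Nonempty :=
      ((tendsto_cdf_atTop ν).eventually (eventually_ge_nhds ht.2)).exists
    have hbdd : BddBelow {x | t ≤ cdf ν x} := by
      obtain ⟨y, hy⟩ := ((tendsto_cdf_atBot ν).eventually (eventually_lt_nhds ht.1)).exists
      refine ⟨y, fun z hz => ?_⟩
      by_contra! hlt
      exact absurd ((monotone_cdf ν hlt.le).trans_lt hy) (not_lt.2 hz)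
    simp only [G, if_pos ht]
    constructor
    · intro h
      have hr : Filter.Tendsto (cdf ν) (nhdsWithin x (Ioi x)) (nhds (cdf ν x)) :=
        ((cdf ν).right_continuous x).mono Ioi_subset_Ici_self
      refine ge_of_tendsto hr ?_
      filter_upwards [self_mem_nhdsWithin] with y hy
      obtain ⟨z, hz, hzy⟩ := exists_lt_of_csInf_lt hne (h.trans_lt hy)
      exact le_trans hz (monotone_cdf ν hzy.le)
    · exact fun h => csInf_le hbdd h
  have hpre : ∀ x, G ⁻¹' Iic x = (Ioo 0 1 ∩ Iic (cdf ν x)) ∪ ((Ioo 0 1)ᶜ ∩ {_t | (0 : ℝ) ≤ x}) := by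
    intro x
    ext t
    by_cases ht : t ∈ Ioo (0 : ℝ) 1
    · have := hG t ht x
      simp [ht, this]
    · have hGt : G t = 0 := if_neg ht
      simp only [mem_preimage, hGt, mem_Iic, mem_union, mem_inter_iff, ht, false_and, false_or,
        mem_compl_iff, not_false_eq_true, true_and, mem_ofPred_eq]
  have hGm : Measurable G := by
    refine measurable_of_Iic fun x => ?_
    rw [hpre]
    exact (measurableSet_Ioo.inter measurableSet_Iic).union
      (measurableSet_Ioo.compl.inter (MeasurableSet.const _))
  have hν : (volume.restrict (Ioo (0 : ℝ) 1)).map G = ν := by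
    refine Measure.ext_of_Iic _ _ fun x => ?_
    have h1 : G ⁻¹' Iic x ∩ Ioo 0 1 = Ioo 0 1 ∩ Iic (cdf ν x) := by
      rw [hpre]
      ext t
      by_cases ht : t ∈ Ioo (0 : ℝ) 1 <;>
        simp only [mem_inter_iff, mem_union, mem_compl_iff, ht] <;> tauto
    have h2 : Ioc 0 (cdf ν x) =ᵐ[volume] (Ioo 0 1 ∩ Iic (cdf ν x) : Set ℝ) := by
      have : Ioc 0 (cdf ν x) = (Ioc 0 1 ∩ Iic (cdf ν x) : Set ℝ) := by
        ext t
        simp only [mem_Ioc, mem_inter_iff, mem_Iic]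
        exact ⟨fun h => ⟨⟨h.1, h.2.trans (cdf_le_one ν x)⟩, h.2⟩, fun h => ⟨h.1.1, h.2⟩⟩
      rw [this]
      exact (Ioo_ae_eq_Ioc.symm).inter (ae_eq_refl _)
    rw [Measure.map_apply hGm measurableSet_Iic,
      Measure.restrict_apply (hGm measurableSet_Iic), h1, ← measure_congr h2, Real.volume_Ioc,
      sub_zero, ofReal_cdf]
  refine ⟨e.symm ∘ G, e.symm.measurable.comp hGm, ?_⟩
  rw [← Measure.map_map e.symm.measurable hGm, hν]
  simp [ν, Measure.map_map e.symm.measurable e.measurable]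

end Transfer

/-! ### Mycielski's theorem for measure -/

section Mycielski
open Filter Topology

/-- A null set of pairs avoids an increasing sequence of symmetric closed sets with conull union. -/
theorem exists_closed_exhaustion {N : Set (ℝ × ℝ)} (hN : volume N = 0) :
    ∃ F : ℕ → Set (ℝ × ℝ), (∀ m, IsClosed (F m)) ∧ Monotone F ∧
      (∀ m x y, (x, y) ∈ F m → (y, x) ∈ F m) ∧ (∀ m, Disjoint (F m) N) ∧
      ∀ᵐ p, p ∈ ⋃ m, F m := by
  have hN' : volume (N ∪ Prod.swap ⁻¹' N) = 0 := by
    refine measure_union_null hN ?_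
    exact (Measure.measurePreserving_swap (μ := (volume : Measure ℝ))
      (ν := (volume : Measure ℝ))).quasiMeasurePreserving.preimage_null hN
  have hU : ∀ j : ℕ, ∃ U ⊇ N ∪ Prod.swap ⁻¹' N, IsOpen U ∧ volume U < ((j : ENNReal) + 1)⁻¹ := by
    intro j
    refine Set.exists_isOpen_lt_of_lt _ _ ?_
    rw [hN']
    simp
  choose U hNU hUo hUlt using hU
  let F : ℕ → Set (ℝ × ℝ) := fun m => ⋃ j ∈ Iic m, (U j ∩ Prod.swap ⁻¹' U j)ᶜ
  refine ⟨F, fun m => ?_, fun m m' h => biUnion_mono (Iic_subset_Iic.2 h) fun _ _ => le_rfl,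
    fun m x y h => ?_, fun m => ?_, ?_⟩
  · exact (finite_Iic m).isClosed_biUnion fun j _ =>
      ((hUo j).inter ((hUo j).preimage continuous_swap)).isClosed_compl
  · simp only [F, mem_iUnion₂, mem_compl_iff, mem_inter_iff, mem_preimage, Prod.swap] at h ⊢
    obtain ⟨j, hj, h⟩ := h
    exact ⟨j, hj, fun h' => h ⟨h'.2, h'.1⟩⟩
  · rw [Set.disjoint_left]
    intro p hp hpN
    obtain ⟨j, -, hj⟩ := mem_iUnion₂.1 hp
    exact hj ⟨hNU j (Or.inl hpN), hNU j (Or.inr (by simpa using hpN))⟩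
  · rw [ae_iff]
    refine le_antisymm (ENNReal.le_of_forall_pos_le_add fun ε hε _ => ?_) zero_le
    obtain ⟨j, hj⟩ := ENNReal.exists_inv_nat_lt (a := (ε : ENNReal)) (by simpa using hε.ne')
    rw [zero_add]
    refine (measure_mono (t := U j) fun p hp => ?_).trans ((hUlt j).le.trans
      (le_trans (ENNReal.inv_le_inv.2 le_self_add) hj.le))
    by_contra hpU
    exact hp (mem_iUnion.2 ⟨j, mem_iUnion₂.2 ⟨j, mem_Iic.2 le_rfl, fun h => hpU h.1⟩⟩)

variable (μ : Measure ℝ) [IsFiniteMeasure μ]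

/-- For almost every `z`, a coordinate `z p` whose pairs with the other coordinates lie in given
closed sets may be replaced, within any ball around it, by positively many points with the same
property. -/
theorem ae_clone {F : ℕ → Set (ℝ × ℝ)} (hF : ∀ m, IsClosed (F m)) (k : ℕ) :
    ∀ᵐ z ∂(Measure.pi fun _ : Fin k => μ), ∀ (p : Fin k) (f : Fin k → ℕ) (n : ℕ),
      (∀ t, t ≠ p → (z p, z t) ∈ F (f t)) →
      0 < μ {a | |a - z p| < 1 / 2 ^ n ∧ ∀ t, t ≠ p → (a, z t) ∈ F (f t)} := by
  simp only [ae_all_iff]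
  intro p f n
  cases k with
  | zero => exact p.elim0
  | succ k =>
    let S : Set (ℝ × (Fin k → ℝ)) := {q | ∀ j, (q.1, q.2 j) ∈ F (f (p.succAbove j))}
    have hS : MeasurableSet S := by
      refine measurableSet_setOfPred.2 (Measurable.forall fun j => measurableSet_setOfPred.1 ?_)
      exact (by fun_prop : Measurable fun q : ℝ × (Fin k → ℝ) => (q.1, q.2 j))
        (hF _).measurableSet
    let T : Set ((ℝ × (Fin k → ℝ)) × ℝ) :=
      {q | |q.2 - q.1.1| < 1 / 2 ^ n ∧ (q.2, q.1.2) ∈ S}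
    have hT : MeasurableSet T := by
      refine MeasurableSet.inter ?_ ?_
      · have h1 : Measurable fun q : (ℝ × (Fin k → ℝ)) × ℝ => |q.2 - q.1.1| :=
          (measurable_snd.sub (measurable_fst.comp measurable_fst)).abs
        exact measurableSet_lt h1 measurable_const
      · exact (by fun_prop : Measurable fun q : (ℝ × (Fin k → ℝ)) × ℝ => (q.2, q.1.2)) hS
    let bad : Set (ℝ × (Fin k → ℝ)) := S ∩ {q | μ (Prod.mk q ⁻¹' T) = 0}
    have hbad : MeasurableSet bad :=
      hS.inter (measurable_measure_prodMk_left hT (measurableSet_singleton 0))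
    have hnull : (μ.prod (Measure.pi fun _ : Fin k => μ)) bad = 0 := by
      rw [Measure.prod_apply_symm hbad]
      refine (lintegral_congr fun w => ?_).trans lintegral_zero
      refine measure_null_of_locally_null _ fun x hx => ?_
      refine ⟨_, inter_mem_nhdsWithin _ (Metric.ball_mem_nhds x (ε := 1 / 2 ^ n) (by positivity)),
        ?_⟩
      -- near a bad point `x`, all bad points are among those declared null by the badness of `x`
      refine measure_mono_null ?_ hx.2
      intro a ha
      exact ⟨by simpa [Real.dist_eq] using ha.2, ha.1.1⟩
    have hmp := measurePreserving_piFinSuccAbove (α := fun _ : Fin (k + 1) => ℝ) (fun _ => μ) p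
    have h0 := hmp.quasiMeasurePreserving.preimage_null hnull
    rw [ae_iff]
    refine measure_mono_null ?_ h0
    intro z hz
    simp only [mem_ofPred_eq, not_forall] at hz
    obtain ⟨hz1, hz2⟩ := hz
    refine ⟨fun j => hz1 _ (Fin.succAbove_ne p j), ?_⟩
    have hz3 := not_lt.1 hz2
    refine measure_mono_null ?_ (le_antisymm hz3 zero_le)
    rintro a ⟨ha1, ha2⟩
    refine ⟨ha1, fun t ht => ?_⟩
    obtain ⟨j, rfl⟩ := Fin.exists_succAbove_eq ht
    exact ha2 j

theorem ae_snoc {k : ℕ} {Q : (Fin (k + 1) → ℝ) → Prop}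
    (h : ∀ᵐ z ∂(Measure.pi fun _ : Fin (k + 1) => μ), Q z) :
    ∀ᵐ z ∂(Measure.pi fun _ : Fin k => μ), ∀ᵐ a ∂μ, Q (Fin.snoc (α := fun _ => ℝ) z a) := by
  have hmp := (measurePreserving_piFinSuccAbove (α := fun _ : Fin (k + 1) => ℝ) (fun _ => μ)
    (Fin.last k)).symm
  have h1 := (hmp.comp Measure.measurePreserving_swap).quasiMeasurePreserving.ae h
  have h2 := Measure.ae_ae_of_ae_prod h1
  filter_upwards [h2] with z hz
  filter_upwards [hz] with a ha
  have : (MeasurableEquiv.piFinSuccAbove (fun _ : Fin (k + 1) => ℝ) (Fin.last k)).symm (a, z) =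
      Fin.snoc (α := fun _ => ℝ) z a := Fin.insertNth_last' a z
  rw [← this]
  exact ha

/-- Conull sets of finite tuples may be shrunk to conull sets `W k` such that almost every
one-point extension of a tuple in `W k` is in `W (k + 1)`. -/
theorem exists_hereditary {G : ∀ k, Set (Fin k → ℝ)}
    (hG : ∀ k, ∀ᵐ z ∂(Measure.pi fun _ : Fin k => μ), z ∈ G k) :
    ∃ W : ∀ k, Set (Fin k → ℝ), (∀ k, ∀ᵐ z ∂(Measure.pi fun _ : Fin k => μ), z ∈ W k) ∧
      (∀ k, W k ⊆ G k) ∧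
      ∀ k, ∀ z ∈ W k, ∀ᵐ a ∂μ, Fin.snoc (α := fun _ => ℝ) z a ∈ W (k + 1) := by
  let V : ℕ → ∀ k, Set (Fin k → ℝ) := fun j => Nat.rec G (fun _ V k =>
    {z | z ∈ V k ∧ ∀ᵐ a ∂μ, Fin.snoc (α := fun _ => ℝ) z a ∈ V (k + 1)}) j
  have hV : ∀ j k, ∀ᵐ z ∂(Measure.pi fun _ : Fin k => μ), z ∈ V j k := by
    intro j
    induction j with
    | zero => exact hG
    | succ j ih => exact fun k => (ih k).and (ae_snoc μ (ih (k + 1)))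
  refine ⟨fun k => ⋂ j, V j k, fun k => ?_, fun k => iInter_subset _ 0, fun k z hz => ?_⟩
  · simp only [mem_iInter]
    exact ae_all_iff.2 fun j => hV j k
  · simp only [mem_iInter] at hz ⊢
    exact ae_all_iff.2 fun j => (hz (j + 1)).2

/-- Dependent choice for finite tuples extended one point at a time. -/
theorem exists_seq_of_snoc {St : ∀ k, (Fin k → ℝ) → Prop} {R : ∀ k, (Fin k → ℝ) → ℝ → Prop}
    (h0 : ∃ z, St 0 z)
    (hs : ∀ k z, St k z → ∃ a, St (k + 1) (Fin.snoc (α := fun _ => ℝ) z a) ∧ R k z a) :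
    ∃ x : ℕ → ℝ, ∀ k, R k (fun i => x i) (x k) := by
  choose! nx hnx hR using hs
  obtain ⟨z0, hz0⟩ := h0
  let s : ∀ k, {z : Fin k → ℝ // St k z} := fun k =>
    Nat.rec ⟨z0, hz0⟩ (fun k z => ⟨Fin.snoc (α := fun _ => ℝ) z.1 (nx k z.1), hnx k z.1 z.2⟩) k
  have hsucc : ∀ k, (s (k + 1)).1 = Fin.snoc (α := fun _ => ℝ) (s k).1 (nx k (s k).1) :=
    fun k => rfl
  let x : ℕ → ℝ := fun k => nx k (s k).1
  have hx : ∀ k, (s k).1 = fun i : Fin k => x i := by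
    intro k
    induction k with
    | zero => exact Subsingleton.elim _ _
    | succ k ih =>
      rw [hsucc]
      funext i
      refine Fin.lastCases ?_ (fun i => ?_) i
      · simp [x]
      · simp [ih]
  refine ⟨x, fun k => ?_⟩
  rw [← hx k]
  exact hR k _ (s k).2

/-- The sequence of points underlying the Cantor scheme. Any two of its points form a pair in some
`F m`, and `x (2 ^ n + i)`, for `i < 2 ^ n`, is a
clone of `x i`, at distance less than `2 ^ (-n)`, whose pairs with the earlier points lie in the
same closed sets. -/
theorem exists_clone_seq {F : ℕ → Set (ℝ × ℝ)} (hF : ∀ m, IsClosed (F m)) (hmono : Monotone F)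
    (hsymm : ∀ m x y, (x, y) ∈ F m → (y, x) ∈ F m) (hae : ∀ᵐ p ∂μ.prod μ, p ∈ ⋃ m, F m)
    (hμ : μ ≠ 0) {K : Set ℝ} (hK : ∀ᵐ a ∂μ, a ∈ K) :
    ∃ x : ℕ → ℝ, (∀ k, x k ∈ K) ∧ (∀ i j, i ≠ j → ∃ m, (x i, x j) ∈ F m) ∧
      ∀ n i, i < 2 ^ n → |x (2 ^ n + i) - x i| < 1 / 2 ^ n ∧
        ∀ t < 2 ^ n + i, t ≠ i → ∀ m, (x i, x t) ∈ F m → (x (2 ^ n + i), x t) ∈ F m := by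
  classical
  have hne : (ae μ).NeBot := ae_neBot.2 hμ
  let G : ∀ k, Set (Fin k → ℝ) := fun k => {z | (∀ (p : Fin k) (f : Fin k → ℕ) (n : ℕ),
      (∀ t, t ≠ p → (z p, z t) ∈ F (f t)) →
      0 < μ {a | |a - z p| < 1 / 2 ^ n ∧ ∀ t, t ≠ p → (a, z t) ∈ F (f t)}) ∧
      ∀ t, ∀ᵐ a ∂μ, ∃ m, (a, z t) ∈ F m}
  have hG : ∀ k, ∀ᵐ z ∂(Measure.pi fun _ : Fin k => μ), z ∈ G k := by
    intro k
    refine (ae_clone μ hF k).and (ae_all_iff.2 fun t => ?_)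
    have h1 : ∀ᵐ x ∂μ, ∀ᵐ a ∂μ, ∃ m, (a, x) ∈ F m := by
      filter_upwards [Measure.ae_ae_of_ae_prod hae] with x hx
      filter_upwards [hx] with a ha
      obtain ⟨m, hm⟩ := mem_iUnion.1 ha
      exact ⟨m, hsymm _ _ _ hm⟩
    exact (Measure.quasiMeasurePreserving_eval (fun _ : Fin k => μ) t).ae h1
  obtain ⟨W, hW, hWG, hWs⟩ := exists_hereditary μ hG
  let St : ∀ k, (Fin k → ℝ) → Prop := fun k z => z ∈ W k ∧ ∀ i j, i ≠ j → ∃ m, (z i, z j) ∈ F m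
  let R : ∀ k, (Fin k → ℝ) → ℝ → Prop := fun k z a => a ∈ K ∧ (∀ t, ∃ m, (a, z t) ∈ F m) ∧
    ∀ p : Fin k, (p : ℕ) = k - 2 ^ Nat.log 2 k → |a - z p| < 1 / 2 ^ Nat.log 2 k ∧
      ∀ t, t ≠ p → ∀ m, (z p, z t) ∈ F m → (a, z t) ∈ F m
  obtain ⟨x, hx⟩ := exists_seq_of_snoc (St := St) (R := R) (by
    have : (ae (Measure.pi fun _ : Fin 0 => μ)).NeBot := by
      rw [ae_neBot, ← Measure.measure_univ_ne_zero]
      simp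
    obtain ⟨z, hz⟩ := (hW 0).exists
    exact ⟨z, hz, fun i => i.elim0⟩) (by
    rintro k z ⟨hz, hpair⟩
    have hev : ∀ᵐ a ∂μ, Fin.snoc (α := fun _ => ℝ) z a ∈ W (k + 1) ∧ a ∈ K ∧
        ∀ t, ∃ m, (a, z t) ∈ F m :=
      (hWs k z hz).and (hK.and (ae_all_iff.2 fun t => (hWG k hz).2 t))
    have hst : ∀ a, Fin.snoc (α := fun _ => ℝ) z a ∈ W (k + 1) → (∀ t, ∃ m, (a, z t) ∈ F m) →
        St (k + 1) (Fin.snoc (α := fun _ => ℝ) z a) := by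
      intro a ha hat
      refine ⟨ha, fun i j => ?_⟩
      refine Fin.lastCases ?_ (fun i => ?_) i <;> refine Fin.lastCases ?_ (fun j => ?_) j
      · exact fun h => (h rfl).elim
      · intro _; simpa using hat j
      · intro _
        obtain ⟨m, hm⟩ := hat i
        exact ⟨m, by simpa using hsymm _ _ _ hm⟩
      · intro h
        simpa using hpair i j (fun h' => h (by rw [h']))
    rcases Nat.eq_zero_or_pos k with rfl | hk
    · obtain ⟨a, ha⟩ := hev.exists
      exact ⟨a, hst a ha.1 ha.2.2, ha.2.1, ha.2.2, fun p => p.elim0⟩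
    · let p : Fin k := ⟨k - 2 ^ Nat.log 2 k, Nat.sub_lt hk (by positivity)⟩
      -- the least admissible index handles all admissible ones, the sets being increasing
      let f : Fin k → ℕ := fun t => if h : ∃ m, (z p, z t) ∈ F m then Nat.find h else 0
      have hf : ∀ t, t ≠ p → (z p, z t) ∈ F (f t) := by
        intro t ht
        have h := hpair p t ht.symm
        simp only [f, dif_pos h]
        exact Nat.find_spec h
      have hpos := (hWG k hz).1 p f (Nat.log 2 k) hf
      obtain ⟨a, ⟨ha1, ha2⟩, ha⟩ := ((frequently_ae_mem_iff.2 hpos.ne').and_eventually hev).exists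
      refine ⟨a, hst a ha.1 ha.2.2, ha.2.1, ha.2.2, fun q hq => ?_⟩
      have hqp : q = p := Fin.ext hq
      rw [hqp]
      refine ⟨ha1, fun t ht m hm => hmono ?_ (ha2 t ht)⟩
      have h : ∃ m, (z p, z t) ∈ F m := ⟨m, hm⟩
      simp only [f, dif_pos h]
      exact Nat.find_min' h hm)
  refine ⟨x, fun k => (hx k).1, fun i j hij => ?_, fun n i hi => ?_⟩
  · rcases lt_or_gt_of_ne hij with h | h
    · obtain ⟨m, hm⟩ := (hx j).2.1 ⟨i, h⟩
      exact ⟨m, hsymm _ _ _ hm⟩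
    · exact (hx i).2.1 ⟨j, h⟩
  · have hlog : Nat.log 2 (2 ^ n + i) = n :=
      (Nat.log_eq_iff (Or.inr ⟨one_lt_two, by positivity⟩)).2 ⟨by omega, by rw [pow_succ]; omega⟩
    have h2 : 0 < 2 ^ n := by positivity
    obtain ⟨h3, h4⟩ := (hx (2 ^ n + i)).2.2 ⟨i, by omega⟩ (by rw [hlog]; simp)
    rw [hlog] at h3
    exact ⟨h3, fun t ht hti m hm => h4 ⟨t, ht⟩ (fun h => hti (congrArg Fin.val h)) m hm⟩

/-- The number whose binary digits are the first `n` terms of `β`, least significant first. -/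
def branchIdx (β : ℕ → Bool) : ℕ → ℕ
  | 0 => 0
  | n + 1 => if β n then 2 ^ n + branchIdx β n else branchIdx β n

theorem branchIdx_lt (β : ℕ → Bool) (n : ℕ) : branchIdx β n < 2 ^ n := by
  induction n with
  | zero => simp [branchIdx]
  | succ n ih => rw [branchIdx, pow_succ]; split_ifs <;> omega

theorem continuous_branchIdx (n : ℕ) : Continuous fun β => branchIdx β n := by
  induction n with
  | zero => exact continuous_const
  | succ n ih =>
    have h1 : Continuous fun q : Bool × ℕ => if q.1 then 2 ^ n + q.2 else q.2 :=
      continuous_of_discreteTopology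
    exact h1.comp ((continuous_apply n).prodMk ih)

/-- Mycielski's theorem for measure: a Borel set of positive measure contains a Cantor set whose
pairs of distinct elements avoid a given null set. -/
theorem mycielski {B : Set ℝ} (hB : MeasurableSet B) (hpos : 0 < volume B) {N : Set (ℝ × ℝ)}
    (hN : volume N = 0) : ∃ y : (ℕ → Bool) → ℝ, Continuous y ∧ (∀ β, y β ∈ B) ∧
      ∀ β γ, β ≠ γ → (y β, y γ) ∉ N := by
  obtain ⟨K, hKB, hKc, hKpos⟩ := hB.exists_lt_isCompact hpos
  obtain ⟨F, hF, hmono, hsymm, hdisj, hae⟩ := exists_closed_exhaustion hN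
  have : IsFiniteMeasure (volume.restrict K) := ⟨by
    rw [Measure.restrict_apply_univ]; exact hKc.measure_lt_top⟩
  obtain ⟨x, hxK, hxp, hx⟩ := exists_clone_seq (volume.restrict K) hF hmono hsymm
    ((Measure.AbsolutelyContinuous.prod Measure.restrict_le_self.absolutelyContinuous
      Measure.restrict_le_self.absolutelyContinuous).ae_le hae)
    (fun h => hKpos.ne' (by rw [← Measure.restrict_apply_univ, h]; rfl))
    (ae_restrict_mem hKc.measurableSet)
  have hdist : ∀ β n, dist (x (branchIdx β n)) (x (branchIdx β (n + 1))) ≤ 2 / 2 / 2 ^ n := by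
    intro β n
    rw [branchIdx]
    split_ifs
    · rw [dist_comm, Real.dist_eq]
      exact (hx n _ (branchIdx_lt β n)).1.le.trans (by norm_num)
    · rw [dist_self]; positivity
  choose y hy using fun β => cauchySeq_tendsto_of_complete (cauchySeq_of_le_geometric_two (hdist β))
  have hyd : ∀ β n, dist (x (branchIdx β n)) (y β) ≤ 2 / 2 ^ n := fun β n =>
    dist_le_of_le_geometric_two_of_tendsto (hdist β) (hy β) n
  have hlim : Tendsto (fun n : ℕ => (2 : ℝ) / 2 ^ n) atTop (𝓝 0) := by
    have := (tendsto_pow_atTop_nhds_zero_of_lt_one (r := (1 / 2 : ℝ)) (by norm_num)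
      (by norm_num)).const_mul 2
    simpa [div_eq_mul_inv] using this
  refine ⟨y, ?_, fun β => hKB (hKc.isClosed.mem_of_tendsto (hy β)
    (Eventually.of_forall fun n => hxK _)), fun β γ hne => ?_⟩
  · have hu : TendstoUniformly (fun n β => x (branchIdx β n)) y atTop := by
      rw [Metric.tendstoUniformly_iff]
      intro ε hε
      filter_upwards [hlim.eventually (gt_mem_nhds hε)] with n hn β
      rw [dist_comm]
      exact (hyd β n).trans_lt hn
    exact hu.continuous (Frequently.of_forall fun n =>
      (continuous_of_discreteTopology (f := x)).comp (continuous_branchIdx n))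
  · obtain ⟨n, hn⟩ : ∃ n, branchIdx β n ≠ branchIdx γ n := by
      by_contra! hall
      apply hne
      funext n
      have h1 := hall (n + 1)
      rw [branchIdx, branchIdx, hall n] at h1
      have h2 : 0 < 2 ^ n := by positivity
      by_cases hb : β n <;> by_cases hg : γ n <;> simp_all
    obtain ⟨m, hm⟩ := hxp _ _ hn
    -- once two branches separate, all later pairs of points stay in the same closed set `F m`
    have key : ∀ k, branchIdx β (n + k) ≠ branchIdx γ (n + k) ∧
        (x (branchIdx β (n + k)), x (branchIdx γ (n + k))) ∈ F m := by
      intro k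
      induction k with
      | zero => exact ⟨hn, hm⟩
      | succ k ih =>
        rw [← add_assoc, branchIdx, branchIdx]
        have hi := branchIdx_lt β (n + k)
        have hj := branchIdx_lt γ (n + k)
        generalize branchIdx β (n + k) = i at *
        generalize branchIdx γ (n + k) = j at *
        generalize n + k = l at *
        obtain ⟨hij, hmem⟩ := ih
        have hl := (hx l i hi).2 j (by omega) hij.symm m hmem
        have hr := hsymm _ _ _ ((hx l j hj).2 i (by omega) hij m (hsymm _ _ _ hmem))
        split_ifs
        · refine ⟨by omega, ?_⟩
          rcases lt_or_gt_of_ne hij with h | h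
          · exact hsymm _ _ _ ((hx l j hj).2 (2 ^ l + i) (by omega) (by omega) m (hsymm _ _ _ hl))
          · exact (hx l i hi).2 (2 ^ l + j) (by omega) (by omega) m hr
        · exact ⟨by omega, hl⟩
        · exact ⟨by omega, hr⟩
        · exact ⟨hij, hmem⟩
    refine Set.disjoint_left.1 (hdisj m) ?_
    refine (hF m).mem_of_tendsto ((hy β).prodMk_nhds (hy γ)) ?_
    filter_upwards [eventually_ge_atTop n] with k hk
    obtain ⟨l, rfl⟩ := Nat.exists_eq_add_of_le hk
    exact (key l).2

end Mycielski

/-! ### Measurable relations with null classes -/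

section Forward

theorem perfect_range {y : (ℕ → Bool) → ℝ} (hy : Continuous y) (hinj : Function.Injective y) :
    Perfect (range y) := by
  refine ⟨(isCompact_range hy).isClosed, ?_⟩
  rintro _ ⟨β, rfl⟩
  rw [accPt_iff_nhds]
  intro U hU
  have hU' : y ⁻¹' U ∈ nhds β := hy.continuousAt hU
  rw [nhds_pi, Filter.mem_pi] at hU'
  obtain ⟨I, hI, t, ht, hsub⟩ := hU'
  obtain ⟨n, hn⟩ := hI.exists_notMem
  refine ⟨y (Function.update β n (!β n)), ⟨?_, mem_range_self _⟩, fun h => ?_⟩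
  · refine hsub fun i hi => ?_
    rw [Function.update_of_ne (fun h => hn (by rw [← h]; exact hi))]
    exact mem_of_mem_nhds (ht i)
  · have h1 := congrFun (hinj h) n
    simp at h1

/-- A measurable relation with null classes is null by Fubini, so a Cantor set avoiding it exists
by Mycielski's theorem. -/
theorem perfect_of_nullMeasurable {B : Set ℝ} (hB : MeasurableSet B) (hpos : 0 < volume B)
    {E : Set (ℝ × ℝ)} (hE : IsEquivOn B E) (hm : NullMeasurableSet E (volume : Measure (ℝ × ℝ)))
    (hnull : ∀ x ∈ B, volume {y | (x, y) ∈ E} = 0) :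
    ∃ P : Set ℝ, P ⊆ B ∧ Perfect P ∧ P.Nonempty ∧ ∀ x ∈ P, ∀ y ∈ P, x ≠ y → (x, y) ∉ E := by
  have hE0 : (volume : Measure (ℝ × ℝ)) E = 0 := by
    obtain ⟨E', hE'E, hE'm, hE'⟩ := hm.exists_measurable_subset_ae_eq
    rw [← measure_congr hE', Measure.volume_eq_prod, Measure.measure_prod_null hE'm]
    filter_upwards with x
    refine measure_mono_null (t := {y | (x, y) ∈ E}) (fun y hy => hE'E hy) ?_
    by_cases hx : x ∈ B
    · exact hnull x hx
    · have : {y | (x, y) ∈ E} = ∅ := by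
        ext y
        simp only [mem_ofPred_eq, mem_empty_iff_false, iff_false]
        exact fun h => hx (hE.1 h).1
      rw [this, measure_empty]
  obtain ⟨y, hy, hyB, hyE⟩ := mycielski hB hpos hE0
  have hinj : Function.Injective y := by
    intro β γ h
    by_contra hne
    refine hyE β γ hne ?_
    rw [← h]
    exact hE.2.1 _ (hyB β)
  refine ⟨range y, ?_, perfect_range hy hinj, range_nonempty y, ?_⟩
  · rintro _ ⟨β, rfl⟩; exact hyB β
  · rintro _ ⟨β, rfl⟩ _ ⟨γ, rfl⟩ h
    exact hyE β γ fun h' => h (by rw [h'])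

end Forward

/-! ### 𝚺¹₂-norms -/

section SigmaNorm
variable {X Y : Type*} [TopologicalSpace X] [PolishSpace X] [MeasurableSpace X] [BorelSpace X]
  [TopologicalSpace Y] [PolishSpace Y] [MeasurableSpace Y] [BorelSpace Y]

/-- A 𝚺¹₂-norm `ψ` on the whole space `X`, presented as the fibrewise minimum of a 𝚷¹₁-norm `φ` on
a coanalytic set `C ⊆ X × ℕ^ℕ` that projects onto `X`. The analytic sets `Lle` and `Llt` compute
`ψ x ≤ φ p` and `ψ x < φ p` for `p ∈ C`; nothing is asked of them when `p ∉ C`. Initial segments of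
`ψ` are countable as sets of ordinals. -/
structure SigmaNorm (X : Type*) [TopologicalSpace X] where
  C : Set (X × (ℕ → ℕ))
  ψ : X → Ordinal.{0}
  φ : X × (ℕ → ℕ) → Ordinal.{0}
  Lle : Set (X × (X × (ℕ → ℕ)))
  Llt : Set (X × (X × (ℕ → ℕ)))
  coa : AnalyticSet Cᶜ
  ana_le : AnalyticSet Lle
  ana_lt : AnalyticSet Llt
  ctbl : ∀ x, (Iic (ψ x)).Countable
  le : ∀ x w, (x, w) ∈ C → ψ x ≤ φ (x, w)
  att : ∀ x, ∃ w, (x, w) ∈ C ∧ φ (x, w) = ψ x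
  le_iff : ∀ p ∈ C, ∀ x, (x, p) ∈ Lle ↔ ψ x ≤ φ p
  lt_iff : ∀ p ∈ C, ∀ x, (x, p) ∈ Llt ↔ ψ x < φ p

theorem exists_sigmaNorm {C : Set (X × (ℕ → ℕ))} (hC : AnalyticSet Cᶜ)
    (hproj : ∀ x, ∃ w, (x, w) ∈ C) :
    ∃ D : SigmaNorm X, D.C = C ∧ ∀ (S : Set (X × (ℕ → ℕ))), AnalyticSet S → ∀ x₀,
      AnalyticSet {x | ∃ w, ((x, w) ∈ C ∧ (x, w) ∈ S) ∧ D.φ (x, w) ≤ D.ψ x₀} := by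
  obtain ⟨φ, Lle, Llt, hle, hlt, hct, hle', hlt'⟩ := coanalytic_norm hC
  have hne : ∀ x, {o | ∃ w, (x, w) ∈ C ∧ φ (x, w) = o}.Nonempty := fun x =>
    let ⟨w, hw⟩ := hproj x
    ⟨_, w, hw, rfl⟩
  let ψ : X → Ordinal.{0} := fun x => sInf {o | ∃ w, (x, w) ∈ C ∧ φ (x, w) = o}
  have hatt : ∀ x, ∃ w, (x, w) ∈ C ∧ φ (x, w) = ψ x := fun x => csInf_mem (hne x)
  have hψ : ∀ x w, (x, w) ∈ C → ψ x ≤ φ (x, w) := fun x w h => csInf_le' ⟨w, h, rfl⟩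
  have hmeas : Measurable fun q : (X × (X × (ℕ → ℕ))) × (ℕ → ℕ) => ((q.1.1, q.2), q.1.2) := by
    fun_prop
  refine ⟨{ C := C, ψ := ψ, φ := φ
            Lle := {q | ∃ w, (q, w) ∈ (fun q : (X × (X × (ℕ → ℕ))) × (ℕ → ℕ) =>
              ((q.1.1, q.2), q.1.2)) ⁻¹' Lle}
            Llt := {q | ∃ w, (q, w) ∈ (fun q : (X × (X × (ℕ → ℕ))) × (ℕ → ℕ) =>
              ((q.1.1, q.2), q.1.2)) ⁻¹' Llt}
            coa := hC
            ana_le := ana_proj (ana_preimage hmeas hle)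
            ana_lt := ana_proj (ana_preimage hmeas hlt)
            ctbl := ?_, le := hψ, att := hatt, le_iff := ?_, lt_iff := ?_ }, rfl, ?_⟩
  · intro x
    obtain ⟨w, hw, h⟩ := hatt x
    rw [← h]
    exact hct _ hw
  · intro p hp x
    constructor
    · rintro ⟨w, hw⟩
      have := (hle' p hp (x, w)).1 hw
      exact (hψ x w this.1).trans this.2
    · intro h
      obtain ⟨w, hw, hw'⟩ := hatt x
      exact ⟨w, (hle' p hp (x, w)).2 ⟨hw, hw'.le.trans h⟩⟩
  · intro p hp x
    constructor
    · rintro ⟨w, hw⟩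
      have := (hlt' p hp (x, w)).1 hw
      exact (hψ x w this.1).trans_lt this.2
    · intro h
      obtain ⟨w, hw, hw'⟩ := hatt x
      exact ⟨w, (hlt' p hp (x, w)).2 ⟨hw, hw'.le.trans_lt h⟩⟩
  · intro S hS x₀
    obtain ⟨w₀, hw₀, hw₀'⟩ := hatt x₀
    have h1 : AnalyticSet ((fun p : X × (ℕ → ℕ) => (p, (x₀, w₀))) ⁻¹' Lle) :=
      ana_preimage (by fun_prop) hle
    convert ana_proj (ana_inter h1 hS) using 1
    ext x
    refine exists_congr fun w => ?_
    simp only [mem_inter_iff, mem_preimage, hle' _ hw₀, hw₀']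
    tauto

/-- Pulling a norm back along a Borel map. -/
def SigmaNorm.comap (D : SigmaNorm X) (e : Y → X) (he : Measurable e) : SigmaNorm Y where
  C := (Prod.map e id) ⁻¹' D.C
  ψ := D.ψ ∘ e
  φ := D.φ ∘ Prod.map e id
  Lle := (Prod.map e (Prod.map e id)) ⁻¹' D.Lle
  Llt := (Prod.map e (Prod.map e id)) ⁻¹' D.Llt
  coa := coa_preimage (he.prodMap measurable_id) D.coa
  ana_le := ana_preimage (he.prodMap (he.prodMap measurable_id)) D.ana_le
  ana_lt := ana_preimage (he.prodMap (he.prodMap measurable_id)) D.ana_lt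
  ctbl := fun _ => D.ctbl _
  le := fun _ _ h => D.le _ _ h
  att := fun _ => D.att _
  le_iff := fun _ hp _ => D.le_iff _ hp _
  lt_iff := fun _ hp _ => D.lt_iff _ hp _

theorem SigmaNorm.sigma12_le (D : SigmaNorm X) : Sigma12 {p : X × X | D.ψ p.1 ≤ D.ψ p.2} := by
  have h1 : AnalyticSet ((fun q : (X × X) × (ℕ → ℕ) => (q.1.1, q.2)) ⁻¹' D.C)ᶜ :=
    coa_preimage (by fun_prop) D.coa
  have h2 : AnalyticSet ((fun q : (X × X) × (ℕ → ℕ) => (q.1.2, (q.1.1, q.2))) ⁻¹' D.Lltᶜ)ᶜ :=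
    coa_preimage (by fun_prop) (by rw [compl_compl]; exact D.ana_lt)
  convert sigma12_of_proj (coa_inter h1 h2) using 1
  ext ⟨x, y⟩
  simp only [mem_ofPred_eq, mem_inter_iff, mem_preimage, mem_compl_iff]
  constructor
  · intro h
    obtain ⟨w, hw, hw'⟩ := D.att x
    exact ⟨w, hw, by rw [D.lt_iff _ hw, hw']; exact h.not_gt⟩
  · rintro ⟨w, hw, h⟩
    rw [D.lt_iff _ hw, not_lt] at h
    exact (D.le x w hw).trans h

theorem SigmaNorm.sigma12_lt (D : SigmaNorm X) : Sigma12 {p : X × X | D.ψ p.1 < D.ψ p.2} := by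
  have h1 : AnalyticSet ((fun q : (X × X) × (ℕ → ℕ) => (q.1.1, q.2)) ⁻¹' D.C)ᶜ :=
    coa_preimage (by fun_prop) D.coa
  have h2 : AnalyticSet ((fun q : (X × X) × (ℕ → ℕ) => (q.1.2, (q.1.1, q.2))) ⁻¹' D.Lleᶜ)ᶜ :=
    coa_preimage (by fun_prop) (by rw [compl_compl]; exact D.ana_le)
  convert sigma12_of_proj (coa_inter h1 h2) using 1
  ext ⟨x, y⟩
  simp only [mem_ofPred_eq, mem_inter_iff, mem_preimage, mem_compl_iff]
  constructor
  · intro h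
    obtain ⟨w, hw, hw'⟩ := D.att x
    exact ⟨w, hw, by rw [D.le_iff _ hw, hw']; exact h.not_ge⟩
  · rintro ⟨w, hw, h⟩
    rw [D.le_iff _ hw, not_le] at h
    exact (D.le x w hw).trans_lt h

/-- The relation of having equal norm is 𝚫¹₂. -/
theorem SigmaNorm.delta12_eq (D : SigmaNorm X) :
    Sigma12 {p : X × X | D.ψ p.1 = D.ψ p.2} ∧ Sigma12 {p : X × X | D.ψ p.1 ≠ D.ψ p.2} := by
  have hs : Measurable (Prod.swap : X × X → X × X) := measurable_swap
  constructor
  · convert sigma12_inter D.sigma12_le (sigma12_preimage hs D.sigma12_le) using 1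
    ext p
    exact le_antisymm_iff
  · convert sigma12_union D.sigma12_lt (sigma12_preimage hs D.sigma12_lt) using 1
    ext p
    exact lt_or_lt_iff_ne.symm

end SigmaNorm

/-! ### Transversals of norm relations -/

section Transversal
variable {X : Type*} [TopologicalSpace X] [PolishSpace X] [MeasurableSpace X] [BorelSpace X]

/-- The perfect set property for 𝚫¹₂ equivalence relations with null classes. -/
def NullClassPSP : Prop :=
  ∀ B : Set ℝ, MeasurableSet B → 0 < volume B →
    ∀ E : Set (ℝ × ℝ), IsEquivOn B E → Delta12 E →
      (∀ x ∈ B, volume {y | (x, y) ∈ E} = 0) →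
      ∃ P : Set ℝ, P ⊆ B ∧ Perfect P ∧ P.Nonempty ∧ ∀ x ∈ P, ∀ y ∈ P, x ≠ y → (x, y) ∉ E

theorem NullClassPSP.exists_cantor (h : NullClassPSP) {B : Set ℝ} (hB : MeasurableSet B)
    (hpos : 0 < volume B) {E : Set (ℝ × ℝ)} (hE : IsEquivOn B E) (hE1 : Sigma12 E)
    (hE2 : Sigma12 Eᶜ) (hnull : ∀ x ∈ B, volume {y | (x, y) ∈ E} = 0) :
    ∃ g : (ℕ → Bool) → ℝ, Continuous g ∧ Function.Injective g ∧ (∀ c, g c ∈ B) ∧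
      ∀ c c', (g c, g c') ∈ E → c = c' := by
  obtain ⟨P, hPB, hP, hPne, hPE⟩ := h B hB hpos E hE ⟨hE1, hE2⟩ hnull
  obtain ⟨g, hg, hgc, hgi⟩ := hP.exists_nat_bool_injection hPne
  have hgP : ∀ c, g c ∈ P := fun c => hg (mem_range_self c)
  refine ⟨g, hgc, hgi, fun c => hPB (hgP c), fun c c' hc => ?_⟩
  by_contra hne
  exact hPE _ (hgP c) _ (hgP c') (fun h' => hne (hgi h')) hc

/-- If the level sets of a 𝚺¹₂-norm are null on a Borel set of positive measure, the perfect set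
property gives a Cantor set of points with distinct norms. -/
theorem NullClassPSP.exists_injective (h : NullClassPSP) (D : SigmaNorm X) (e : X ≃ᵐ ℝ)
    (μ : Measure X) [IsProbabilityMeasure μ] {B : Set X} (hB : MeasurableSet B) (hpos : 0 < μ B)
    (hnull : ∀ x ∈ B, μ {x' | x' ∈ B ∧ D.ψ x = D.ψ x'} = 0) :
    ∃ g : (ℕ → Bool) → X, Measurable g ∧ Function.Injective (D.ψ ∘ g) := by
  obtain ⟨f, hf, hfμ⟩ := exists_map_volume_eq e μ
  let B₁ : Set ℝ := f ⁻¹' B ∩ Ioo 0 1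
  have hB₁ : MeasurableSet B₁ := (hf hB).inter measurableSet_Ioo
  have hpre : ∀ T, μ T = 0 → volume (f ⁻¹' T ∩ Ioo 0 1) = 0 := by
    intro T hT
    rw [← Measure.restrict_apply' measurableSet_Ioo]
    exact (MeasurePreserving.mk hf hfμ).quasiMeasurePreserving.preimage_null hT
  have hpos₁ : 0 < volume B₁ := by
    rw [← hfμ, Measure.map_apply hf hB, Measure.restrict_apply' measurableSet_Ioo] at hpos
    exact hpos
  have hff : Measurable (Prod.map f f) := hf.prodMap hf
  let E : Set (ℝ × ℝ) := B₁ ×ˢ B₁ ∩ {p | D.ψ (f p.1) = D.ψ (f p.2)}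
  have hE1 : Sigma12 E :=
    sigma12_inter (sigma12_meas (hB₁.prod hB₁)) (sigma12_preimage hff D.delta12_eq.1)
  have hE2 : Sigma12 Eᶜ := by
    rw [compl_inter]
    exact sigma12_union (sigma12_meas (hB₁.prod hB₁).compl) (sigma12_preimage hff D.delta12_eq.2)
  have hE : IsEquivOn B₁ E :=
    ⟨inter_subset_left, fun x hx => ⟨⟨hx, hx⟩, rfl⟩,
      fun x y hxy => ⟨⟨hxy.1.2, hxy.1.1⟩, hxy.2.symm⟩,
      fun x y z hxy hyz => ⟨⟨hxy.1.1, hyz.1.2⟩, hxy.2.trans hyz.2⟩⟩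
  obtain ⟨g, hg, -, hgB, hgE⟩ := h.exists_cantor hB₁ hpos₁ hE hE1 hE2 fun x hx =>
    by
      refine measure_mono_null (fun y hy => ?_) (hpre _ (hnull (f x) hx.1))
      exact ⟨⟨hy.1.2.1, hy.2⟩, hy.1.2.2⟩
  exact ⟨f ∘ g, hf.comp hg.measurable, fun c c' hc => hgE c c' ⟨⟨hgB c, hgB c'⟩, hc⟩⟩

end Transversal

section Coding

theorem polishSpace_cantor : PolishSpace (ℕ → Bool) := by
  have : PolishSpace Bool := {}
  infer_instance

theorem polishSpace_prod {X Y : Type*} [TopologicalSpace X] [TopologicalSpace Y] [PolishSpace X]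
    [PolishSpace Y] : PolishSpace (X × Y) := inferInstance

/-- The closed set coded by `c`: the complement of the union of the basic open sets `b i` over
those `i` with `c i = true`. -/
def codedSet (b : ℕ → Set ℝ) (c : ℕ → Bool) : Set ℝ := {y | ∀ i, c i = true → y ∉ b i}

theorem exists_codes : ∃ b : ℕ → Set ℝ, (∀ i, IsOpen (b i)) ∧
    ∀ K : Set ℝ, IsClosed K → ∃ c, codedSet b c = K := by
  classical
  obtain ⟨s, hs, -, hb⟩ := TopologicalSpace.exists_countable_basis ℝ
  have hne : s.Nonempty := by
    obtain ⟨v, hv, -⟩ := hb.exists_subset_of_mem_open (mem_univ (0 : ℝ)) isOpen_univ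
    exact ⟨v, hv⟩
  obtain ⟨b, rfl⟩ := hs.exists_eq_range hne
  refine ⟨b, fun i => hb.isOpen (mem_range_self i), fun K hK => ⟨fun i => decide (b i ⊆ Kᶜ), ?_⟩⟩
  ext y
  simp only [codedSet, mem_ofPred_eq, decide_eq_true_eq]
  constructor
  · intro h
    by_contra hy
    obtain ⟨_, ⟨i, rfl⟩, hyi, hi⟩ := hb.exists_subset_of_mem_open hy hK.isOpen_compl
    exact h i hi hyi
  · exact fun hy i hi hyi => hi hyi hy

/-- The pairs `(c, y)` such that `c` codes a null closed set and `y` is in it. -/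
def nullCoded (b : ℕ → Set ℝ) : Set ((ℕ → Bool) × ℝ) :=
  {p | p.2 ∈ codedSet b p.1 ∧ volume (codedSet b p.1) = 0}

/-- Borel, since the measure of a section of a Borel set is a Borel function. -/
theorem measurableSet_nullCoded {b : ℕ → Set ℝ} (hb : ∀ i, IsOpen (b i)) :
    MeasurableSet (nullCoded b) := by
  have h1 : MeasurableSet {p : (ℕ → Bool) × ℝ | p.2 ∈ codedSet b p.1} := by
    have : {p : (ℕ → Bool) × ℝ | p.2 ∈ codedSet b p.1} =
        ⋂ i, (((fun p : (ℕ → Bool) × ℝ => p.1 i) ⁻¹' {true}) ∩ Prod.snd ⁻¹' b i)ᶜ := by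
      ext p
      simp [codedSet]
    rw [this]
    refine MeasurableSet.iInter fun i => (MeasurableSet.inter ?_ ?_).compl
    · exact ((measurable_pi_apply i).comp measurable_fst) (measurableSet_singleton _)
    · exact measurable_snd (hb i).measurableSet
  have h2 := (measurable_measure_prodMk_left (ν := (volume : Measure ℝ)) h1)
    (measurableSet_singleton 0)
  exact h1.inter (measurable_fst h2)

end Coding

section NoInjectiveNorm

/-- The sequence that combines two sequences along a bijection `ℕ ⊕ ℕ ≃ ℕ`. -/
noncomputable def interleave (a b : ℕ → Bool) : ℕ → Bool :=
  fun n => Sum.elim a b (Equiv.natSumNatEquivNat.symm n)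

theorem interleave_injective {a b a' b' : ℕ → Bool} (h : interleave a b = interleave a' b') :
    a = a' ∧ b = b' := by
  constructor
  · funext n
    simpa [interleave] using congrFun h (Equiv.natSumNatEquivNat (Sum.inl n))
  · funext n
    simpa [interleave] using congrFun h (Equiv.natSumNatEquivNat (Sum.inr n))

theorem continuous_interleave (a : ℕ → Bool) : Continuous (interleave a) := by
  refine continuous_pi fun n => ?_
  unfold interleave
  rcases Equiv.natSumNatEquivNat.symm n with i | i
  · exact continuous_const
  · exact continuous_apply i

theorem not_countable_cantor : ¬ (univ : Set (ℕ → Bool)).Countable := by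
  intro h
  have h1 : Countable (ℕ → Bool) := countable_univ_iff.1 h
  obtain ⟨f, hf⟩ := exists_surjective_nat (ℕ → Bool)
  obtain ⟨n, hn⟩ := hf fun n => !(f n n)
  have := congrFun hn n
  simp at this

/-- A Cantor set of reals contains a null Cantor set, since it splits into uncountably many
disjoint ones. -/
theorem exists_null_cantor {g : (ℕ → Bool) → ℝ} (hg : Continuous g) (hi : Function.Injective g) :
    ∃ j : (ℕ → Bool) → (ℕ → Bool), Continuous j ∧ Function.Injective j ∧
      volume (range (g ∘ j)) = 0 := by
  let K : (ℕ → Bool) → Set ℝ := fun a => range (g ∘ interleave a)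
  have hK : ∀ a, MeasurableSet (K a) := fun a =>
    (isCompact_range (hg.comp (continuous_interleave a))).isClosed.measurableSet
  have hd : Pairwise (Function.onFun Disjoint K) := by
    intro a a' haa
    refine disjoint_left.2 ?_
    rintro _ ⟨b, rfl⟩ ⟨b', hb'⟩
    exact haa (interleave_injective (hi hb')).1.symm
  have hc := Measure.countable_meas_pos_of_disjoint_iUnion (μ := (volume : Measure ℝ)) hK hd
  obtain ⟨a, ha⟩ : ∃ a, volume (K a) = 0 := by
    by_contra! hne
    refine not_countable_cantor (hc.mono fun a _ => pos_iff_ne_zero.2 (hne a))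
  exact ⟨interleave a, continuous_interleave a, fun b b' h => (interleave_injective h).2, ha⟩

/-- Under the perfect set property no 𝚺¹₂-norm on Cantor space is injective. Were there one, it
would well-order the codes of null closed sets with countable initial segments; sending a real to
the least code of a null closed set containing it gives a 𝚫¹₂ equivalence relation with null
classes, and each null closed set meets only countably many classes. A perfect transversal contains
a perfect null set, which is a contradiction. -/
theorem NullClassPSP.not_injective (h : NullClassPSP) (D : SigmaNorm (ℕ → Bool)) :
    ¬ Function.Injective D.ψ := by
  intro hinj
  have := polishSpace_cantor
  obtain ⟨b, hbo, hb⟩ := exists_codes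
  let N := nullCoded b
  have hN : MeasurableSet N := measurableSet_nullCoded hbo
  -- `M` is the set of `(c, y)` such that `c` is the least code of a null closed set containing `y`;
  -- it is the projection of the coanalytic set `G`
  let M : Set ((ℕ → Bool) × ℝ) := {p | p ∈ N ∧ ∀ c, D.ψ c < D.ψ p.1 → (c, p.2) ∉ N}
  let G : Set (((ℕ → Bool) × ℝ) × (ℕ → ℕ)) :=
    {q | ((q.1.1, q.2) ∈ D.C ∧ q.1 ∈ N) ∧ ∀ c, (c, (q.1.1, q.2)) ∈ D.Llt → (c, q.1.2) ∉ N}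
  have hMG : ∀ p, p ∈ M ↔ ∃ w, (p, w) ∈ G := by
    rintro ⟨c, y⟩
    constructor
    · rintro ⟨h1, h2⟩
      obtain ⟨w, hw, hw'⟩ := D.att c
      refine ⟨w, ⟨hw, h1⟩, fun c' hc' => h2 c' ?_⟩
      rw [← hw']
      exact (D.lt_iff _ hw c').1 hc'
    · rintro ⟨w, ⟨hw, h1⟩, h2⟩
      exact ⟨h1, fun c' hc' => h2 c' ((D.lt_iff _ hw c').2 (hc'.trans_le (D.le c w hw)))⟩
  have hG : AnalyticSet Gᶜ := by
    refine coa_inter (coa_inter ?_ ?_) ?_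
    · exact coa_preimage (f := fun q : ((ℕ → Bool) × ℝ) × (ℕ → ℕ) => (q.1.1, q.2))
        (by fun_prop) D.coa
    · exact coa_meas (measurable_fst hN)
    · have h1 : AnalyticSet ((fun q : (((ℕ → Bool) × ℝ) × (ℕ → ℕ)) × (ℕ → Bool) =>
          (q.2, (q.1.1.1, q.1.2))) ⁻¹' D.Lltᶜ)ᶜ :=
        coa_preimage (by fun_prop) (by rw [compl_compl]; exact D.ana_lt)
      have h2 : AnalyticSet ((fun q : (((ℕ → Bool) × ℝ) × (ℕ → ℕ)) × (ℕ → Bool) =>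
          (q.2, q.1.1.2)) ⁻¹' Nᶜ)ᶜ :=
        coa_preimage (by fun_prop) (coa_meas hN.compl)
      convert coa_forall (coa_union h1 h2) using 2
      ext q
      refine not_congr (forall_congr' fun c => ?_)
      simp only [mem_union, mem_preimage, mem_compl_iff]
      tauto
  have hex : ∀ y, ∃ c, (c, y) ∈ M := by
    intro y
    have hne : {c | (c, y) ∈ N}.Nonempty := by
      obtain ⟨c, hc⟩ := hb {y} isClosed_singleton
      exact ⟨c, by simp [hc], by simp [hc]⟩
    obtain ⟨c, hc, hmin⟩ := WellFounded.has_min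
      (InvImage.wf D.ψ (wellFounded_lt (α := Ordinal.{0}))) _ hne
    exact ⟨c, hc, fun c' hc' hN' => hmin c' hN' hc'⟩
  have huniq : ∀ y c c', (c, y) ∈ M → (c', y) ∈ M → c = c' := by
    intro y c d hc hd
    by_contra hne
    rcases lt_or_gt_of_ne (hinj.ne hne) with hlt | hlt
    · exact hd.2 c hlt hc.1
    · exact hc.2 d hlt hd.1
  -- with `R` the diagonal or its complement, this gives `E` below or its complement
  have hsig : ∀ R : Set ((ℕ → Bool) × (ℕ → Bool)), MeasurableSet R →
      Sigma12 {p : ℝ × ℝ | ∃ c c', (c, c') ∈ R ∧ (c, p.1) ∈ M ∧ (c', p.2) ∈ M} := by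
    intro R hR
    have hP : PolishSpace ((ℕ → Bool) × (ℕ → ℕ)) := inferInstance
    have hP' : PolishSpace (((ℕ → Bool) × (ℕ → ℕ)) × ((ℕ → Bool) × (ℕ → ℕ))) :=
      polishSpace_prod
    have hP'' : PolishSpace ((ℝ × ℝ) × (((ℕ → Bool) × (ℕ → ℕ)) × ((ℕ → Bool) × (ℕ → ℕ)))) :=
      polishSpace_prod
    have hS : BorelSpace ((ℕ → Bool) × (ℕ → ℕ)) := inferInstance
    have hS' : BorelSpace (((ℕ → Bool) × (ℕ → ℕ)) × ((ℕ → Bool) × (ℕ → ℕ))) := inferInstance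
    have h0 : AnalyticSet ((fun q : (ℝ × ℝ) × (((ℕ → Bool) × (ℕ → ℕ)) × ((ℕ → Bool) × (ℕ → ℕ))) =>
        (q.2.1.1, q.2.2.1)) ⁻¹' R)ᶜ := coa_preimage (by fun_prop) (coa_meas hR)
    have h1 : AnalyticSet ((fun q : (ℝ × ℝ) × (((ℕ → Bool) × (ℕ → ℕ)) × ((ℕ → Bool) × (ℕ → ℕ))) =>
        ((q.2.1.1, q.1.1), q.2.1.2)) ⁻¹' G)ᶜ := coa_preimage (by fun_prop) hG
    have h2 : AnalyticSet ((fun q : (ℝ × ℝ) × (((ℕ → Bool) × (ℕ → ℕ)) × ((ℕ → Bool) × (ℕ → ℕ))) =>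
        ((q.2.2.1, q.1.2), q.2.2.2)) ⁻¹' G)ᶜ := coa_preimage (by fun_prop) hG
    convert sigma12_of_proj (coa_inter h0 (coa_inter h1 h2)) using 1
    ext p
    simp only [mem_ofPred_eq, hMG, mem_inter_iff, mem_preimage]
    constructor
    · rintro ⟨c, c', hR', ⟨w, hw⟩, ⟨w', hw'⟩⟩
      exact ⟨((c, w), (c', w')), hR', hw, hw'⟩
    · rintro ⟨⟨⟨c, w⟩, ⟨c', w'⟩⟩, hR', hw, hw'⟩
      exact ⟨c, c', hR', ⟨w, hw⟩, ⟨w', hw'⟩⟩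
  let E : Set (ℝ × ℝ) := {p | ∃ c c', (c, c') ∈ {q : (ℕ → Bool) × (ℕ → Bool) | q.1 = q.2} ∧
    (c, p.1) ∈ M ∧ (c', p.2) ∈ M}
  have hdiag : MeasurableSet {q : (ℕ → Bool) × (ℕ → Bool) | q.1 = q.2} :=
    measurableSet_eq_fun measurable_fst measurable_snd
  have hEc : Eᶜ = {p | ∃ c c', (c, c') ∈ {q : (ℕ → Bool) × (ℕ → Bool) | q.1 = q.2}ᶜ ∧
      (c, p.1) ∈ M ∧ (c', p.2) ∈ M} := by
    ext ⟨y, y'⟩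
    constructor
    · intro hE
      obtain ⟨c, hc⟩ := hex y
      obtain ⟨c', hc'⟩ := hex y'
      exact ⟨c, c', fun hcc => hE ⟨c, c', hcc, hc, hc'⟩, hc, hc'⟩
    · rintro ⟨c, c', hcc, hc, hc'⟩ ⟨d, d', hdd, hd, hd'⟩
      refine hcc ?_
      change c = c'
      change d = d' at hdd
      rw [huniq y c d hc hd, huniq y' c' d' hc' hd', hdd]
  have hE : IsEquivOn univ E := by
    refine ⟨fun _ _ => ⟨mem_univ _, mem_univ _⟩, fun y _ => ?_, ?_, ?_⟩
    · obtain ⟨c, hc⟩ := hex y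
      exact ⟨c, c, rfl, hc, hc⟩
    · rintro x y ⟨c, c', hcc, hc, hc'⟩
      exact ⟨c', c, Eq.symm hcc, hc', hc⟩
    · rintro x y z ⟨c, c', hcc, hc, hc'⟩ ⟨d, d', hdd, hd, hd'⟩
      change c = c' at hcc
      change d = d' at hdd
      exact ⟨c, d', by rw [← hdd, hcc]; exact huniq y _ _ hc' hd, hc, hd'⟩
  obtain ⟨g, hg, hgi, -, hgE⟩ := h.exists_cantor MeasurableSet.univ (by simp) hE (hsig _ hdiag)
    (by rw [hEc]; exact hsig _ hdiag.compl) (by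
      intro x _
      obtain ⟨c, hc⟩ := hex x
      refine measure_mono_null (t := codedSet b c) ?_ hc.1.2
      rintro y ⟨d, d', hdd, hd, hd'⟩
      change d = d' at hdd
      rw [huniq x c d hc hd, hdd]
      exact hd'.1.1)
  obtain ⟨j, hj, hji, hj0⟩ := exists_null_cantor hg hgi
  obtain ⟨c, hc⟩ := hb _ (isCompact_range (hg.comp hj)).isClosed
  -- the least code of any point of the null set is at most the code `c` of the set itself
  choose m hm using hex
  have hle : ∀ a, D.ψ (m (g (j a))) ≤ D.ψ c := by
    intro a
    by_contra hlt
    refine (hm (g (j a))).2 c (not_le.1 hlt) ⟨?_, ?_⟩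
    · change _ ∈ codedSet b c
      rw [hc]
      exact mem_range_self a
    · change volume (codedSet b c) = 0
      rw [hc]
      exact hj0
  refine not_countable_cantor ?_
  refine MapsTo.countable_of_injOn (f := fun a => D.ψ (m (g (j a)))) (t := Iic (D.ψ c))
    (fun a _ => hle a) ?_ (D.ctbl c)
  intro a _ a' _ haa
  refine hji (hgE _ _ ⟨_, _, ?_, hm _, hm _⟩)
  exact hinj haa

end NoInjectiveNorm

/-! ### Measurability of 𝚫¹₂ sets -/

section Backward
/-- For a family of null-measurable initial segments of an ordinal-valued function, with countable
initial segments of ordinals, either countably many cover the space or one of them is maximal up to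
null sets. -/
theorem exists_max_segment {X : Type*} [MeasurableSpace X] (μ : Measure X) [IsProbabilityMeasure μ] (ψ : X → Ordinal.{0})
    (hm : ∀ x, NullMeasurableSet {x' | ψ x' ≤ ψ x} μ) :
    (∃ s : ℕ → X, ∀ x, ∃ n, ψ x ≤ ψ (s n)) ∨
      ∃ x₀, ∀ x, μ ({x' | ψ x' ≤ ψ x} \ {x' | ψ x' ≤ ψ x₀}) = 0 := by
  have hne : Nonempty X := nonempty_of_isProbabilityMeasure μ
  let a : X → ENNReal := fun x => μ {x' | ψ x' ≤ ψ x}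
  obtain ⟨u, -, hu, hur⟩ := exists_seq_tendsto_sSup (range_nonempty a) (OrderTop.bddAbove _)
  choose s hs using hur
  by_cases hcof : ∀ x, ∃ n, ψ x ≤ ψ (s n)
  · exact Or.inl ⟨s, hcof⟩
  · right
    push Not at hcof
    obtain ⟨x₀, hx₀⟩ := hcof
    have hmono : ∀ x y, ψ x ≤ ψ y → a x ≤ a y := fun x y h =>
      measure_mono fun z hz => le_trans hz h
    have hsup : sSup (range a) ≤ a x₀ :=
      le_of_tendsto' hu fun n => by rw [← hs n]; exact hmono _ _ (hx₀ n).le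
    refine ⟨x₀, fun x => ?_⟩
    rcases le_total (ψ x) (ψ x₀) with h | h
    · have : {x' | ψ x' ≤ ψ x} \ {x' | ψ x' ≤ ψ x₀} = ∅ :=
        sdiff_eq_empty.2 fun z hz => le_trans hz h
      rw [this, measure_empty]
    · have hsub : {x' | ψ x' ≤ ψ x₀} ⊆ {x' | ψ x' ≤ ψ x} := fun z hz => le_trans hz h
      rw [measure_sdiff hsub (hm x₀) (measure_ne_top _ _)]
      exact tsub_eq_zero_of_le ((le_sSup (mem_range_self x)).trans hsup)

variable {X : Type*} [TopologicalSpace X] [PolishSpace X] [MeasurableSpace X] [BorelSpace X]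

/-- The perfect set property makes every 𝚫¹₂ set measurable. For a 𝚺¹₂-norm adapted to `A`, the
trace of `A` on an initial segment is analytic, hence measurable; by the two transversal results the
complement of a maximal initial segment is null. -/
theorem NullClassPSP.nullMeasurableSet (h : NullClassPSP) (e : X ≃ᵐ ℝ)
    (μ : Measure X) [IsProbabilityMeasure μ] {A : Set X} (hA : Delta12 A) :
    NullMeasurableSet A μ := by
  obtain ⟨⟨C₁, hC₁, hA₁⟩, ⟨C₂, hC₂, hA₂⟩⟩ := hA
  have hmem₁ : ∀ x, x ∈ A ↔ ∃ w, (x, w) ∈ C₁ := fun x => by rw [hA₁]; simp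
  have hmem₂ : ∀ x, x ∉ A ↔ ∃ w, (x, w) ∈ C₂ := fun x => by
    rw [← mem_compl_iff, hA₂]; simp
  obtain ⟨D, hDC, hD⟩ := exists_sigmaNorm (coa_union hC₁ hC₂) fun x => by
    by_cases hx : x ∈ A
    · obtain ⟨w, hw⟩ := (hmem₁ x).1 hx
      exact ⟨w, Or.inl hw⟩
    · obtain ⟨w, hw⟩ := (hmem₂ x).1 hx
      exact ⟨w, Or.inr hw⟩
  have hseg : ∀ x₀, NullMeasurableSet {x | D.ψ x ≤ D.ψ x₀} μ := by
    intro x₀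
    refine ana_nullMeasurable μ ?_
    convert hD univ MeasurableSet.univ.analyticSet x₀ using 1
    ext x
    constructor
    · intro hx
      obtain ⟨w, hw, hw'⟩ := D.att x
      exact ⟨w, ⟨hDC ▸ hw, mem_univ _⟩, hw'.le.trans hx⟩
    · rintro ⟨w, ⟨hw, -⟩, hw'⟩
      exact (D.le x w (hDC ▸ hw)).trans hw'
  have hAseg : ∀ x₀, NullMeasurableSet (A ∩ {x | D.ψ x ≤ D.ψ x₀}) μ := by
    intro x₀
    refine ana_nullMeasurable μ ?_
    convert hD C₂ᶜ hC₂ x₀ using 1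
    ext x
    constructor
    · rintro ⟨hxA, hx⟩
      obtain ⟨w, hw, hw'⟩ := D.att x
      exact ⟨w, ⟨hDC ▸ hw, fun hw2 => (hmem₂ x).2 ⟨w, hw2⟩ hxA⟩, hw'.le.trans hx⟩
    · rintro ⟨w, ⟨hw, hw2⟩, hw'⟩
      exact ⟨(hmem₁ x).2 ⟨w, hw.resolve_right hw2⟩, (D.le x w (hDC ▸ hw)).trans hw'⟩
  rcases exists_max_segment μ D.ψ hseg with ⟨s, hs⟩ | ⟨x₀, hx₀⟩
  · have : A = ⋃ n, A ∩ {x | D.ψ x ≤ D.ψ (s n)} := by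
      rw [← inter_iUnion, eq_comm, inter_eq_left]
      exact fun x _ => mem_iUnion.2 (hs x)
    rw [this]
    exact NullMeasurableSet.iUnion fun n => hAseg _
  · by_cases hpos : μ {x | D.ψ x ≤ D.ψ x₀}ᶜ = 0
    · rw [← inter_union_compl A {x | D.ψ x ≤ D.ψ x₀}]
      exact (hAseg x₀).union
        (NullMeasurableSet.of_null (measure_mono_null inter_subset_right hpos))
    · exfalso
      -- off the maximal segment every level set is null
      obtain ⟨B, hBs, hB, hBe⟩ := (hseg x₀).compl.exists_measurable_subset_ae_eq
      obtain ⟨g, hg, hgi⟩ := h.exists_injective D e μ hB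
        (pos_iff_ne_zero.2 (by rwa [measure_congr hBe])) (by
          intro x hx
          refine measure_mono_null ?_ (hx₀ x)
          rintro x' ⟨hx', hxx⟩
          exact ⟨hxx.symm.le, hBs hx'⟩)
      have hP := polishSpace_cantor
      exact h.not_injective (D.comap g hg) hgi

/-- The same for Lebesgue measure on the plane, which is equivalent to a probability measure. -/
theorem NullClassPSP.nullMeasurableSet_volume (h : NullClassPSP) {A : Set (ℝ × ℝ)}
    (hA : Delta12 A) : NullMeasurableSet A (volume : Measure (ℝ × ℝ)) := by
  have hX : ¬ Countable (ℝ × ℝ) := fun hc =>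
    Cardinal.not_countable_real (countable_univ_iff.2
      (Function.Injective.countable (f := fun x : ℝ => (x, (0 : ℝ)))
        fun x y hxy => by simpa using hxy))
  have hR : ¬ Countable ℝ := fun hc => Cardinal.not_countable_real (countable_univ_iff.2 hc)
  exact (h.nullMeasurableSet (PolishSpace.measurableEquivOfNotCountable hX hR)
    (volume : Measure (ℝ × ℝ)).toFinite hA).mono_ac (absolutelyContinuous_toFinite _)

end Backward

end Delta12Psp

theorem psp_null_delta12_iff_delta12_measurable :
    (∀ B : Set ℝ, MeasurableSet B → 0 < volume B →
      ∀ E : Set (ℝ × ℝ), IsEquivOn B E → Delta12 E →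
        (∀ x ∈ B, volume {y | (x, y) ∈ E} = 0) →
        ∃ P : Set ℝ, P ⊆ B ∧ Perfect P ∧ P.Nonempty ∧
          ∀ x ∈ P, ∀ y ∈ P, x ≠ y → (x, y) ∉ E) ↔
    (∀ A : Set (ℝ × ℝ), Delta12 A → NullMeasurableSet A (volume : Measure (ℝ × ℝ))) :=
  ⟨fun h _ hA => Delta12Psp.NullClassPSP.nullMeasurableSet_volume h hA,
    fun h _ hB hpos E hE hE2 hnull => Delta12Psp.perfect_of_nullMeasurable hB hpos hE (h E hE2) hnull⟩
end
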